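/- arXiv:1208.1037 — 2 statements merged into one kernel-verified Lean document; each statement's English description precedes it below -/
import Mathlib

section
/- Let L and K be Hopf subalgebras of H and let C and D be two simple subcoalgebras of H. Then the following are equivalent: (1) C ⊆ LDK; (2) LCK = LDK; (3) Λ_L C Λ_K = Λ_L D Λ_K (equality of subspaces of H). -/
open TensorProduct

namespace MackeyPaper

noncomputable section

universe v

variable (k : Type) [Field k] [CharZero k] [IsAlgClosed k]
variable (H : Type) [Ring H] [HopfAlgebra k H]

/-- A subcoalgebra of `H`: a `k`-subspace `C` with `Δ(C) ⊆ C ⊗ C`. -/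
def IsSubcoalgebra (C : Submodule k H) : Prop :=
  ∀ c ∈ C, Coalgebra.comul (R := k) c ∈
    LinearMap.range (TensorProduct.map C.subtype C.subtype)

/-- A simple (nonzero, minimal) subcoalgebra of `H`. -/
def IsSimpleSubcoalgebra (C : Submodule k H) : Prop :=
  IsSubcoalgebra k H C ∧ C ≠ ⊥ ∧
    ∀ D : Submodule k H, D ≤ C → IsSubcoalgebra k H D → D ≠ ⊥ → D = C

/-- A Hopf subalgebra of `H`: a subalgebra which is a subcoalgebra and is
stable under the antipode. -/
def IsHopfSubalgebra (K : Subalgebra k H) : Prop :=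
  IsSubcoalgebra k H K.toSubmodule ∧ ∀ x ∈ K, HopfAlgebra.antipode (R := k) x ∈ K

/-- `Λ` is the (two-sided) idempotent integral of the Hopf subalgebra `K`,
i.e. the integral normalized by `ε(Λ) = 1`. -/
def IsIdempotentIntegral (K : Subalgebra k H) (Λ : H) : Prop :=
  Λ ∈ K ∧ Coalgebra.counit (R := k) Λ = 1 ∧
    ∀ x ∈ K, x * Λ = Coalgebra.counit (R := k) x • Λ ∧
      Λ * x = Coalgebra.counit (R := k) x • Λ

/-- A cocommutative element of `H`; the cocommutative elements of `H` form
the character ring `C(H^*)`. -/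
def IsCocomm (x : H) : Prop :=
  (TensorProduct.comm k H H) (Coalgebra.comul (R := k) x) = Coalgebra.comul (R := k) x

/-- The character ring `C(H^*)`, i.e. the space of cocommutative elements of `H`,
as a `k`-subspace of `H`. -/
def charRing : Submodule k H :=
  LinearMap.ker ((TensorProduct.comm k H H).toLinearMap ∘ₗ Coalgebra.comul (R := k)
      - Coalgebra.comul (R := k))

/-- `d` is the irreducible character (of `H^*`) associated to the simple
subcoalgebra `C`: the unique cocommutative element of `C` whose counit is the
positive square root of `dim_k C`. -/
def IsCharacterOf (d : H) (C : Submodule k H) : Prop :=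
  d ∈ C ∧ IsCocomm k H d ∧
    Coalgebra.counit (R := k) d = ((Nat.sqrt (Module.finrank k ↥C) : ℕ) : k)

/-- The right coset `CK` of a subcoalgebra `C`, i.e. the subspace `C·K`. -/
def CKsub (K : Subalgebra k H) (C : Submodule k H) : Submodule k H :=
  C * K.toSubmodule

/-- The conjugate Hopf subalgebra `ᶜK` of `K` by a simple subcoalgebra `C`
(with associated irreducible character `c`): the span of all simple
subcoalgebras of `H` whose irreducible character `d` satisfies
`d·c·Λ_K = ε(d)·c·Λ_K`.  (The condition is stated for all cocommutative
elements of `C` resp. `D`; this is equivalent, since the cocommutative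
elements of a simple subcoalgebra are exactly the scalar multiples of its
irreducible character.) -/
def conjK (K : Subalgebra k H) (Λ : H) (C : Submodule k H) : Submodule k H :=
  sSup {D : Submodule k H | IsSimpleSubcoalgebra k H D ∧
    ∀ d ∈ D, IsCocomm k H d → ∀ c ∈ C, IsCocomm k H c →
      d * (c * Λ) = Coalgebra.counit (R := k) d • (c * Λ)}

/-- A complete irredundant system of representatives (by simple subcoalgebras)
of the double cosets `L\H/K`.  (Taking `L = ⊥` gives a system of
representatives of the right cosets `H/K`.) -/
def IsDoubleCosetReps (L K : Subalgebra k H) {ι : Type} (rep : ι → Submodule k H) : Prop :=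
  (∀ i, IsSimpleSubcoalgebra k H (rep i)) ∧
  (∀ i j, L.toSubmodule * rep i * K.toSubmodule = L.toSubmodule * rep j * K.toSubmodule
      → i = j) ∧
  (∀ C : Submodule k H, IsSimpleSubcoalgebra k H C →
      ∃ i, C ≤ L.toSubmodule * rep i * K.toSubmodule)

section Ind

variable (K : Subalgebra k H) (M : Type v) [AddCommGroup M] [Module k M]
  [Module ↥K M] [IsScalarTower k ↥K M]

/-- The relations defining the induced module `H ⊗_K M` as a quotient of
`H ⊗_k M`: the `H`-submodule generated by the elements `a ⊗ m - 1 ⊗ a·m`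
for `a ∈ K` (equivalently, spanned by all `h·a ⊗ m - h ⊗ a·m`). -/
def indRel : Submodule H (H ⊗[k] M) :=
  Submodule.span H {z | ∃ (a : ↥K) (m : M),
    z = (a : H) ⊗ₜ[k] m - (1 : H) ⊗ₜ[k] (a • m)}

/-- The induced module `M↑_K^H = H ⊗_K M`, a left `H`-module. -/
abbrev Ind := (H ⊗[k] M) ⧸ indRel k H K M

variable (C : Submodule k H)

/-- The underlying space `CK ⊗_k M` of which the conjugate module `ᶜM` is a
quotient. -/
def CKM : Type _ := ↥(CKsub k H K C) ⊗[k] M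

instance : AddCommGroup (CKM k H K M C) :=
  inferInstanceAs (AddCommGroup (↥(CKsub k H K C) ⊗[k] M))

instance : Module k (CKM k H K M C) :=
  inferInstanceAs (Module k (↥(CKsub k H K C) ⊗[k] M))

/-- The pure tensor `x ⊗ m` as an element of `CK ⊗_k M`. -/
def ckmk (x : ↥(CKsub k H K C)) (m : M) : CKM k H K M C := x ⊗ₜ[k] m

/-- The relations defining the conjugate module `ᶜM = CK ⊗_K M` as a quotient
of `CK ⊗_k M`: `x·a ⊗ m - x ⊗ a·m` for `a ∈ K`. -/
def conjRel : Submodule k (CKM k H K M C) :=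
  Submodule.span k {z | ∃ (x : ↥(CKsub k H K C)) (a : ↥K) (m : M)
    (hxa : (x : H) * (a : H) ∈ CKsub k H K C),
    z = ckmk k H K M C ⟨(x : H) * (a : H), hxa⟩ m - ckmk k H K M C x (a • m)}

/-- The conjugate module `ᶜM := CK ⊗_K M`. -/
abbrev ConjM := CKM k H K M C ⧸ conjRel k H K M C

/-- The canonical copy of the conjugate module `ᶜM = CK ⊗_K M` inside
`H ⊗_K M` (the image of `CK ⊗_K M` under multiplication; this is indeed a
copy of `ᶜM` since `H` is a free right `K`-module and `CK` is one of the
coset summands). -/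
def conjMsub : Submodule k (Ind k H K M) :=
  Submodule.span k {z | ∃ (x : H) (_ : x ∈ CKsub k H K C) (m : M),
    z = Submodule.Quotient.mk (x ⊗ₜ[k] m)}

end Ind

section Comp

variable (L K : Subalgebra k H) (Λ : H) (C : Submodule k H)
variable (M : Type v) [AddCommGroup M] [Module k M] [Module ↥K M] [IsScalarTower k ↥K M]

/-- The underlying space `L ⊗_k (CK ⊗_k M)`. -/
def LCM : Type _ := ↥L ⊗[k] CKM k H K M C

instance : AddCommGroup (LCM k H L K C M) :=
  inferInstanceAs (AddCommGroup (↥L ⊗[k] CKM k H K M C))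

instance : Module k (LCM k H L K C M) :=
  inferInstanceAs (Module k (↥L ⊗[k] CKM k H K M C))

/-- The pure tensor `l ⊗ w` as an element of `L ⊗_k (CK ⊗_k M)`. -/
def lcmk (l : ↥L) (w : CKM k H K M C) : LCM k H L K C M := l ⊗ₜ[k] w

/-- The relations defining `L ⊗_{L ∩ ᶜK} ᶜM` as a quotient of
`L ⊗_k (CK ⊗_k M)`: the balancedness relations over `L ∩ ᶜK` (first set),
together with (the image of) the relations defining `ᶜM = CK ⊗_K M`
(second set). -/
def compRel : Submodule k (LCM k H L K C M) :=
  Submodule.span k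
    ({z | ∃ (l : ↥L) (a : H) (haL : a ∈ L) (_ : a ∈ conjK k H K Λ C)
        (x : ↥(CKsub k H K C)) (m : M) (hax : a * (x : H) ∈ CKsub k H K C),
        z = lcmk k H L K C M ⟨(l : H) * a, mul_mem l.2 haL⟩ (ckmk k H K M C x m)
          - lcmk k H L K C M l (ckmk k H K M C ⟨a * (x : H), hax⟩ m)} ∪
     {z | ∃ (l : ↥L) (x : ↥(CKsub k H K C)) (a : ↥K) (m : M)
        (hxa : (x : H) * (a : H) ∈ CKsub k H K C),
        z = lcmk k H L K C M l (ckmk k H K M C ⟨(x : H) * (a : H), hxa⟩ m)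
          - lcmk k H L K C M l (ckmk k H K M C x (a • m))})

/-- The module `L ⊗_{L ∩ ᶜK} ᶜM` (a left `L`-module via multiplication on the
first tensor factor). -/
abbrev Comp := LCM k H L K C M ⧸ compRel k H L K Λ C M

end Comp

open DirectSum

section Mackey

variable (L K : Subalgebra k H) (Λ : H)

/-- The Mackey isomorphism property for the pair `(L, K)` at the `K`-module
`M`: for any system of double coset representatives, the left-multiplication
map `⊕_C L ⊗_{L ∩ ᶜK} ᶜM → M↑_K^H↓_L^H`, `l ⊗ v ↦ l·v`, is an isomorphism of
`L`-modules.  (A `k`-linear map satisfying the displayed formula on the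
spanning elements is automatically `L`-equivariant for the evident
`L`-actions, so this property is stated for `k`-linear maps.) -/
def MackeyAt (M : Type v) [AddCommGroup M] [Module k M] [Module ↥K M]
    [IsScalarTower k ↥K M] [Module.Finite k M] : Prop :=
  ∀ (ι : Type) [DecidableEq ι] (rep : ι → Submodule k H),
    IsDoubleCosetReps k H L K rep →
    ∃ π : (⨁ i : ι, Comp k H L K Λ (rep i) M) →ₗ[k] Ind k H K M,
      Function.Bijective π ∧
      ∀ (i : ι) (l : ↥L) (x : ↥(CKsub k H K (rep i))) (m : M),
        π (DirectSum.of (fun i => Comp k H L K Λ (rep i) M) i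
            (Submodule.Quotient.mk (lcmk k H L K (rep i) M l (ckmk k H K M (rep i) x m)))) =
          Submodule.Quotient.mk (((l : H) * (x : H)) ⊗ₜ[k] m)

/-- `(L, K)` is a Mackey pair of Hopf subalgebras of `H` (here `Λ` is the
idempotent integral of `K`): for every finite-dimensional `K`-module `M` the
left-multiplication homomorphism `π_M` is an isomorphism. -/
def IsMackeyPair : Prop :=
  ∀ (M : Type v) [AddCommGroup M] [Module k M] [Module ↥K M]
    [IsScalarTower k ↥K M] [Module.Finite k M], MackeyAt k H L K Λ M

end Mackey


open Submodule in
theorem exists_idempotent_mem {R : Type*} [Ring R] [IsArtinianRing R] (I : Ideal R) [I.IsTwoSided] :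
    ∃ θ ∈ I, IsIdempotentElem θ ∧ ∀ x ∈ I, x - x * θ ∈ Ring.jacobson R := by
  set J := Ring.jacobson R
  let π := Ideal.Quotient.mk J
  obtain ⟨Q, hQ⟩ := exists_isCompl (I.map π)
  have hsurj : Function.Surjective π := Ideal.Quotient.mk_surjective
  obtain ⟨e, he, g, hg, heg⟩ := Submodule.mem_sup.1 (hQ.sup_eq_top.ge (mem_top (x := (1 : R ⧸ J))))
  have hx : ∀ x ∈ I.map π, x = x * e := by
    intro x hx
    have h1 : x * e + x * g = x := by rw [← mul_add, heg, mul_one]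
    have h2 : x * g ∈ I.map π := by
      rw [← eq_sub_iff_add_eq'] at h1
      rw [h1]; exact sub_mem hx (Ideal.mul_mem_left _ _ he)
    have h3 : x * g = 0 := by
      have := hQ.disjoint.le_bot ⟨h2, Ideal.mul_mem_left _ _ hg⟩
      simpa using this
    rw [h3, add_zero] at h1; exact h1.symm
  obtain ⟨a, ha, hae⟩ := (Ideal.mem_map_iff_of_surjective π hsurj).1 he
  have key : ∀ x ∈ I, x - x * a ∈ J := by
    intro x hxI
    rw [← Ideal.Quotient.eq_zero_iff_mem, map_sub, map_mul]
    change π x - π x * π a = 0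
    rw [hae, ← hx _ (Ideal.mem_map_of_mem π hxI), sub_self]
  have : (I ⊓ J).IsTwoSided :=
    ⟨fun b h => ⟨I.mul_mem_right b h.1, J.mul_mem_right b h.2⟩⟩
  have hnil : ∀ x ∈ RingHom.ker (Ideal.Quotient.mk (I ⊓ J)), IsNilpotent x := by
    intro x hx
    rw [Ideal.mk_ker] at hx
    obtain ⟨n, hn⟩ := IsSemiprimaryRing.isNilpotent (R := R)
    refine ⟨n, ?_⟩
    have := Ideal.pow_mem_pow hx.2 n
    rw [hn] at this
    simpa using this
  have haa : IsIdempotentElem (Ideal.Quotient.mk (I ⊓ J) a) := by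
    have : a - a * a ∈ I ⊓ J := ⟨sub_mem ha (Ideal.mul_mem_left _ _ ha), key a ha⟩
    rw [← Ideal.Quotient.eq_zero_iff_mem, map_sub, map_mul, sub_eq_zero] at this
    exact this.symm
  obtain ⟨θ, hθ, hθa⟩ := exists_isIdempotentElem_eq_of_ker_isNilpotent
    (Ideal.Quotient.mk (I ⊓ J)) hnil _ ⟨a, rfl⟩ haa
  rw [Ideal.Quotient.eq] at hθa
  refine ⟨θ, ?_, hθ, fun x hx => ?_⟩
  · simpa using add_mem hθa.1 ha
  · have : x - x * θ = (x - x * a) - x * (θ - a) := by noncomm_ring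
    rw [this]
    exact sub_mem (key x hx) (Ideal.mul_mem_left _ _ hθa.2)

theorem covBy_dichotomy {R M : Type*} [Ring R] [AddCommGroup M] [Module R M]
    (I : Ideal R) [I.IsTwoSided] {θ : R} (hθ : ∀ x ∈ I, x - x * θ ∈ Ring.jacobson R)
    {N₁ N₂ : Submodule R M} (h : N₁ ⋖ N₂) :
    (∀ a ∈ I, ∀ m ∈ N₂, a • m ∈ N₁) ∨ ∀ m ∈ N₂, m - θ • m ∈ N₁ := by
  have hJ : ∀ a ∈ Ring.jacobson R, ∀ m ∈ N₂, a • m ∈ N₁ := by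
    intro a ha m hm
    have hs := (covBy_iff_quot_is_simple h.le).1 h
    have := IsSemisimpleModule.jacobson_le_annihilator R (N₂ ⧸ N₁.comap N₂.subtype) ha
    rw [Module.mem_annihilator] at this
    have := this (Submodule.Quotient.mk ⟨m, hm⟩)
    rw [← Submodule.Quotient.mk_smul, Submodule.Quotient.mk_eq_zero] at this
    exact this
  let Q : Submodule R M :=
    { carrier := {m | m ∈ N₂ ∧ ∀ a ∈ I, a • m ∈ N₁}
      zero_mem' := ⟨zero_mem _, fun a _ => by simp⟩
      add_mem' := fun {x y} hx hy => ⟨add_mem hx.1 hy.1, fun a ha => by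
        rw [smul_add]; exact add_mem (hx.2 a ha) (hy.2 a ha)⟩
      smul_mem' := fun r x hx => ⟨N₂.smul_mem r hx.1, fun a ha => by
        rw [← mul_smul]; exact hx.2 _ (I.mul_mem_right r ha)⟩ }
  rcases h.eq_or_eq (c := Q) (fun m hm => ⟨h.le hm, fun a _ => N₁.smul_mem a hm⟩)
    (fun m hm => hm.1) with hQ | hQ
  · right
    intro m hm
    rw [← hQ]
    refine ⟨sub_mem hm (N₂.smul_mem _ hm), fun a ha => ?_⟩
    rw [smul_sub, ← mul_smul, ← sub_smul]
    exact hJ _ (hθ a ha) m hm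
  · left
    intro a ha m hm
    rw [← hQ] at hm
    exact hm.2 a ha

theorem finrank_map_add_finrank_inf_ker {k V : Type*} [Field k] [AddCommGroup V] [Module k V]
    [FiniteDimensional k V] (e : V →ₗ[k] V) (N : Submodule k V) :
    Module.finrank k (N.map e) + Module.finrank k (N ⊓ LinearMap.ker e : Submodule k V) =
      Module.finrank k N := by
  rw [← LinearMap.finrank_range_add_finrank_ker (e.domRestrict N), LinearMap.range_domRestrict,
    LinearMap.ker_domRestrict, ← Submodule.finrank_map_subtype_eq N, Submodule.map_comap_subtype]

section FixedOfMass

variable {k R M T : Type*} [Field k] [Ring R] [AddCommGroup M] [Module k M] [Module R M]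
  [SMul k R] [IsScalarTower k R M] [FiniteDimensional k M] [AddCommGroup T] [Module k T]
  [FiniteDimensional k T]

theorem fixed_of_mass (I : Ideal R) [I.IsTwoSided] {θ : R}
    (hθ : ∀ x ∈ I, x - x * θ ∈ Ring.jacobson R)
    (e : M →ₗ[k] M) (he : ∀ m, e m = θ • m) (F : Submodule R M → Submodule k T)
    (hF : Monotone F) {n : ℕ}
    (hdim : ∀ N, Module.finrank k (F N) = n * Module.finrank k (N.restrictScalars k))
    (Θ : T →ₗ[k] T) (hΘ : ∀ t, Θ (Θ t) = Θ t)
    (hkill : ∀ N₁ N₂ : Submodule R M, (∀ a ∈ I, ∀ m ∈ N₂, a • m ∈ N₁) → ∀ t ∈ F N₂, Θ t ∈ F N₁)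
    (hstable : ∀ N : Submodule R M, ∀ t ∈ F N, Θ t ∈ F N)
    (htop : n * Module.finrank k (LinearMap.range e) ≤ Module.finrank k ((F ⊤).map Θ))
    (N : Submodule R M) (hN : ∀ m ∈ N, θ • m = m) : ∀ t ∈ F N, Θ t = t := by
  have : IsArtinian R M := isArtinian_of_tower k inferInstance
  have : IsNoetherian R M := isNoetherian_of_tower k inferInstance
  let r (N : Submodule R M) := Module.finrank k ((N.restrictScalars k).map e)
  let s (N : Submodule R M) := Module.finrank k ((F N).map Θ)
  have hcov : ∀ N₁ N₂ : Submodule R M, N₁ ⋖ N₂ → s N₂ + n * r N₁ ≤ s N₁ + n * r N₂ := by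
    intro N₁ N₂ h
    rcases covBy_dichotomy I hθ h with h' | h'
    · have h1 : r N₁ ≤ r N₂ :=
        Submodule.finrank_mono (Submodule.map_mono (fun x hx => h.le hx))
      have h2 : s N₂ ≤ s N₁ := by
        apply Submodule.finrank_mono
        rintro _ ⟨t, ht, rfl⟩
        exact ⟨Θ t, hkill _ _ h' t ht, hΘ t⟩
      nlinarith
    · have h1 := finrank_map_add_finrank_inf_ker e (N₁.restrictScalars k)
      have h2 := finrank_map_add_finrank_inf_ker e (N₂.restrictScalars k)
      have h3 := finrank_map_add_finrank_inf_ker Θ (F N₁)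
      have h4 := finrank_map_add_finrank_inf_ker Θ (F N₂)
      have h5 : N₁.restrictScalars k ⊓ LinearMap.ker e = N₂.restrictScalars k ⊓ LinearMap.ker e := by
        apply le_antisymm
        · exact inf_le_inf_right _ (fun x hx => h.le hx)
        · rintro m ⟨hm, hm'⟩
          refine ⟨?_, hm'⟩
          have h6 := h' m hm
          rw [← he, LinearMap.mem_ker.1 hm', sub_zero] at h6
          exact h6
      have h6 : Module.finrank k (F N₁ ⊓ LinearMap.ker Θ : Submodule k T) ≤
          Module.finrank k (F N₂ ⊓ LinearMap.ker Θ : Submodule k T) :=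
        Submodule.finrank_mono (inf_le_inf_right _ (hF h.le))
      rw [h5] at h1
      rw [hdim, ← h1] at h3
      rw [hdim, ← h2] at h4
      rw [mul_add] at h3 h4
      change s N₁ + _ = n * r N₁ + _ at h3
      change s N₂ + _ = n * r N₂ + _ at h4
      omega
  have hmono : ∀ N : Submodule R M, s ⊤ + n * r N ≤ s N + n * r ⊤ := by
    intro N
    induction N using WellFoundedGT.induction with
    | ind N ih =>
      rcases eq_or_lt_of_le (le_top (a := N)) with h | h
      · rw [h]
      · obtain ⟨N', hN', -⟩ := exists_covBy_le_of_lt h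
        have h1 := ih N' hN'.lt
        have h2 := hcov _ _ hN'
        omega
  have hrN : (N.restrictScalars k).map e = N.restrictScalars k := by
    ext m
    refine ⟨?_, fun hm => ⟨m, hm, by rw [he, hN m hm]⟩⟩
    rintro ⟨m, hm, rfl⟩
    rw [he]
    exact N.smul_mem θ hm
  have hrtop : n * r ⊤ ≤ s ⊤ := by
    rw [LinearMap.range_eq_map] at htop
    exact htop
  have hsN : Module.finrank k (F N) ≤ s N := by
    have h1 := hmono N
    have h2 : r N = Module.finrank k (N.restrictScalars k) := (LinearEquiv.ofEq _ _ hrN).finrank_eq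
    rw [hdim, ← h2]
    omega
  have hle : (F N).map Θ ≤ F N := by
    rintro _ ⟨t, ht, rfl⟩
    exact hstable N t ht
  have heq := Submodule.eq_of_le_of_finrank_le hle hsN
  intro t ht
  rw [← heq] at ht
  obtain ⟨u, -, rfl⟩ := ht
  exact hΘ u

end FixedOfMass

open Coalgebra

section TensorSubmodule

variable {k V W : Type*} [Field k] [AddCommGroup V] [Module k V] [AddCommGroup W] [Module k W]

/-- The subspace `P ⊗ Q` of `V ⊗ W`. -/
abbrev tens (P : Submodule k V) (Q : Submodule k W) : Submodule k (V ⊗[k] W) :=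
  Submodule.map₂ (TensorProduct.mk k V W) P Q

theorem tmul_mem_tens {P : Submodule k V} {Q : Submodule k W} {x : V} {y : W} (hx : x ∈ P)
    (hy : y ∈ Q) : x ⊗ₜ[k] y ∈ tens P Q :=
  Submodule.apply_mem_map₂ _ hx hy

theorem apply_mem_of_mem_tens {U : Type*} [AddCommGroup U] [Module k U]
    {P : Submodule k V} {Q : Submodule k W} {Z : Submodule k U} {f : V ⊗[k] W →ₗ[k] U}
    (h : ∀ x ∈ P, ∀ y ∈ Q, f (x ⊗ₜ[k] y) ∈ Z) {t : V ⊗[k] W} (ht : t ∈ tens P Q) : f t ∈ Z :=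
  (Submodule.map₂_le.2 h : tens P Q ≤ Z.comap f) ht

theorem finrank_tens (P : Submodule k V) (Q : Submodule k W) :
    Module.finrank k (tens P Q) = Module.finrank k P * Module.finrank k Q := by
  rw [tens, ← TensorProduct.range_mapIncl, LinearMap.finrank_range_of_inj, Module.finrank_tensorProduct]
  exact TensorProduct.map_injective_of_flat_flat _ _ P.injective_subtype Q.injective_subtype

theorem mem_tens_top_of_slices {P : Submodule k V} {t : V ⊗[k] W}
    (h : ∀ f : Module.Dual k W, TensorProduct.rid k V (f.lTensor V t) ∈ P) : t ∈ tens P ⊤ := by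
  classical
  let b := Module.Basis.ofVectorSpace k W
  rw [← (TensorProduct.equivFinsuppOfBasisRight (M := V) b).symm_apply_apply t,
    TensorProduct.equivFinsuppOfBasisRight_symm_apply]
  refine Submodule.sum_mem _ fun i _ => tmul_mem_tens ?_ trivial
  rw [TensorProduct.equivFinsuppOfBasisRight_apply]
  exact h _

theorem mem_top_tens_of_slices {Q : Submodule k W} {t : V ⊗[k] W}
    (h : ∀ f : Module.Dual k V, TensorProduct.lid k W (f.rTensor W t) ∈ Q) : t ∈ tens ⊤ Q := by
  classical
  let b := Module.Basis.ofVectorSpace k V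
  rw [← (TensorProduct.equivFinsuppOfBasisLeft (N := W) b).symm_apply_apply t,
    TensorProduct.equivFinsuppOfBasisLeft_symm_apply]
  refine Submodule.sum_mem _ fun i _ => tmul_mem_tens trivial ?_
  rw [TensorProduct.equivFinsuppOfBasisLeft_apply]
  exact h _

theorem mem_tens_of_mem_of_mem {P : Submodule k V} {Q : Submodule k W} {t : V ⊗[k] W}
    (hP : t ∈ tens P ⊤) (hQ : t ∈ tens ⊤ Q) : t ∈ tens P Q := by
  obtain ⟨p, hp⟩ := P.subtype.exists_leftInverse_of_injective P.ker_subtype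
  obtain ⟨q, hq⟩ := Q.subtype.exists_leftInverse_of_injective Q.ker_subtype
  have hp' : ∀ x (hx : x ∈ P), p x = ⟨x, hx⟩ := fun x hx => LinearMap.congr_fun hp ⟨x, hx⟩
  have hq' : ∀ x (hx : x ∈ Q), q x = ⟨x, hx⟩ := fun x hx => LinearMap.congr_fun hq ⟨x, hx⟩
  have h1 : (P.subtype ∘ₗ p).rTensor W t = t := by
    rw [← sub_eq_zero]
    refine apply_mem_of_mem_tens (Z := ⊥) (f := (P.subtype ∘ₗ p).rTensor W - LinearMap.id) ?_ hP
    intro x hx y _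
    simp [hp' x hx]
  have h2 : (Q.subtype ∘ₗ q).lTensor V t = t := by
    rw [← sub_eq_zero]
    refine apply_mem_of_mem_tens (Z := ⊥) (f := (Q.subtype ∘ₗ q).lTensor V - LinearMap.id) ?_ hQ
    intro x _ y hy
    simp [hq' y hy]
  rw [← h1]
  refine apply_mem_of_mem_tens (f := (P.subtype ∘ₗ p).rTensor W) (P := ⊤) (Q := Q) ?_ hQ
  intro x _ y hy
  exact tmul_mem_tens (p x).2 hy

end TensorSubmodule

section Hit

variable {k H : Type*} [Field k] [AddCommGroup H] [Module k H] [Coalgebra k H]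

/-- The right hit action `f ⇀ h = h₁ f(h₂)`. -/
def hitR (f : Module.Dual k H) : Module.End k H :=
  (TensorProduct.rid k H).toLinearMap ∘ₗ f.lTensor H ∘ₗ comul

/-- The left hit action `h ↼ f = f(h₁) h₂`. -/
def hitL (f : Module.Dual k H) : Module.End k H :=
  (TensorProduct.lid k H).toLinearMap ∘ₗ f.rTensor H ∘ₗ comul

theorem hitL_hitR_comm (f g : Module.Dual k H) (h : H) :
    hitL f (hitR g h) = hitR g (hitL f h) := by
  let T : H ⊗[k] (H ⊗[k] H) →ₗ[k] H := (TensorProduct.lid k H).toLinearMap ∘ₗ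
    f.rTensor H ∘ₗ ((TensorProduct.rid k H).toLinearMap ∘ₗ g.lTensor H).lTensor H
  have h1 : hitL f ∘ₗ (TensorProduct.rid k H).toLinearMap ∘ₗ g.lTensor H =
      T ∘ₗ (TensorProduct.assoc k H H H).toLinearMap ∘ₗ (comul (R := k) (A := H)).rTensor H := by
    ext a b
    simp only [hitL, T, AlgebraTensorModule.curry_apply, LinearMap.restrictScalars_self,
      curry_apply, LinearMap.coe_comp, LinearEquiv.coe_coe, Function.comp_apply,
      LinearMap.lTensor_tmul, TensorProduct.rid_tmul, map_smul, LinearMap.rTensor_tmul]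
    induction comul (R := k) a using TensorProduct.induction_on with
    | zero => simp
    | tmul x y => simp
    | add x y hx hy => simp only [TensorProduct.add_tmul, map_add, smul_add, hx, hy]
  have h2 : hitR g ∘ₗ (TensorProduct.lid k H).toLinearMap ∘ₗ f.rTensor H =
      T ∘ₗ (comul (R := k) (A := H)).lTensor H := by
    ext a b
    simp [hitR, T]
  have h3 := LinearMap.congr_fun h1 (comul h)
  have h4 := LinearMap.congr_fun h2 (comul h)
  simp only [LinearMap.comp_apply, LinearEquiv.coe_coe, coassoc_apply] at h3 h4
  exact h3.trans h4.symm

theorem counit_hitR (f : Module.Dual k H) (h : H) : counit (R := k) (hitR f h) = f h := by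
  have : counit (R := k) ∘ₗ (TensorProduct.rid k H).toLinearMap ∘ₗ f.lTensor H =
      f ∘ₗ (TensorProduct.lid k H).toLinearMap ∘ₗ (counit (R := k) (A := H)).rTensor H := by
    ext a b
    simp [mul_comm]
  have := LinearMap.congr_fun this (comul h)
  simpa [hitR] using this

theorem counit_hitL (f : Module.Dual k H) (h : H) : counit (R := k) (hitL f h) = f h := by
  have : counit (R := k) ∘ₗ (TensorProduct.lid k H).toLinearMap ∘ₗ f.rTensor H =
      f ∘ₗ (TensorProduct.rid k H).toLinearMap ∘ₗ (counit (R := k) (A := H)).lTensor H := by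
    ext a b
    simp [mul_comm]
  have := LinearMap.congr_fun this (comul h)
  simpa [hitL] using this

variable (k H) in
/-- The algebra of all endomorphisms of `H` commuting with the left hit actions; it consists of
the right hit actions. -/
abbrev hitAlg : Subalgebra k (Module.End k H) :=
  Subalgebra.centralizer k (Set.range (hitL (k := k) (H := H)))

theorem hitR_mem_hitAlg (f : Module.Dual k H) : hitR f ∈ hitAlg k H := by
  rw [Subalgebra.mem_centralizer_iff]
  rintro _ ⟨g, rfl⟩
  ext h
  exact hitL_hitR_comm g f h

theorem hitL_apply_of_mem_hitAlg {a : Module.End k H} (ha : a ∈ hitAlg k H) (f : Module.Dual k H)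
    (h : H) : hitL f (a h) = a (hitL f h) :=
  LinearMap.congr_fun ((Subalgebra.mem_centralizer_iff k).1 ha _ ⟨f, rfl⟩) h

theorem eq_hitR_of_mem_hitAlg {a : Module.End k H} (ha : a ∈ hitAlg k H) :
    a = hitR (counit ∘ₗ a) := by
  ext h
  rw [← sub_eq_zero, ← Module.forall_dual_apply_eq_zero_iff k]
  intro f
  rw [map_sub, sub_eq_zero, ← counit_hitL, hitL_apply_of_mem_hitAlg ha, ← counit_hitL f,
    hitL_hitR_comm, counit_hitR]
  rfl

end Hit

section Subcoalgebra

variable {k H : Type} [Field k] [Ring H] [HopfAlgebra k H]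

theorem isSubcoalgebra_iff {C : Submodule k H} :
    IsSubcoalgebra k H C ↔ ∀ c ∈ C, comul (R := k) c ∈ tens C C := by
  rw [tens, ← TensorProduct.range_mapIncl]
  rfl

theorem isSubcoalgebra_of_hit {C : Submodule k H} (hR : ∀ f : Module.Dual k H, ∀ c ∈ C, hitR f c ∈ C)
    (hL : ∀ f : Module.Dual k H, ∀ c ∈ C, hitL f c ∈ C) : IsSubcoalgebra k H C :=
  isSubcoalgebra_iff.2 fun c hc => mem_tens_of_mem_of_mem
    (mem_tens_top_of_slices fun f => hR f c hc) (mem_top_tens_of_slices fun f => hL f c hc)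

theorem IsSubcoalgebra.hitR_mem {C : Submodule k H} (hC : IsSubcoalgebra k H C)
    (f : Module.Dual k H) {c : H} (hc : c ∈ C) : hitR f c ∈ C := by
  refine apply_mem_of_mem_tens (f := (TensorProduct.rid k H).toLinearMap ∘ₗ f.lTensor H) ?_
    (isSubcoalgebra_iff.1 hC c hc)
  intro x hx y _
  simpa using C.smul_mem _ hx

theorem IsSubcoalgebra.hitL_mem {C : Submodule k H} (hC : IsSubcoalgebra k H C)
    (f : Module.Dual k H) {c : H} (hc : c ∈ C) : hitL f c ∈ C := by
  refine apply_mem_of_mem_tens (f := (TensorProduct.lid k H).toLinearMap ∘ₗ f.rTensor H) ?_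
    (isSubcoalgebra_iff.1 hC c hc)
  intro x _ y hy
  simpa using C.smul_mem _ hy

theorem IsSubcoalgebra.hitR_eq_zero {C : Submodule k H} (hC : IsSubcoalgebra k H C)
    {f : Module.Dual k H} (hf : ∀ c ∈ C, f c = 0) {c : H} (hc : c ∈ C) : hitR f c = 0 := by
  refine apply_mem_of_mem_tens (f := (TensorProduct.rid k H).toLinearMap ∘ₗ f.lTensor H)
    (Z := ⊥) ?_ (isSubcoalgebra_iff.1 hC c hc)
  intro x _ y hy
  simp [hf y hy]

theorem IsSubcoalgebra.inf {C D : Submodule k H} (hC : IsSubcoalgebra k H C)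
    (hD : IsSubcoalgebra k H D) : IsSubcoalgebra k H (C ⊓ D) :=
  isSubcoalgebra_of_hit (fun f _ hc => ⟨hC.hitR_mem f hc.1, hD.hitR_mem f hc.2⟩)
    (fun f _ hc => ⟨hC.hitL_mem f hc.1, hD.hitL_mem f hc.2⟩)

theorem IsSubcoalgebra.mul {C D : Submodule k H} (hC : IsSubcoalgebra k H C)
    (hD : IsSubcoalgebra k H D) : IsSubcoalgebra k H (C * D) := by
  rw [isSubcoalgebra_iff] at *
  change C * D ≤ (tens (C * D) (C * D)).comap comul
  rw [Submodule.mul_le]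
  intro c hc d hd
  change comul (R := k) (c * d) ∈ tens (C * D) (C * D)
  rw [Bialgebra.comul_mul]
  refine apply_mem_of_mem_tens (f := LinearMap.mulRight k (comul (R := k) d)) ?_ (hC c hc)
  intro x hx y hy
  refine apply_mem_of_mem_tens (f := LinearMap.mulLeft k (x ⊗ₜ[k] y)) ?_ (hD d hd)
  intro z hz w hw
  simpa using tmul_mem_tens (Submodule.mul_mem_mul hx hz) (Submodule.mul_mem_mul hy hw)

end Subcoalgebra

section Twist

variable {k H : Type*} [Field k] [Ring H] [HopfAlgebra k H]

/-- The twist `h ⊗ x ↦ A(h, x₁) ⊗ x₂`. -/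
def rTwist (A : H →ₗ[k] H →ₗ[k] H) : H ⊗[k] H →ₗ[k] H ⊗[k] H :=
  (lift A).rTensor H ∘ₗ (TensorProduct.assoc k H H H).symm.toLinearMap ∘ₗ comul.lTensor H

/-- The twist `x ⊗ h ↦ x₁ ⊗ A(x₂, h)`. -/
def lTwist (A : H →ₗ[k] H →ₗ[k] H) : H ⊗[k] H →ₗ[k] H ⊗[k] H :=
  (lift A).lTensor H ∘ₗ (TensorProduct.assoc k H H H).toLinearMap ∘ₗ comul.rTensor H

theorem rTwist_tmul (A : H →ₗ[k] H →ₗ[k] H) (h x : H) :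
    rTwist A (h ⊗ₜ[k] x) = (A h).rTensor H (comul x) := by
  simp only [rTwist, LinearMap.comp_apply, LinearMap.lTensor_tmul, LinearEquiv.coe_coe]
  induction comul (R := k) x using TensorProduct.induction_on with
  | zero => simp
  | tmul a b => simp
  | add a b ha hb => simp only [tmul_add, map_add, ha, hb]

theorem lTwist_tmul (A : H →ₗ[k] H →ₗ[k] H) (x h : H) :
    lTwist A (x ⊗ₜ[k] h) = (A.flip h).lTensor H (comul x) := by
  simp only [lTwist, LinearMap.comp_apply, LinearMap.rTensor_tmul, LinearEquiv.coe_coe]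
  induction comul (R := k) x using TensorProduct.induction_on with
  | zero => simp
  | tmul a b => simp
  | add a b ha hb => simp only [add_tmul, map_add, ha, hb]

theorem rTwist_rTwist_tmul (B A : H →ₗ[k] H →ₗ[k] H) (h x : H) :
    rTwist B (rTwist A (h ⊗ₜ[k] x)) = (lift (B ∘ₗ A h) ∘ₗ comul).rTensor H (comul x) := by
  have : rTwist B ∘ₗ (A h).rTensor H = rTwist (B ∘ₗ A h) := by
    ext a b
    simp [rTwist_tmul]
  rw [rTwist_tmul, ← LinearMap.comp_apply, this, rTwist]
  simp only [LinearMap.comp_apply, LinearEquiv.coe_coe, coassoc_symm_apply,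
    LinearMap.rTensor_comp]

theorem lTwist_lTwist_tmul (B A : H →ₗ[k] H →ₗ[k] H) (x h : H) :
    lTwist B (lTwist A (x ⊗ₜ[k] h)) =
      (lift (B.compl₂ (A.flip h)) ∘ₗ comul).lTensor H (comul x) := by
  have : lTwist B ∘ₗ (A.flip h).lTensor H = lTwist (B.compl₂ (A.flip h)) := by
    ext a b
    simp only [AlgebraTensorModule.curry_apply, LinearMap.restrictScalars_self, curry_apply,
      LinearMap.comp_apply, LinearMap.lTensor_tmul, lTwist_tmul]
    rfl
  rw [lTwist_tmul, ← LinearMap.comp_apply, this, lTwist]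
  simp only [LinearMap.comp_apply, LinearEquiv.coe_coe, coassoc_apply, LinearMap.lTensor_comp]

theorem lift_mul_antipode_comul (h x : H) :
    lift (LinearMap.mul k H ∘ₗ (LinearMap.mul k H).compl₂ (HopfAlgebra.antipode k) h)
      (comul (R := k) x) = counit (R := k) x • h := by
  have : lift (LinearMap.mul k H ∘ₗ (LinearMap.mul k H).compl₂ (HopfAlgebra.antipode k) h) =
      LinearMap.mulLeft k h ∘ₗ LinearMap.mul' k H ∘ₗ (HopfAlgebra.antipode k).rTensor H := by
    ext a b
    simp [mul_assoc]
  rw [this]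
  simp [HopfAlgebra.mul_antipode_rTensor_comul_apply, Algebra.algebraMap_eq_smul_one]

theorem lift_mul_mul_antipode_comul (h x : H) :
    lift ((LinearMap.mul k H).compl₂ (HopfAlgebra.antipode k) ∘ₗ LinearMap.mul k H h)
      (comul (R := k) x) = counit (R := k) x • h := by
  have : lift ((LinearMap.mul k H).compl₂ (HopfAlgebra.antipode k) ∘ₗ LinearMap.mul k H h) =
      LinearMap.mulLeft k h ∘ₗ LinearMap.mul' k H ∘ₗ (HopfAlgebra.antipode k).lTensor H := by
    ext a b
    simp [mul_assoc]
  rw [this]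
  simp [HopfAlgebra.mul_antipode_lTensor_comul_apply, Algebra.algebraMap_eq_smul_one]

theorem rTensor_counit_smul_comul (h x : H) {g : H →ₗ[k] H}
    (hg : ∀ y, g y = counit (R := k) y • h) : g.rTensor H (comul x) = h ⊗ₜ[k] x := by
  have : g = LinearMap.toSpanSingleton k H h ∘ₗ counit := LinearMap.ext fun y => by simp [hg]
  rw [this, LinearMap.rTensor_comp_apply, rTensor_counit_comul]
  simp

theorem lTensor_counit_smul_comul (h x : H) {g : H →ₗ[k] H}
    (hg : ∀ y, g y = counit (R := k) y • h) : g.lTensor H (comul x) = x ⊗ₜ[k] h := by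
  have : g = LinearMap.toSpanSingleton k H h ∘ₗ counit := LinearMap.ext fun y => by simp [hg]
  rw [this, LinearMap.lTensor_comp_apply, lTensor_counit_comul]
  simp

variable (k H) in
/-- The map `h ⊗ x ↦ h S(x₁) ⊗ x₂`. -/
abbrev rUntwist : H ⊗[k] H →ₗ[k] H ⊗[k] H :=
  rTwist ((LinearMap.mul k H).compl₂ (HopfAlgebra.antipode k))

theorem rTwist_mul_rUntwist (t : H ⊗[k] H) : rTwist (LinearMap.mul k H) (rUntwist k H t) = t := by
  induction t using TensorProduct.induction_on with
  | zero => simp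
  | tmul h x =>
    rw [rTwist_rTwist_tmul]
    exact rTensor_counit_smul_comul h x fun y => lift_mul_antipode_comul h y
  | add a b ha hb => simp only [map_add, ha, hb]

theorem rUntwist_rTwist_mul (t : H ⊗[k] H) : rUntwist k H (rTwist (LinearMap.mul k H) t) = t := by
  induction t using TensorProduct.induction_on with
  | zero => simp
  | tmul h x =>
    rw [rTwist_rTwist_tmul]
    exact rTensor_counit_smul_comul h x fun y => lift_mul_mul_antipode_comul h y
  | add a b ha hb => simp only [map_add, ha, hb]

theorem rUntwist_injective : Function.Injective (rUntwist k H) :=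
  Function.LeftInverse.injective rTwist_mul_rUntwist

theorem lTwist_mul_injective : Function.Injective (lTwist (LinearMap.mul k H)) := by
  refine Function.LeftInverse.injective
    (g := lTwist (LinearMap.mul k H ∘ₗ HopfAlgebra.antipode k)) fun t => ?_
  induction t using TensorProduct.induction_on with
  | zero => simp
  | tmul x h =>
    rw [lTwist_lTwist_tmul]
    refine lTensor_counit_smul_comul h x fun y => ?_
    have : lift ((LinearMap.mul k H ∘ₗ HopfAlgebra.antipode k).compl₂
        ((LinearMap.mul k H).flip h)) =
        LinearMap.mulRight k h ∘ₗ LinearMap.mul' k H ∘ₗ (HopfAlgebra.antipode k).rTensor H := by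
      ext a b
      simp [mul_assoc]
    rw [this]
    simp [HopfAlgebra.mul_antipode_rTensor_comul_apply, Algebra.algebraMap_eq_smul_one]
  | add a b ha hb => simp only [map_add, ha, hb]

variable (k H) in
/-- The bilinear map `(a, b) ↦ Δ(a) (1 ⊗ S(b))`. -/
def comulMulAntipode : H →ₗ[k] H →ₗ[k] H ⊗[k] H :=
  (LinearMap.mul k (H ⊗[k] H)).compl₁₂ comul
    (TensorProduct.mk k H H 1 ∘ₗ HopfAlgebra.antipode k)

theorem comulMulAntipode_apply (a b : H) : comulMulAntipode k H a b =
    comul (R := k) a * ((1 : H) ⊗ₜ[k] HopfAlgebra.antipode k b) := rfl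

theorem lift_comulMulAntipode_comul (x : H) :
    lift (comulMulAntipode k H) (comul x) = x ⊗ₜ[k] (1 : H) := by
  have : lift (comulMulAntipode k H) =
      (LinearMap.mul' k H ∘ₗ (HopfAlgebra.antipode k).lTensor H).lTensor H ∘ₗ
        (TensorProduct.assoc k H H H).toLinearMap ∘ₗ comul.rTensor H := by
    ext a b
    simp only [AlgebraTensorModule.curry_apply, LinearMap.restrictScalars_self, curry_apply,
      lift.tmul, comulMulAntipode_apply, LinearMap.comp_apply, LinearMap.rTensor_tmul,
      LinearEquiv.coe_coe]
    induction comul (R := k) a using TensorProduct.induction_on with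
    | zero => simp
    | tmul a b => simp
    | add a b ha hb => simp only [add_tmul, add_mul, map_add, ha, hb]
  rw [this]
  simp only [LinearMap.comp_apply, LinearEquiv.coe_coe, coassoc_apply]
  rw [← LinearMap.comp_apply, ← LinearMap.lTensor_comp]
  refine lTensor_counit_smul_comul 1 x fun y => ?_
  simp [HopfAlgebra.mul_antipode_lTensor_comul_apply, Algebra.algebraMap_eq_smul_one]

/-- The map `a ⊗ b ↦ a f(b)`. -/
abbrev slice (f : Module.Dual k H) : H ⊗[k] H →ₗ[k] H :=
  (TensorProduct.rid k H).toLinearMap ∘ₗ f.lTensor H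

theorem slice_mul_one_tmul (f : Module.Dual k H) (t : H ⊗[k] H) (b : H) :
    slice f (t * ((1 : H) ⊗ₜ[k] b)) = slice (f ∘ₗ LinearMap.mulRight k b) t := by
  induction t using TensorProduct.induction_on with
  | zero => simp
  | tmul x y => simp
  | add x y hx hy => simp only [add_mul, map_add, hx, hy]

theorem slice_mul_tmul_one (f : Module.Dual k H) (t : H ⊗[k] H) (b : H) :
    slice f (t * (b ⊗ₜ[k] (1 : H))) = slice f t * b := by
  induction t using TensorProduct.induction_on with
  | zero => simp
  | tmul x y => simp
  | add x y hx hy => simp only [add_mul, map_add, hx, hy]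

theorem slice_tmul_mul (f : Module.Dual k H) (t : H ⊗[k] H) (a b : H) :
    slice f (a ⊗ₜ[k] b * t) = a * slice (f ∘ₗ LinearMap.mulLeft k b) t := by
  induction t using TensorProduct.induction_on with
  | zero => simp
  | tmul x y => simp
  | add x y hx hy => simp only [mul_add, map_add, hx, hy]

/-- The bilinear map `(h, c) ↦ h₁ f(h₂ S(c))`. -/
def hitMulAntipode (f : Module.Dual k H) : H →ₗ[k] H →ₗ[k] H :=
  (comulMulAntipode k H).compr₂ (slice f)

/-- The bilinear map `(b, h) ↦ h₁ f(b h₂)`. -/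
def hitMul (f : Module.Dual k H) : H →ₗ[k] H →ₗ[k] H :=
  ((LinearMap.mul k (H ⊗[k] H)).compl₁₂ (TensorProduct.mk k H H 1) comul).compr₂ (slice f)

theorem hitMulAntipode_apply (f : Module.Dual k H) (h c : H) : hitMulAntipode f h c =
    hitR (f ∘ₗ LinearMap.mulRight k (HopfAlgebra.antipode k c)) h :=
  slice_mul_one_tmul f _ _

theorem hitMul_apply (f : Module.Dual k H) (b : H) :
    hitMul f b = hitR (f ∘ₗ LinearMap.mulLeft k b) := by
  ext h
  exact (slice_tmul_mul f _ 1 b).trans (one_mul _)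

theorem rTwist_hitMulAntipode_rTwist_mul (f : Module.Dual k H) (t : H ⊗[k] H) :
    rTwist (hitMulAntipode f) (rTwist (LinearMap.mul k H) t) =
      rTwist (LinearMap.mul k H) ((hitR f).rTensor H t) := by
  induction t using TensorProduct.induction_on with
  | zero => simp
  | tmul h x =>
    rw [rTwist_rTwist_tmul, LinearMap.rTensor_tmul, rTwist_tmul]
    congr 2
    ext y
    have : lift (hitMulAntipode f ∘ₗ LinearMap.mul k H h) =
        slice f ∘ₗ LinearMap.mulLeft k (comul (R := k) h) ∘ₗ lift (comulMulAntipode k H) := by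
      ext a b
      simp [hitMulAntipode, comulMulAntipode_apply, mul_assoc]
    rw [this]
    simp only [LinearMap.comp_apply, lift_comulMulAntipode_comul, LinearMap.mulLeft_apply]
    exact slice_mul_tmul_one f _ y
  | add a b ha hb => simp only [map_add, ha, hb]

theorem rTensor_hitR_rUntwist (f : Module.Dual k H) (t : H ⊗[k] H) :
    (hitR f).rTensor H (rUntwist k H t) = rUntwist k H (rTwist (hitMulAntipode f) t) := by
  rw [← rUntwist_rTwist_mul ((hitR f).rTensor H (rUntwist k H t)),
    ← rTwist_hitMulAntipode_rTwist_mul, rTwist_mul_rUntwist]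

theorem lTensor_hitR_lTwist_mul (f : Module.Dual k H) :
    (hitR f).lTensor H ∘ₗ lTwist (LinearMap.mul k H) =
      lTwist (LinearMap.mul k H) ∘ₗ lTwist (hitMul f) := by
  ext x h
  simp only [AlgebraTensorModule.curry_apply, LinearMap.restrictScalars_self, curry_apply,
    LinearMap.comp_apply]
  rw [lTwist_lTwist_tmul, lTwist_tmul, ← LinearMap.lTensor_comp_apply]
  congr 2
  ext y
  have : lift ((LinearMap.mul k H).compl₂ ((hitMul f).flip h)) =
      slice f ∘ₗ LinearMap.mulRight k (comul (R := k) h) := by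
    ext a b
    simpa [hitMul_apply, hitR] using (slice_tmul_mul f (comul h) a b).symm
  rw [this]
  simp [hitR, Bialgebra.comul_mul]

theorem rTensor_lTwist_assoc_symm (A : H →ₗ[k] H →ₗ[k] H) (x : H) (z : H ⊗[k] H) :
    (lTwist A).rTensor H ((TensorProduct.assoc k H H H).symm (x ⊗ₜ[k] z)) =
      (TensorProduct.assoc k H H H).symm
        (((LinearMap.rTensorHom H ∘ₗ A).flip z).lTensor H (comul x)) := by
  induction z using TensorProduct.induction_on with
  | zero => simp
  | tmul h y =>
    simp only [TensorProduct.assoc_symm_tmul, LinearMap.rTensor_tmul, lTwist_tmul]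
    induction comul (R := k) x using TensorProduct.induction_on with
    | zero => simp
    | tmul a b => simp
    | add a b ha hb => simp only [map_add, add_tmul, ha, hb]
  | add a b ha hb => simp only [tmul_add, map_add, ha, hb, LinearMap.lTensor_add,
      LinearMap.add_apply]

end Twist

theorem finrank_map_of_injective {k V W : Type*} [Field k] [AddCommGroup V] [Module k V]
    [AddCommGroup W] [Module k W] {f : V →ₗ[k] W} {p : Submodule k V}
    (hf : Function.Injective f) : Module.finrank k (p.map f) = Module.finrank k p :=
  (Submodule.equivMapOfInjective f hf p).finrank_eq.symm

section DoubleTwist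

variable {k H : Type} [Field k] [Ring H] [HopfAlgebra k H]

/-- The image of `L ⊗ N ⊗ K` under `l ⊗ n ⊗ x ↦ l₁ ⊗ l₂ n S(x₁) ⊗ x₂`. -/
def doubleTwist (L K N : Submodule k H) : Submodule k ((H ⊗[k] H) ⊗[k] H) :=
  (tens L ((tens N K).map (rUntwist k H))).map
    ((lTwist (LinearMap.mul k H)).rTensor H ∘ₗ (TensorProduct.assoc k H H H).symm.toLinearMap)

theorem doubleTwist_mono (L K : Submodule k H) : Monotone (doubleTwist L K) := fun _ _ h =>
  Submodule.map_mono (Submodule.map₂_le_map₂ le_rfl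
    (Submodule.map_mono (Submodule.map₂_le_map₂ h le_rfl)))

theorem finrank_doubleTwist (L K N : Submodule k H) :
    Module.finrank k (doubleTwist L K N) =
      Module.finrank k L * Module.finrank k K * Module.finrank k N := by
  rw [doubleTwist, finrank_map_of_injective, finrank_tens, finrank_map_of_injective, finrank_tens]
  · ring
  · exact rUntwist_injective
  · exact (Module.Flat.rTensor_preserves_injective_linearMap _ lTwist_mul_injective).comp
      (TensorProduct.assoc k H H H).symm.injective

theorem rTensor_lTensor_mem_doubleTwist {L K N₁ N₂ : Submodule k H} (hL : IsSubcoalgebra k H L)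
    (hK : IsSubcoalgebra k H K) (f : Module.Dual k H)
    (h : ∀ l ∈ L, ∀ x ∈ K, ∀ m ∈ N₂, hitR (f ∘ₗ LinearMap.mulLeft k l ∘ₗ
      LinearMap.mulRight k (HopfAlgebra.antipode k x)) m ∈ N₁)
    {t : (H ⊗[k] H) ⊗[k] H} (ht : t ∈ doubleTwist L K N₂) :
    ((hitR f).lTensor H).rTensor H t ∈ doubleTwist L K N₁ := by
  obtain ⟨s, hs, rfl⟩ := ht
  rw [LinearMap.comp_apply, ← LinearMap.rTensor_comp_apply, lTensor_hitR_lTwist_mul,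
    LinearMap.rTensor_comp_apply]
  refine apply_mem_of_mem_tens (Z := doubleTwist L K N₁)
    (f := (lTwist (LinearMap.mul k H)).rTensor H ∘ₗ (lTwist (hitMul f)).rTensor H ∘ₗ
      (TensorProduct.assoc k H H H).symm.toLinearMap) ?_ hs
  intro l hl z hz
  simp only [LinearMap.comp_apply, LinearEquiv.coe_coe]
  rw [rTensor_lTwist_assoc_symm]
  refine Submodule.mem_map_of_mem (f := (lTwist (LinearMap.mul k H)).rTensor H ∘ₗ
    (TensorProduct.assoc k H H H).symm.toLinearMap) ?_
  refine apply_mem_of_mem_tens ?_ (isSubcoalgebra_iff.1 hL l hl)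
  intro a ha b hb
  refine tmul_mem_tens ha ?_
  obtain ⟨w, hw, rfl⟩ := hz
  change (hitMul f b).rTensor H (rUntwist k H w) ∈ _
  rw [hitMul_apply, rTensor_hitR_rUntwist]
  refine Submodule.mem_map_of_mem (apply_mem_of_mem_tens ?_ hw)
  intro n hn x hx
  rw [rTwist_tmul]
  refine apply_mem_of_mem_tens ?_ (isSubcoalgebra_iff.1 hK x hx)
  intro y hy z hz
  rw [LinearMap.rTensor_tmul, hitMulAntipode_apply]
  exact tmul_mem_tens (h b hb y hy n hn) hz

theorem doubleTwist_top [FiniteDimensional k H] {L K : Submodule k H}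
    (hL : IsSubcoalgebra k H L) (hK : IsSubcoalgebra k H K) :
    doubleTwist L K ⊤ = tens (tens L ⊤) K := by
  refine Submodule.eq_of_le_of_finrank_le ?_ ?_
  · rintro _ ⟨s, hs, rfl⟩
    refine apply_mem_of_mem_tens ?_ hs
    rintro l hl _ ⟨w, hw, rfl⟩
    have hw' : rUntwist k H w ∈ tens ⊤ K := by
      refine apply_mem_of_mem_tens ?_ hw
      intro h _ x hx
      rw [rTwist_tmul]
      refine apply_mem_of_mem_tens ?_ (isSubcoalgebra_iff.1 hK x hx)
      intro y _ z hz
      exact tmul_mem_tens trivial hz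
    refine apply_mem_of_mem_tens (f := (lTwist (LinearMap.mul k H)).rTensor H ∘ₗ
      (TensorProduct.assoc k H H H).symm.toLinearMap ∘ₗ TensorProduct.mk k H (H ⊗[k] H) l) ?_ hw'
    intro h _ x hx
    refine tmul_mem_tens ?_ hx
    change lTwist (LinearMap.mul k H) (l ⊗ₜ[k] h) ∈ _
    rw [lTwist_tmul]
    refine apply_mem_of_mem_tens ?_ (isSubcoalgebra_iff.1 hL l hl)
    intro a ha b _
    exact tmul_mem_tens ha trivial
  · rw [finrank_doubleTwist, finrank_tens, finrank_tens, mul_right_comm]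

theorem finrank_range_le_finrank_map_doubleTwist_top [FiniteDimensional k H]
    {L K : Submodule k H} (hL : IsSubcoalgebra k H L) (hK : IsSubcoalgebra k H K)
    (e : H →ₗ[k] H) :
    Module.finrank k L * Module.finrank k K * Module.finrank k (LinearMap.range e) ≤
      Module.finrank k ((doubleTwist L K ⊤).map ((e.lTensor H).rTensor H)) := by
  rw [mul_right_comm, ← finrank_tens, ← finrank_tens, doubleTwist_top hL hK]
  refine Submodule.finrank_mono (Submodule.map₂_le.2 fun t ht x hx => ?_)
  have : tens L (LinearMap.range e) ≤ (tens L ⊤).map (e.lTensor H) := by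
    refine Submodule.map₂_le.2 ?_
    rintro a ha _ ⟨b, rfl⟩
    exact ⟨a ⊗ₜ[k] b, tmul_mem_tens ha trivial, rfl⟩
  obtain ⟨s, hs, rfl⟩ := this ht
  exact ⟨s ⊗ₜ[k] x, tmul_mem_tens hs hx, rfl⟩

theorem apply_mul_mul_antipode_of_fixed {L K N : Submodule k H} {e : H →ₗ[k] H}
    (h : ∀ t ∈ doubleTwist L K N, (e.lTensor H).rTensor H t = t)
    {l n x : H} (hl : l ∈ L) (hn : n ∈ N) (hx : x ∈ K) :
    e (l * n * HopfAlgebra.antipode k x) = l * n * HopfAlgebra.antipode k x := by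
  let π : (H ⊗[k] H) ⊗[k] H →ₗ[k] H := (TensorProduct.lid k H).toLinearMap ∘ₗ
    counit.rTensor H ∘ₗ (TensorProduct.rid k (H ⊗[k] H)).toLinearMap ∘ₗ counit.lTensor (H ⊗[k] H)
  have hπ : π ∘ₗ (e.lTensor H).rTensor H = e ∘ₗ π := by
    ext a b c
    simp [π]
  let τ : H ⊗[k] (H ⊗[k] H) →ₗ[k] (H ⊗[k] H) ⊗[k] H :=
    (lTwist (LinearMap.mul k H)).rTensor H ∘ₗ (TensorProduct.assoc k H H H).symm.toLinearMap
  have hmul : ∀ a b : H, (TensorProduct.lid k H) (counit.rTensor H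
      (lTwist (LinearMap.mul k H) (a ⊗ₜ[k] b))) = a * b := by
    intro a b
    have : (TensorProduct.lid k H).toLinearMap ∘ₗ counit.rTensor H ∘ₗ
        ((LinearMap.mul k H).flip b).lTensor H =
        LinearMap.mulRight k b ∘ₗ (TensorProduct.lid k H).toLinearMap ∘ₗ counit.rTensor H := by
      ext a c
      simp
    rw [lTwist_tmul]
    exact (LinearMap.congr_fun this (comul a)).trans (by simp)
  have hτ : ∀ z : H ⊗[k] H, π (τ (l ⊗ₜ[k] z)) =
      l * (TensorProduct.rid k H) (counit.lTensor H z) := by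
    intro z
    induction z using TensorProduct.induction_on with
    | zero => simp
    | tmul a b => simp [π, τ, hmul]
    | add a b ha hb => simp only [tmul_add, map_add, mul_add, ha, hb]
  have hS : (TensorProduct.rid k H) (counit.lTensor H (rUntwist k H (n ⊗ₜ[k] x))) =
      n * HopfAlgebra.antipode k x := by
    let g : H →ₗ[k] H := LinearMap.mulLeft k n ∘ₗ HopfAlgebra.antipode k
    have : (TensorProduct.rid k H).toLinearMap ∘ₗ counit.lTensor H ∘ₗ g.rTensor H =
        g ∘ₗ (TensorProduct.rid k H).toLinearMap ∘ₗ counit.lTensor H := by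
      ext a c
      simp
    rw [rTwist_tmul]
    exact (LinearMap.congr_fun this (comul x)).trans (by simp [g])
  have key := congrArg π (h (τ (l ⊗ₜ[k] rUntwist k H (n ⊗ₜ[k] x)))
    (Submodule.mem_map_of_mem (tmul_mem_tens hl (Submodule.mem_map_of_mem
      (tmul_mem_tens hn hx)))))
  rwa [← LinearMap.comp_apply, hπ, LinearMap.comp_apply, hτ, hS, ← mul_assoc] at key

theorem comul_mul_tmul_one {K : Subalgebra k H} (hK : IsSubcoalgebra k H K.toSubmodule) {Λ : H}
    (hΛ : IsIdempotentIntegral k H K Λ) {x : H} (hx : x ∈ K) :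
    comul (R := k) Λ * (x ⊗ₜ[k] (1 : H)) =
      comul (R := k) Λ * ((1 : H) ⊗ₜ[k] HopfAlgebra.antipode k x) := by
  have h1 : ∀ t ∈ tens K.toSubmodule K.toSubmodule,
      comul (R := k) Λ * lift (comulMulAntipode k H) t =
      comul (R := k) Λ * ((1 : H) ⊗ₜ[k] HopfAlgebra.antipode k
        (TensorProduct.lid k H (counit.rTensor H t))) := by
    intro t ht
    rw [← sub_eq_zero]
    refine apply_mem_of_mem_tens (Z := ⊥) (f := LinearMap.mulLeft k (comul (R := k) Λ) ∘ₗ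
      lift (comulMulAntipode k H) - LinearMap.mulLeft k (comul (R := k) Λ) ∘ₗ
        TensorProduct.mk k H H 1 ∘ₗ HopfAlgebra.antipode k ∘ₗ
          (TensorProduct.lid k H).toLinearMap ∘ₗ counit.rTensor H) ?_ ht
    intro a ha b _
    simp [comulMulAntipode_apply, ← mul_assoc, ← Bialgebra.comul_mul, (hΛ.2.2 a ha).2]
  rw [← lift_comulMulAntipode_comul, h1 _ (isSubcoalgebra_iff.1 hK x hx)]
  simp

theorem antipode_injOn [FiniteDimensional k H] {K : Subalgebra k H} (hK : IsHopfSubalgebra k H K)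
    {Λ : H} (hΛ : IsIdempotentIntegral k H K Λ) {a : H} (ha : a ∈ K)
    (h : HopfAlgebra.antipode k a = 0) : a = 0 := by
  have h1 : ∀ x ∈ K, comul (R := k) Λ * ((x * a) ⊗ₜ[k] (1 : H)) = 0 := by
    intro x hx
    rw [comul_mul_tmul_one hK.1 hΛ (K.mul_mem hx ha), HopfAlgebra.antipode_mul_antidistrib, h]
    simp
  obtain ⟨p, hp⟩ := K.toSubmodule.subtype.exists_leftInverse_of_injective K.toSubmodule.ker_subtype
  have hp' : ∀ x (hx : x ∈ K), p x = ⟨x, hx⟩ := fun x hx => LinearMap.congr_fun hp ⟨x, hx⟩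
  let b := Module.finBasis k K.toSubmodule
  have h2 : comul (R := k) Λ = ∑ i, slice (b.coord i ∘ₗ p) (comul Λ) ⊗ₜ[k] (b i : H) := by
    rw [← sub_eq_zero]
    have := apply_mem_of_mem_tens (Z := ⊥) (f := LinearMap.id -
      ∑ i, (TensorProduct.mk k H H).flip (b i) ∘ₗ slice (b.coord i ∘ₗ p)) ?_
      (isSubcoalgebra_iff.1 hK.1 Λ hΛ.1)
    · simpa using this
    intro u _ c hc
    have hc' := congrArg Subtype.val (b.sum_repr ⟨c, hc⟩)
    simp only [Submodule.coe_sum, Submodule.coe_smul] at hc'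
    have hu : u ⊗ₜ[k] c = ∑ i, b.repr ⟨c, hc⟩ i • u ⊗ₜ[k] (b i : H) := by
      simp only [← TensorProduct.tmul_smul, ← TensorProduct.tmul_sum, hc']
    simpa [hp' c hc, sub_eq_zero] using hu
  have h3 : ∀ i, ∀ x ∈ K, slice (b.coord i ∘ₗ p) (comul Λ) * (x * a) = 0 := by
    intro i x hx
    rw [← slice_mul_tmul_one, h1 x hx, map_zero]
  have h4 := HopfAlgebra.mul_antipode_lTensor_comul_apply (R := k) Λ
  rw [hΛ.2.1, map_one, h2] at h4
  rw [← one_mul a, ← h4]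
  simp only [map_sum, LinearMap.lTensor_tmul, LinearMap.mul'_apply, Finset.sum_mul, mul_assoc]
  exact Finset.sum_eq_zero fun i _ => h3 i _ (hK.2 _ (b i).2)

theorem antipode_surjOn [FiniteDimensional k H] {K : Subalgebra k H} (hK : IsHopfSubalgebra k H K)
    {Λ : H} (hΛ : IsIdempotentIntegral k H K Λ) {y : H} (hy : y ∈ K) :
    ∃ x ∈ K, HopfAlgebra.antipode k x = y := by
  let S : K.toSubmodule →ₗ[k] K.toSubmodule := (HopfAlgebra.antipode k).restrict hK.2
  have hS : Function.Injective S := by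
    rw [← LinearMap.ker_eq_bot, LinearMap.ker_eq_bot']
    rintro ⟨a, ha⟩ h
    exact Subtype.ext (antipode_injOn hK hΛ ha (congrArg Subtype.val h))
  obtain ⟨⟨x, hx⟩, h⟩ := LinearMap.injective_iff_surjective.1 hS ⟨y, hy⟩
  exact ⟨x, hx, congrArg Subtype.val h⟩

end DoubleTwist

section DoubleCoset

variable {k H : Type} [Field k] [Ring H] [HopfAlgebra k H]

theorem one_mem_toSubmodule (K : Subalgebra k H) : (1 : H) ∈ K.toSubmodule := K.one_mem

/-- A subcoalgebra, as a module over the algebra of right hit actions. -/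
def IsSubcoalgebra.toHitSubmodule {C : Submodule k H} (hC : IsSubcoalgebra k H C) :
    Submodule (hitAlg k H) H :=
  { C with
    smul_mem' := fun a c hc => by
      change (a : Module.End k H) c ∈ C
      rw [eq_hitR_of_mem_hitAlg a.2]
      exact hC.hitR_mem _ hc }

/-- The hit actions annihilating a subcoalgebra. -/
def hitAnnihilator {X : Submodule k H} (hX : IsSubcoalgebra k H X) : Ideal (hitAlg k H) :=
  Module.annihilator (hitAlg k H) hX.toHitSubmodule

theorem mem_hitAnnihilator {X : Submodule k H} (hX : IsSubcoalgebra k H X) {a : hitAlg k H} :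
    a ∈ hitAnnihilator hX ↔ ∀ x ∈ X, (a : Module.End k H) x = 0 := by
  rw [hitAnnihilator, Submodule.mem_annihilator]
  rfl

theorem hitR_mem_hitAnnihilator {X : Submodule k H} (hX : IsSubcoalgebra k H X)
    {f : Module.Dual k H} (hf : ∀ x ∈ X, f x = 0) :
    (⟨hitR f, hitR_mem_hitAlg f⟩ : hitAlg k H) ∈ hitAnnihilator hX :=
  (mem_hitAnnihilator hX).2 fun _ hx => hX.hitR_eq_zero hf hx

/-- An idempotent generating the annihilator of a subcoalgebra `X` modulo the radical fixes every
simple subcoalgebra not contained in `X`. -/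
theorem apply_eq_self_of_not_le [FiniteDimensional k H] {X D : Submodule k H}
    (hX : IsSubcoalgebra k H X) (hD : IsSimpleSubcoalgebra k H D) (hDX : ¬ D ≤ X)
    {θ : hitAlg k H}
    (hJ : ∀ a ∈ hitAnnihilator hX, a - a * θ ∈ Ring.jacobson (hitAlg k H)) {d : H} (hd : d ∈ D) :
    (θ : Module.End k H) d = d := by
  have hinf : D ⊓ X = ⊥ := by
    by_contra h
    exact hDX (inf_eq_left.1 (hD.2.2 _ inf_le_left (hD.1.inf hX) h))
  let U : Submodule k H :=
    { carrier := {c | c ∈ D ∧ ∀ a : hitAlg k H,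
        (θ : Module.End k H) ((a : Module.End k H) c) = (a : Module.End k H) c}
      add_mem' := fun ha hb => ⟨D.add_mem ha.1 hb.1, fun a => by
        simp only [map_add, ha.2 a, hb.2 a]⟩
      zero_mem' := ⟨D.zero_mem, fun a => by simp⟩
      smul_mem' := fun r c hc => ⟨D.smul_mem r hc.1, fun a => by
        simp only [map_smul, hc.2 a]⟩ }
  have hU : IsSubcoalgebra k H U := by
    refine isSubcoalgebra_of_hit (fun f c hc => ⟨hD.1.hitR_mem f hc.1, fun a => ?_⟩)
      (fun f c hc => ⟨hD.1.hitL_mem f hc.1, fun a => ?_⟩)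
    · exact hc.2 (a * ⟨hitR f, hitR_mem_hitAlg f⟩)
    · rw [← hitL_apply_of_mem_hitAlg a.2, ← hitL_apply_of_mem_hitAlg θ.2, hc.2 a]
  have : IsArtinian (hitAlg k H) H := isArtinian_of_tower k inferInstance
  have hbot : ⊥ < hD.1.toHitSubmodule := by
    rw [bot_lt_iff_ne_bot, Submodule.ne_bot_iff]
    exact (Submodule.ne_bot_iff D).1 hD.2.1
  obtain ⟨V, hV, hVD⟩ := exists_covBy_le_of_lt hbot
  obtain ⟨v, hvV, hv0⟩ := (Submodule.ne_bot_iff V).1 hV.lt.ne'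
  have hI : (hitAnnihilator hX).IsTwoSided := by
    unfold hitAnnihilator
    infer_instance
  have hUbot : U ≠ ⊥ := by
    rcases covBy_dichotomy (R := hitAlg k H) (M := H) (hitAnnihilator hX) hJ hV with h | h
    · refine absurd ?_ hv0
      have hvX : v ∈ X := by
        by_contra hvX
        obtain ⟨f, hfv, hf⟩ := Submodule.exists_le_ker_of_notMem hvX
        have := h _ (hitR_mem_hitAnnihilator hX hf) v hvV
        rw [← counit_hitR] at hfv
        exact hfv <| (congrArg _ ((Submodule.mem_bot _).1 this)).trans (map_zero _)
      exact (Submodule.mem_bot k).1 (hinf ▸ ⟨hVD hvV, hvX⟩)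
    · refine (Submodule.ne_bot_iff U).2 ⟨v, ⟨hVD hvV, fun a => ?_⟩, hv0⟩
      exact (sub_eq_zero.1 ((Submodule.mem_bot _).1 (h _ (V.smul_mem a hvV)))).symm
  have hUD := hD.2.2 U (fun c hc => hc.1) hU hUbot
  rw [← hUD] at hd
  exact hd.2 1

theorem le_mul_mul (L K : Subalgebra k H) (E : Submodule k H) :
    E ≤ L.toSubmodule * E * K.toSubmodule := fun c hc => by
  simpa using Submodule.mul_mem_mul (Submodule.mul_mem_mul (one_mem_toSubmodule L) hc)
    (one_mem_toSubmodule K)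

theorem mul_mul_le_of_le {L K : Subalgebra k H} {E E' : Submodule k H}
    (h : E ≤ L.toSubmodule * E' * K.toSubmodule) :
    L.toSubmodule * E * K.toSubmodule ≤ L.toSubmodule * E' * K.toSubmodule := by
  refine (mul_le_mul' (mul_le_mul' le_rfl h) le_rfl).trans ?_
  rw [← mul_assoc, ← mul_assoc, L.isIdempotentElem_toSubmodule.eq, mul_assoc,
    K.isIdempotentElem_toSubmodule.eq]

/-- An idempotent generating the annihilator of an `L`-`K`-stable subcoalgebra modulo the radical
acts as the identity on the double twist of every module of fixed vectors. -/
theorem doubleTwist_fixed [FiniteDimensional k H] {L K : Subalgebra k H}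
    (hL : IsSubcoalgebra k H L.toSubmodule) (hK : IsHopfSubalgebra k H K) {X : Submodule k H}
    (hX : IsSubcoalgebra k H X) (hLX : L.toSubmodule * X * K.toSubmodule ≤ X)
    {θ : hitAlg k H} (hθX : θ ∈ hitAnnihilator hX) (hθ : IsIdempotentElem θ)
    (hJ : ∀ a ∈ hitAnnihilator hX, a - a * θ ∈ Ring.jacobson (hitAlg k H))
    (N : Submodule (hitAlg k H) H) (hN : ∀ m ∈ N, (θ : Module.End k H) m = m) :
    ∀ t ∈ doubleTwist L.toSubmodule K.toSubmodule (N.restrictScalars k),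
      ((θ : Module.End k H).lTensor H).rTensor H t = t := by
  obtain ⟨e, he⟩ := θ
  have hI : (hitAnnihilator hX).IsTwoSided := by
    unfold hitAnnihilator
    infer_instance
  have hef : e = hitR (counit ∘ₗ e) := eq_hitR_of_mem_hitAlg he
  have heX : ∀ x ∈ X, e x = 0 := (mem_hitAnnihilator hX).1 hθX
  have hsq (t : (H ⊗[k] H) ⊗[k] H) : (e.lTensor H).rTensor H ((e.lTensor H).rTensor H t) =
      (e.lTensor H).rTensor H t := by
    rw [← LinearMap.rTensor_comp_apply, ← LinearMap.lTensor_comp]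
    exact congrArg (fun g : H →ₗ[k] H => (g.lTensor H).rTensor H t) (congrArg Subtype.val hθ.eq)
  have hkill (N₁ N₂ : Submodule (hitAlg k H) H)
      (h : ∀ a ∈ hitAnnihilator hX, ∀ m ∈ N₂, a • m ∈ N₁) (t)
      (ht : t ∈ doubleTwist L.toSubmodule K.toSubmodule (N₂.restrictScalars k)) :
      (e.lTensor H).rTensor H t ∈
        doubleTwist L.toSubmodule K.toSubmodule (N₁.restrictScalars k) := by
    rw [hef]
    refine rTensor_lTensor_mem_doubleTwist hL hK.1 _ (fun l hl x hx m hm => ?_) ht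
    refine h _ (hitR_mem_hitAnnihilator hX fun y hy => ?_) m hm
    refine (congrArg counit (heX _ (hLX ?_))).trans (map_zero _)
    change l * (y * HopfAlgebra.antipode k x) ∈ _
    rw [← mul_assoc]
    exact Submodule.mul_mem_mul (Submodule.mul_mem_mul hl hy) (hK.2 x hx)
  have hstable (N : Submodule (hitAlg k H) H) (t)
      (ht : t ∈ doubleTwist L.toSubmodule K.toSubmodule (N.restrictScalars k)) :
      (e.lTensor H).rTensor H t ∈
        doubleTwist L.toSubmodule K.toSubmodule (N.restrictScalars k) := by
    rw [hef]
    exact rTensor_lTensor_mem_doubleTwist hL hK.1 _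
      (fun l _ x _ m hm => N.smul_mem ⟨_, hitR_mem_hitAlg _⟩ hm) ht
  have htop : Module.finrank k L.toSubmodule * Module.finrank k K.toSubmodule *
      Module.finrank k (LinearMap.range e) ≤ Module.finrank k
        ((doubleTwist L.toSubmodule K.toSubmodule
          ((⊤ : Submodule (hitAlg k H) H).restrictScalars k)).map ((e.lTensor H).rTensor H)) := by
    rw [Submodule.restrictScalars_top]
    exact finrank_range_le_finrank_map_doubleTwist_top hL hK.1 e
  have key := fixed_of_mass (k := k) (R := hitAlg k H) (M := H) (hitAnnihilator hX) hJ e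
    (fun _ => rfl) (fun N => doubleTwist L.toSubmodule K.toSubmodule (N.restrictScalars k))
    (fun _ _ h => doubleTwist_mono _ _ h)
    (n := Module.finrank k L.toSubmodule * Module.finrank k K.toSubmodule)
    (fun N => finrank_doubleTwist _ _ _) ((e.lTensor H).rTensor H) hsq hkill hstable htop N hN
  exact key

/-- If a nonzero subcoalgebra `B` is contained in `LDK` with `D` simple, then `D ⊆ LBK`. -/
theorem le_mul_mul_of_le_mul_mul [FiniteDimensional k H] {L K : Subalgebra k H}
    (hL : IsHopfSubalgebra k H L) (hK : IsHopfSubalgebra k H K) {Λ : H}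
    (hΛ : IsIdempotentIntegral k H K Λ) {B D : Submodule k H} (hB : IsSubcoalgebra k H B)
    (hB0 : B ≠ ⊥) (hD : IsSimpleSubcoalgebra k H D)
    (hBD : B ≤ L.toSubmodule * D * K.toSubmodule) :
    D ≤ L.toSubmodule * B * K.toSubmodule := by
  set X := L.toSubmodule * B * K.toSubmodule with hXdef
  by_contra hDX
  have hX : IsSubcoalgebra k H X := (hL.1.mul hB).mul hK.1
  have hBX : B ≤ X := le_mul_mul L K B
  have : IsArtinianRing (hitAlg k H) := IsArtinianRing.of_finite k (hitAlg k H)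
  have hI : (hitAnnihilator hX).IsTwoSided := by
    unfold hitAnnihilator
    infer_instance
  obtain ⟨θ, hθI, hθ, hJ⟩ := exists_idempotent_mem (R := hitAlg k H) (hitAnnihilator hX)
  have heX : ∀ x ∈ X, (θ : Module.End k H) x = 0 := (mem_hitAnnihilator hX).1 hθI
  have hfix := doubleTwist_fixed hL.1 hK hX (mul_mul_le_of_le le_rfl) hθI hθ hJ
    hD.1.toHitSubmodule fun d hd => apply_eq_self_of_not_le hX hD hDX hJ hd
  have hLDK : L.toSubmodule * D * K.toSubmodule ≤ LinearMap.eqLocus (θ : Module.End k H) LinearMap.id := by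
    refine Submodule.mul_le.2 fun y hy x hx => ?_
    obtain ⟨z, hz, rfl⟩ := antipode_surjOn hK hΛ hx
    refine Submodule.mul_induction_on hy (fun l hl d hd => ?_) (fun a b ha hb => ?_)
    · exact apply_mul_mul_antipode_of_fixed hfix hl hd hz
    · rw [add_mul]
      exact add_mem ha hb
  exact hB0 (eq_bot_iff.2 fun b hb => (hLDK (hBD hb)).symm.trans (heX b (hBX hb)))

theorem IsSubcoalgebra.exists_counit_ne_zero {C : Submodule k H} (hC : IsSubcoalgebra k H C)
    (hC0 : C ≠ ⊥) : ∃ c ∈ C, counit (R := k) c ≠ 0 := by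
  by_contra! h
  refine hC0 (eq_bot_iff.2 fun c hc => ?_)
  simpa [hitR] using hC.hitR_eq_zero h hc

theorem IsIdempotentIntegral.span_mul {K : Subalgebra k H} {Λ : H}
    (hΛ : IsIdempotentIntegral k H K Λ) :
    Submodule.span k {Λ} * K.toSubmodule = Submodule.span k {Λ} := by
  refine le_antisymm (Submodule.mul_le.2 fun a ha x hx => ?_) fun a ha => ?_
  · obtain ⟨r, rfl⟩ := Submodule.mem_span_singleton.1 ha
    rw [smul_mul_assoc, (hΛ.2.2 x hx).2, smul_smul]
    exact Submodule.mem_span_singleton.2 ⟨_, rfl⟩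
  · simpa using Submodule.mul_mem_mul ha (one_mem_toSubmodule K)

theorem IsIdempotentIntegral.mul_span {K : Subalgebra k H} {Λ : H}
    (hΛ : IsIdempotentIntegral k H K Λ) :
    K.toSubmodule * Submodule.span k {Λ} = Submodule.span k {Λ} := by
  refine le_antisymm (Submodule.mul_le.2 fun x hx a ha => ?_) fun a ha => ?_
  · obtain ⟨r, rfl⟩ := Submodule.mem_span_singleton.1 ha
    rw [mul_smul_comm, (hΛ.2.2 x hx).1, smul_smul]
    exact Submodule.mem_span_singleton.2 ⟨_, rfl⟩
  · simpa using Submodule.mul_mem_mul (one_mem_toSubmodule K) ha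

end DoubleCoset

section Statements

variable [FiniteDimensional k H] [IsSemisimpleRing H]

/-- Proposition 10: for Hopf subalgebras `L, K` of the
semisimple Hopf algebra `H` and simple subcoalgebras `C, D` of `H`, the
following are equivalent: (1) `C ⊆ LDK`; (2) `LCK = LDK`;
(3) `Λ_L·C·Λ_K = Λ_L·D·Λ_K` as subspaces of `H`. -/
theorem statement_3 (L K : Subalgebra k H)
    (hL : IsHopfSubalgebra k H L) (hK : IsHopfSubalgebra k H K)
    (ΛL ΛK : H) (hΛL : IsIdempotentIntegral k H L ΛL)
    (hΛK : IsIdempotentIntegral k H K ΛK)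
    (C D : Submodule k H) (hC : IsSimpleSubcoalgebra k H C)
    (hD : IsSimpleSubcoalgebra k H D) :
    (C ≤ L.toSubmodule * D * K.toSubmodule ↔
      L.toSubmodule * C * K.toSubmodule = L.toSubmodule * D * K.toSubmodule) ∧
    (L.toSubmodule * C * K.toSubmodule = L.toSubmodule * D * K.toSubmodule ↔
      Submodule.span k {ΛL} * C * Submodule.span k {ΛK} =
        Submodule.span k {ΛL} * D * Submodule.span k {ΛK}) := by
  have hΛ : ∀ E : Submodule k H, Submodule.span k {ΛL} * (L.toSubmodule * E * K.toSubmodule) *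
      Submodule.span k {ΛK} = Submodule.span k {ΛL} * E * Submodule.span k {ΛK} := by
    intro E
    rw [← mul_assoc, ← mul_assoc, hΛL.span_mul, mul_assoc, hΛK.mul_span]
  refine ⟨⟨fun h => le_antisymm (mul_mul_le_of_le h) (mul_mul_le_of_le ?_), fun h => h ▸ le_mul_mul L K C⟩,
    fun h => by rw [← hΛ C, h, hΛ D], fun h => ?_⟩
  · exact le_mul_mul_of_le_mul_mul hL hK hΛK hC.1 hC.2.1 hD h
  · have hsub : ∀ E : Submodule k H, Submodule.span k {ΛL} * E * Submodule.span k {ΛK} ≤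
        L.toSubmodule * E * K.toSubmodule := fun E =>
      mul_le_mul' (mul_le_mul' (by simpa using hΛL.1) le_rfl) (by simpa using hΛK.1)
    set B := L.toSubmodule * C * K.toSubmodule ⊓ L.toSubmodule * D * K.toSubmodule
    have hB : IsSubcoalgebra k H B :=
      ((hL.1.mul hC.1).mul hK.1).inf ((hL.1.mul hD.1).mul hK.1)
    obtain ⟨c, hc, hc0⟩ := hC.1.exists_counit_ne_zero hC.2.1
    have hmem : ΛL * c * ΛK ∈ Submodule.span k {ΛL} * C * Submodule.span k {ΛK} :=
      Submodule.mul_mem_mul (Submodule.mul_mem_mul (Submodule.mem_span_singleton_self _) hc)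
        (Submodule.mem_span_singleton_self _)
    have hB0 : B ≠ ⊥ := by
      refine (Submodule.ne_bot_iff B).2 ⟨_, ⟨hsub C hmem, hsub D (h ▸ hmem)⟩, fun h0 => hc0 ?_⟩
      simpa [hΛL.2.1, hΛK.2.1] using congrArg (Coalgebra.counit (R := k)) h0
    exact le_antisymm
      (mul_mul_le_of_le ((le_mul_mul_of_le_mul_mul hL hK hΛK hB hB0 hC inf_le_left).trans (mul_mul_le_of_le inf_le_right)))
      (mul_mul_le_of_le ((le_mul_mul_of_le_mul_mul hL hK hΛK hB hB0 hD inf_le_right).trans (mul_mul_le_of_le inf_le_left)))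

end Statements

end

end MackeyPaper
end

section
/- Let C be a subcoalgebra of H with associated character d ∈ C(H*). Then the principal eigenspace of the operator L_d (the eigenspace of L_d for its Frobenius–Perron eigenvalue ε(d)) coincides with the principal eigenspace of L_{Λ_{⟨d⟩}}, where ⟨d⟩ is the Hopf subalgebra of H generated by C; the latter eigenspace equals Λ_{⟨d⟩}·C(H*). -/
open TensorProduct

namespace MackeyPaper

noncomputable section

universe v

variable (k : Type) [Field k] [CharZero k] [IsAlgClosed k]
variable (H : Type) [Ring H] [HopfAlgebra k H]

open DirectSum

section Statements

variable [FiniteDimensional k H] [IsSemisimpleRing H]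

/-- `d` is the character associated to the (not necessarily simple)
subcoalgebra `C`: the sum of the irreducible `H^*`-characters of the simple
subcoalgebras of `C`. -/
def IsAssocCharacter (d : H) (C : Submodule k H) : Prop :=
  ∃ (s : Finset (Submodule k H)) (f : Submodule k H → H),
    (∀ D ∈ s, IsSimpleSubcoalgebra k H D ∧ D ≤ C ∧ IsCharacterOf k H (f D) D) ∧
    (∀ D : Submodule k H, IsSimpleSubcoalgebra k H D → D ≤ C → D ∈ s) ∧
    d = ∑ D ∈ s, f D

end Statements

end

end MackeyPaper

namespace LarsonRadford

noncomputable section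

open Coalgebra HopfAlgebra WithConv MackeyPaper

section Hit

variable {k : Type*} [Field k] {H : Type*} [Ring H] [HopfAlgebra k H]

/-- The convolution algebra `H^*`. -/
abbrev ConvDual (k H : Type*) [Field k] [Ring H] [HopfAlgebra k H] := WithConv (H →ₗ[k] k)

/-- The operator `y ↦ y₁ f(y₂)`. -/
def rhit (f : H →ₗ[k] k) : H →ₗ[k] H :=
  (TensorProduct.rid k H).toLinearMap ∘ₗ f.lTensor H ∘ₗ comul

/-- The operator `y ↦ f(y₁) y₂`. -/
def lhit (f : H →ₗ[k] k) : H →ₗ[k] H :=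
  (TensorProduct.lid k H).toLinearMap ∘ₗ f.rTensor H ∘ₗ comul

theorem rhit_apply {ι : Type*} (f : H →ₗ[k] k) {y : H} (r : Repr k y ι) :
    rhit f y = ∑ i ∈ r.index, f (r.right i) • r.left i := by
  simp [rhit, ← r.eq]

theorem lhit_apply {ι : Type*} (f : H →ₗ[k] k) {y : H} (r : Repr k y ι) :
    lhit f y = ∑ i ∈ r.index, f (r.left i) • r.right i := by
  simp [lhit, ← r.eq]

theorem conv_apply {ι : Type*} (f g : H →ₗ[k] k) {y : H} (r : Repr k y ι) :
    (toConv f * toConv g).ofConv y = ∑ i ∈ r.index, f (r.left i) * g (r.right i) :=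
  r.convMul_apply _ _

theorem apply_rhit (f g : H →ₗ[k] k) (y : H) :
    f (rhit g y) = (toConv f * toConv g).ofConv y := by
  rw [rhit_apply g (ℛ k y), conv_apply f g (ℛ k y)]
  simp [mul_comm]

theorem apply_lhit (f g : H →ₗ[k] k) (y : H) :
    f (lhit g y) = (toConv g * toConv f).ofConv y := by
  rw [lhit_apply g (ℛ k y), conv_apply g f (ℛ k y)]
  simp

theorem ext_functional {V : Type*} [AddCommGroup V] [Module k V] {x y : V}
    (h : ∀ f : V →ₗ[k] k, f x = f y) : x = y :=
  (Module.forall_dual_apply_eq_zero_iff k (x - y)).1 (fun f => by simp [h f]) |> sub_eq_zero.1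

theorem rhit_conv (f g : ConvDual k H) : rhit (f * g).ofConv = rhit f.ofConv ∘ₗ rhit g.ofConv := by
  ext y
  refine ext_functional (k := k) fun u => ?_
  rw [apply_rhit, LinearMap.comp_apply, apply_rhit, toConv_ofConv, ← mul_assoc]
  conv_rhs => rw [toConv_ofConv, ← toConv_ofConv (toConv u * f), apply_rhit]

theorem lhit_conv (f g : ConvDual k H) : lhit (f * g).ofConv = lhit g.ofConv ∘ₗ lhit f.ofConv := by
  ext y
  refine ext_functional (k := k) fun u => ?_
  rw [apply_lhit, LinearMap.comp_apply, apply_lhit, toConv_ofConv, mul_assoc]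
  conv_rhs => rw [toConv_ofConv, apply_lhit]

theorem rhit_counit : rhit (counit (R := k) (A := H)) = LinearMap.id := by
  ext y
  refine ext_functional (k := k) fun u => ?_
  rw [apply_rhit]
  exact congr(($(mul_one (toConv u))).ofConv y)

theorem lhit_counit : lhit (counit (R := k) (A := H)) = LinearMap.id := by
  ext y
  refine ext_functional (k := k) fun u => ?_
  rw [apply_lhit]
  exact congr(($(one_mul (toConv u))).ofConv y)

theorem lhit_sum {ι : Type*} (s : Finset ι) (f : ι → H →ₗ[k] k) :
    lhit (∑ i ∈ s, f i) = ∑ i ∈ s, lhit (f i) := by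
  ext y
  rw [lhit_apply _ (ℛ k y)]
  simp only [LinearMap.sum_apply, lhit_apply _ (ℛ k y), Finset.sum_smul]
  exact Finset.sum_comm

theorem lhit_smul (c : k) (f : H →ₗ[k] k) : lhit (c • f) = c • lhit f := by
  ext y
  simp [lhit_apply _ (ℛ k y), Finset.smul_sum, smul_smul]

/-- The functionals `f ⊗ g` separate the points of a tensor product. -/
theorem tensor_ext {V W : Type*} [AddCommGroup V] [Module k V] [AddCommGroup W] [Module k W]
    {s t : V ⊗[k] W}
    (h : ∀ (f : V →ₗ[k] k) (g : W →ₗ[k] k),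
      LinearMap.mul' k k (TensorProduct.map f g s) = LinearMap.mul' k k (TensorProduct.map f g t)) :
    s = t := by
  let b := Module.Basis.ofVectorSpace k V
  let c := Module.Basis.ofVectorSpace k W
  refine (b.tensorProduct c).ext_elem fun ⟨i, j⟩ => ?_
  have key : ∀ u : V ⊗[k] W, (b.tensorProduct c).repr u (i, j) =
      LinearMap.mul' k k (TensorProduct.map (b.coord i) (c.coord j) u) := by
    intro u
    induction u with
    | zero => simp
    | tmul x y => simp [mul_comm]
    | add x y hx hy => simp [hx, hy]
  rw [key, key, h]

theorem mul'_map_comul (f g : H →ₗ[k] k) (x : H) :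
    LinearMap.mul' k k (TensorProduct.map f g (comul x)) = (toConv f * toConv g).ofConv x := rfl

/-- Left multiplication as a linear map into the endomorphism algebra. -/
abbrev lmul (k H : Type*) [Field k] [Ring H] [HopfAlgebra k H] : H →ₗ[k] Module.End k H :=
  LinearMap.mul k H

theorem comul_antipode_conv :
    toConv (TensorProduct.map (antipode k (A := H)) (antipode k (A := H)) ∘ₗ
      (TensorProduct.comm k H H).toLinearMap ∘ₗ comul) * toConv (comul (R := k) (A := H)) = 1 := by
  let iL : H →ₐ[k] H ⊗[k] H := Algebra.TensorProduct.includeLeft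
  let iR : H →ₐ[k] H ⊗[k] H := Algebra.TensorProduct.includeRight
  have hG : toConv (TensorProduct.map (antipode k (A := H)) (antipode k (A := H)) ∘ₗ
      (TensorProduct.comm k H H).toLinearMap ∘ₗ comul) =
      toConv (iR.toLinearMap ∘ₗ antipode k) * toConv (iL.toLinearMap ∘ₗ antipode k) := by
    ext x
    rw [(ℛ k x).convMul_apply]
    simp [← (ℛ k x).eq, iL, iR]
  have hδ : toConv (comul (R := k) (A := H)) = toConv iL.toLinearMap * toConv iR.toLinearMap := by
    ext x
    rw [(ℛ k x).convMul_apply]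
    simp [← (ℛ k x).eq, iL, iR]
  have hinv : ∀ i : H →ₐ[k] H ⊗[k] H,
      toConv (i.toLinearMap ∘ₗ antipode k) * toConv i.toLinearMap = 1 := by
    intro i
    ext x
    rw [(ℛ k x).convMul_apply]
    simp [← map_mul, ← map_sum, sum_antipode_mul_eq_algebraMap_counit]
  rw [hG, hδ, mul_assoc, ← mul_assoc (toConv (iL.toLinearMap ∘ₗ _)), hinv, one_mul, hinv]

theorem comul_antipode (x : H) :
    comul (R := k) (antipode k x) =
      TensorProduct.map (antipode k) (antipode k) (TensorProduct.comm k H H (comul x)) := by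
  have := left_inv_eq_right_inv (comul_antipode_conv (k := k) (H := H)) LinearMap.comul_right_inv
  exact congr(($this).ofConv x).symm

end Hit

section Trace

variable {k : Type*} [Field k] {H : Type*} [Ring H] [HopfAlgebra k H]

/-- The square of the antipode. -/
def sqAntipode (k H : Type*) [Field k] [Ring H] [HopfAlgebra k H] : H →ₗ[k] H :=
  antipode k ∘ₗ antipode k

theorem sqAntipode_apply (x : H) : sqAntipode k H x = antipode k (antipode k x) := rfl

theorem sqAntipode_mul (x y : H) :
    sqAntipode k H (x * y) = sqAntipode k H x * sqAntipode k H y := by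
  simp [sqAntipode_apply, antipode_mul_antidistrib]

theorem sqAntipode_one : sqAntipode k H (1 : H) = 1 := by
  simp [sqAntipode_apply]

theorem comul_sqAntipode (x : H) : comul (R := k) (sqAntipode k H x) =
    TensorProduct.map (sqAntipode k H) (sqAntipode k H) (comul x) := by
  rw [sqAntipode_apply, comul_antipode, comul_antipode, ← (ℛ k x).eq]
  simp [sqAntipode_apply]

theorem conv_sqAntipode (f g : H →ₗ[k] k) (x : H) :
    (toConv f * toConv g).ofConv (sqAntipode k H x) =
      (toConv (f ∘ₗ sqAntipode k H) * toConv (g ∘ₗ sqAntipode k H)).ofConv x := by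
  rw [← mul'_map_comul, comul_sqAntipode, ← mul'_map_comul, ← (ℛ k x).eq]
  simp

theorem lhit_sqAntipode (f : H →ₗ[k] k) (x : H) :
    lhit f (sqAntipode k H x) = sqAntipode k H (lhit (f ∘ₗ sqAntipode k H) x) := by
  refine ext_functional (k := k) fun u => ?_
  rw [apply_lhit, conv_sqAntipode]
  exact (apply_lhit (u ∘ₗ sqAntipode k H) (f ∘ₗ sqAntipode k H) x).symm

theorem rhit_sqAntipode (f : H →ₗ[k] k) (x : H) :
    rhit f (sqAntipode k H x) = sqAntipode k H (rhit (f ∘ₗ sqAntipode k H) x) := by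
  refine ext_functional (k := k) fun u => ?_
  rw [apply_rhit, conv_sqAntipode]
  exact (apply_rhit (u ∘ₗ sqAntipode k H) (f ∘ₗ sqAntipode k H) x).symm

theorem conv_antipode (f g : H →ₗ[k] k) (x : H) :
    (toConv f * toConv g).ofConv (antipode k x) =
      (toConv (g ∘ₗ antipode k) * toConv (f ∘ₗ antipode k)).ofConv x := by
  rw [← mul'_map_comul, comul_antipode, ← mul'_map_comul, ← (ℛ k x).eq]
  simp [mul_comm]

theorem lhit_antipode (f : H →ₗ[k] k) (x : H) :
    lhit f (antipode k x) = antipode k (rhit (f ∘ₗ antipode k) x) := by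
  refine ext_functional (k := k) fun u => ?_
  rw [apply_lhit, conv_antipode]
  exact (apply_rhit (u ∘ₗ antipode k) (f ∘ₗ antipode k) x).symm

theorem lhit_mul {ι : Type*} (f : H →ₗ[k] k) {x : H} (r : Repr k x ι) (z : H) :
    lhit f (x * z) = ∑ i ∈ r.index, r.right i * lhit (f ∘ₗ lmul k H (r.left i)) z := by
  simp only [lhit_apply _ (ℛ k z)]
  simp only [lhit, LinearMap.comp_apply, Bialgebra.comul_mul, ← r.eq, ← (ℛ k z).eq]
  simp [Finset.sum_mul, Finset.mul_sum, Finset.sum_comm (s := r.index)]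

theorem sum_repr_mul {ι : Type*} [Fintype ι] (b : Module.Basis ι k H) (g : H →ₗ[k] k) (a c : H) :
    ∑ j, b.repr a j * g (b j * c) = g (a * c) := by
  conv_rhs => rw [← b.sum_repr a, Finset.sum_mul, map_sum]
  simp

/-- The functional `x ↦ Tr(L_x ∘ S²)`. -/
def traceIntegral (k H : Type*) [Field k] [Ring H] [HopfAlgebra k H] : H →ₗ[k] k :=
  LinearMap.trace k H ∘ₗ LinearMap.mulRight k (sqAntipode k H) ∘ₗ lmul k H

theorem traceIntegral_apply (x : H) :
    traceIntegral k H x = LinearMap.trace k H (lmul k H x ∘ₗ sqAntipode k H) := rfl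

theorem conv_functional_sqAntipode (g : H →ₗ[k] k) (a w : H) {ι : Type*} (r : Repr k w ι) :
    ∑ i ∈ r.index, g (a * sqAntipode k H (r.right i) * antipode k (r.left i)) =
      counit w * g a := by
  have h : ∑ i ∈ r.index, sqAntipode k H (r.right i) * antipode k (r.left i) =
      algebraMap k H (counit w) := by
    simp only [sqAntipode_apply, ← antipode_mul_antidistrib, ← map_sum,
      sum_mul_antipode_eq_algebraMap_counit r]
    simp [Algebra.algebraMap_eq_smul_one]
  simp only [mul_assoc, ← map_sum, ← Finset.mul_sum, h]
  rw [← Algebra.commutes, ← Algebra.smul_def]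
  simp

variable [FiniteDimensional k H]

theorem traceIntegral_lhit (g : H →ₗ[k] k) (x : H) :
    traceIntegral k H (lhit g x) = g 1 * traceIntegral k H x := by
  let b := Module.finBasis k H
  let h : Fin (Module.finrank k H) → H →ₗ[k] k := fun j => g ∘ₗ lmul k H (b j) ∘ₗ antipode k
  set σ := sqAntipode k H with hσ
  have h₁ : ∑ j, lhit (b.coord j) ∘ₗ (lmul k H x ∘ₗ σ) ∘ₗ lhit (h j) =
      lmul k H (lhit g x) ∘ₗ σ := by
    have e₁ : ∀ j, lhit (b.coord j) ∘ₗ (lmul k H x ∘ₗ σ) ∘ₗ lhit (h j) =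
        ∑ i ∈ (ℛ k x).index, lmul k H ((ℛ k x).right i) ∘ₗ σ ∘ₗ
          lhit (toConv (h j) *
            toConv (b.coord j ∘ₗ lmul k H ((ℛ k x).left i) ∘ₗ σ)).ofConv := by
      intro j
      ext y
      simp only [LinearMap.comp_apply, LinearMap.sum_apply, LinearMap.mul_apply', lhit_conv]
      rw [lhit_mul _ (ℛ k x)]
      refine Finset.sum_congr rfl fun i _ => ?_
      rw [hσ, lhit_sqAntipode]
      rfl
    have e₂ : ∀ i, ∑ j, (toConv (h j) *
            toConv (b.coord j ∘ₗ lmul k H ((ℛ k x).left i) ∘ₗ σ)).ofConv =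
          g ((ℛ k x).left i) • counit := by
      intro i
      ext w
      rw [LinearMap.sum_apply]
      simp only [conv_apply _ _ (ℛ k w)]
      rw [Finset.sum_comm, LinearMap.smul_apply, smul_eq_mul, mul_comm,
        ← conv_functional_sqAntipode g _ w (ℛ k w)]
      refine Finset.sum_congr rfl fun t _ => ?_
      rw [← sum_repr_mul b]
      simp [h, mul_comm, hσ]
    simp only [e₁]
    rw [Finset.sum_comm, lhit_apply g (ℛ k x), map_sum]
    ext y
    simp only [LinearMap.comp_apply, LinearMap.sum_apply, LinearMap.mul_apply', ← Finset.mul_sum,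
      ← map_sum]
    simp only [← LinearMap.sum_apply, ← lhit_sum, e₂, lhit_smul, lhit_counit]
    simp [Finset.sum_mul]
  have h₂ : ∑ j, (toConv (b.coord j) * toConv (h j)).ofConv = g 1 • counit := by
    ext w
    rw [LinearMap.sum_apply]
    simp only [conv_apply _ _ (ℛ k w)]
    rw [Finset.sum_comm]
    have := congr(g $(sum_mul_antipode_eq_algebraMap_counit (ℛ k w)))
    rw [map_sum] at this
    rw [LinearMap.smul_apply, smul_eq_mul]
    refine Eq.trans (Finset.sum_congr rfl fun t _ => ?_) (this.trans ?_)
    · rw [← sum_repr_mul b]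
      simp [h]
    · rw [Algebra.algebraMap_eq_smul_one]
      simp [mul_comm]
  rw [traceIntegral_apply, ← hσ, ← h₁, map_sum]
  have h₃ : ∀ j, LinearMap.trace k H (lhit (b.coord j) ∘ₗ (lmul k H x ∘ₗ σ) ∘ₗ lhit (h j)) =
      LinearMap.trace k H ((lmul k H x ∘ₗ σ) ∘ₗ
        lhit (toConv (b.coord j) * toConv (h j)).ofConv) := by
    intro j
    rw [lhit_conv, LinearMap.trace_comp_comm', LinearMap.comp_assoc]
  simp only [h₃, ← map_sum]
  have h₄ : ∑ j, (lmul k H x ∘ₗ σ) ∘ₗ lhit (toConv (b.coord j) * toConv (h j)).ofConv =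
      g 1 • (lmul k H x ∘ₗ σ) := by
    ext y
    simp only [LinearMap.sum_apply, LinearMap.comp_apply, ← map_sum]
    rw [← LinearMap.sum_apply, ← lhit_sum, h₂, lhit_smul, lhit_counit]
    simp
  rw [h₄, map_smul, smul_eq_mul, traceIntegral_apply]

theorem rhit_traceIntegral (x : H) :
    rhit (traceIntegral k H) x = traceIntegral k H x • (1 : H) := by
  refine ext_functional (k := k) fun u => ?_
  rw [apply_rhit, ← apply_lhit, traceIntegral_lhit]
  simp [mul_comm]

end Trace

section Integral

variable {k : Type*} [Field k]

theorem exists_left_integral {R : Type*} [Ring R] [Algebra k R] [IsSemisimpleRing R]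
    (ε : R →ₐ[k] k) : ∃ e : R, ε e = 1 ∧ ∀ x, x * e = ε x • e := by
  obtain ⟨J, hJ⟩ := exists_isCompl (RingHom.ker ε)
  obtain ⟨i, hi, e, he, h1⟩ := Submodule.mem_sup.1
    (show (1 : R) ∈ RingHom.ker ε ⊔ J by rw [hJ.sup_eq_top]; trivial)
  have hε : ε e = 1 := by
    have := congr(ε $h1)
    rw [map_add, (RingHom.mem_ker).1 hi] at this
    simpa using this
  refine ⟨e, hε, fun x => sub_eq_zero.1 ?_⟩
  have h2 : x * e - ε x • e ∈ J := by
    refine J.sub_mem (J.smul_mem x he) ?_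
    rw [Algebra.smul_def]
    exact J.smul_mem _ he
  have h3 : x * e - ε x • e ∈ RingHom.ker ε := by
    rw [RingHom.mem_ker]
    simp [hε]
  exact (Submodule.disjoint_def.1 hJ.disjoint) _ h3 h2

variable {H : Type*} [Ring H] [HopfAlgebra k H]

/-- A normalised two-sided integral of `H`. -/
structure IsNormalizedIntegral (k : Type*) {H : Type*} [Field k] [Ring H] [HopfAlgebra k H]
    (Λ : H) : Prop where
  counit_eq_one : counit (R := k) Λ = 1
  mul_eq : ∀ x, Λ * x = counit (R := k) x • Λ
  eq_mul : ∀ x, x * Λ = counit (R := k) x • Λ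

theorem exists_isNormalizedIntegral (k H : Type*) [Field k] [Ring H] [HopfAlgebra k H]
    [IsSemisimpleRing H] : ∃ Λ : H, IsNormalizedIntegral k Λ := by
  obtain ⟨e, he1, he⟩ := exists_left_integral (Bialgebra.counitAlgHom k H)
  obtain ⟨f, hf1, hf⟩ := exists_left_integral
    ((Bialgebra.counitAlgHom k H).fromOpposite fun x y => Commute.all _ _)
  have hf' : ∀ x, f.unop * x = counit (R := k) x • f.unop := fun x =>
    congr(MulOpposite.unop $(hf (MulOpposite.op x)))
  have hef : e = f.unop := by
    have h1 := he f.unop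
    have h2 := hf' e
    rw [show counit (R := k) e = 1 from he1, one_smul] at h2
    rw [h2] at h1
    rw [h1, show (Bialgebra.counitAlgHom k H) f.unop = 1 from hf1, one_smul]
  exact ⟨e, he1, by rw [hef]; exact hf', he⟩

/-- The map `c ↦ S(Λ₁) μ(Λ₂ c)`. -/
def casimirMap (μ : H →ₗ[k] k) (Λ : H) : H →ₗ[k] H :=
  antipode k ∘ₗ (TensorProduct.rid k H).toLinearMap ∘ₗ μ.lTensor H ∘ₗ
    LinearMap.mulLeft k (comul (R := k) Λ) ∘ₗ
      (Algebra.TensorProduct.includeRight : H →ₐ[k] H ⊗[k] H).toLinearMap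

theorem casimirMap_apply (μ : H →ₗ[k] k) (Λ c : H) :
    casimirMap μ Λ c = antipode k (rhit (μ ∘ₗ LinearMap.mulRight k c) Λ) := by
  simp [casimirMap, rhit, ← (ℛ k Λ).eq, Finset.sum_mul]

theorem antipode_conv_casimirMap (μ : H →ₗ[k] k) (Λ x : H) :
    (toConv (antipode k (A := H)) * toConv (casimirMap μ Λ)).ofConv x =
      antipode k (rhit μ (Λ * x)) := by
  rw [(ℛ k x).convMul_apply]
  simp only [casimirMap_apply, ← antipode_mul_antidistrib, ← map_sum]
  congr 1
  simp only [rhit_apply _ (ℛ k Λ)]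
  simp only [rhit, LinearMap.comp_apply, Bialgebra.comul_mul, ← (ℛ k x).eq, ← (ℛ k Λ).eq]
  simp [Finset.sum_mul, Finset.mul_sum]

theorem casimirMap_eq {Λ : H} (hΛ : IsNormalizedIntegral k Λ) (μ : H →ₗ[k] k) (x : H) :
    casimirMap μ Λ x = x * antipode k (rhit μ Λ) := by
  have h : toConv (antipode k (A := H)) * toConv (casimirMap μ Λ) =
      toConv (LinearMap.toSpanSingleton k H (antipode k (rhit μ Λ)) ∘ₗ counit) := by
    ext y
    rw [antipode_conv_casimirMap, hΛ.mul_eq]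
    simp
  have h2 := congrArg (toConv (LinearMap.id (R := k) (M := H)) * ·) h
  rw [← mul_assoc, LinearMap.id_mul_antipode, one_mul] at h2
  rw [show casimirMap μ Λ x = _ from congr(($h2).ofConv x), (ℛ k x).convMul_apply]
  simp only [LinearMap.id_apply, LinearMap.comp_apply,
    LinearMap.toSpanSingleton_apply, mul_smul_comm]
  have h3 := congr($(rhit_counit (k := k) (H := H)) x)
  rw [rhit_apply _ (ℛ k x)] at h3
  conv_rhs => rw [show x = _ from h3.symm]
  simp [Finset.sum_mul]

variable [FiniteDimensional k H]

theorem traceIntegral_integral {Λ : H} (hΛ : IsNormalizedIntegral k Λ) :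
    traceIntegral k H Λ = 1 := by
  have : lmul k H Λ ∘ₗ sqAntipode k H = LinearMap.toSpanSingleton k H Λ ∘ₗ counit := by
    ext y
    simp [hΛ.mul_eq, sqAntipode_apply]
  rw [traceIntegral_apply, this, LinearMap.trace_comp_comm']
  have h2 : (counit : H →ₗ[k] k) ∘ₗ LinearMap.toSpanSingleton k H Λ = LinearMap.id := by
    ext
    simp [hΛ.counit_eq_one]
  rw [h2]
  simp

theorem antipode_rhit_traceIntegral {Λ : H} (hΛ : IsNormalizedIntegral k Λ) (x : H) :
    antipode k (rhit (traceIntegral k H ∘ₗ LinearMap.mulRight k x) Λ) = x := by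
  rw [← casimirMap_apply, casimirMap_eq hΛ, rhit_traceIntegral, traceIntegral_integral hΛ]
  simp

theorem antipode_bijective {Λ : H} (hΛ : IsNormalizedIntegral k Λ) :
    Function.Bijective (antipode k (A := H)) := by
  have : Function.Surjective (antipode k (A := H)) :=
    fun x => ⟨_, antipode_rhit_traceIntegral hΛ x⟩
  exact ⟨LinearMap.injective_iff_surjective.2 this, this⟩

theorem traceIntegral_eq_zero {Λ : H} (hΛ : IsNormalizedIntegral k Λ) {w : H}
    (h : ∀ x, traceIntegral k H (x * w) = 0) : w = 0 := by
  rw [← antipode_rhit_traceIntegral hΛ w, rhit_apply _ (ℛ k Λ)]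
  simp [h]

theorem traceIntegral_cancel {Λ : H} (hΛ : IsNormalizedIntegral k Λ) {v w : H}
    (h : ∀ x, traceIntegral k H (x * v) = traceIntegral k H (x * w)) : v = w :=
  sub_eq_zero.1 <| traceIntegral_eq_zero hΛ fun x => by simp [mul_sub, h]

theorem exists_eq_traceIntegral_mul {Λ : H} (hΛ : IsNormalizedIntegral k Λ) (ν : H →ₗ[k] k) :
    ∃ w, ∀ x, ν x = traceIntegral k H (x * w) := by
  let T : H →ₗ[k] (H →ₗ[k] k) :=
    (LinearMap.llcomp k H H k (traceIntegral k H)) ∘ₗ (LinearMap.mul k H).flip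
  have hT : ∀ w x, T w x = traceIntegral k H (x * w) := fun _ _ => rfl
  have hinj : Function.Injective T := by
    rw [injective_iff_map_eq_zero]
    intro w hw
    exact traceIntegral_eq_zero hΛ fun x => by rw [← hT, hw]; rfl
  have hsurj : Function.Surjective T :=
    (LinearMap.injective_iff_surjective_of_finrank_eq_finrank
      (Subspace.dual_finrank_eq (K := k) (V := H)).symm).1 hinj
  obtain ⟨w, hw⟩ := hsurj ν
  exact ⟨w, fun x => by rw [← hT, hw]⟩

theorem traceIntegral_mul (a b : H) :
    traceIntegral k H (a * b) = traceIntegral k H (b * sqAntipode k H a) := by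
  have h1 : lmul k H (a * b) ∘ₗ sqAntipode k H =
      lmul k H a ∘ₗ (lmul k H b ∘ₗ sqAntipode k H) := by
    ext; simp [mul_assoc]
  have h2 : lmul k H (b * sqAntipode k H a) ∘ₗ sqAntipode k H =
      (lmul k H b ∘ₗ sqAntipode k H) ∘ₗ lmul k H a := by
    ext; simp [mul_assoc, sqAntipode_mul]
  rw [traceIntegral_apply, traceIntegral_apply, h1, h2, LinearMap.trace_comp_comm']

theorem eq_traceIntegral_of_rhit {Λ : H} (hΛ : IsNormalizedIntegral k Λ) {ν : H →ₗ[k] k}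
    (hν : ∀ x, rhit ν x = ν x • (1 : H)) : ν = ν Λ • traceIntegral k H := by
  obtain ⟨w, hw⟩ := exists_eq_traceIntegral_mul hΛ ν
  have h := antipode_rhit_traceIntegral hΛ w
  rw [show traceIntegral k H ∘ₗ LinearMap.mulRight k w = ν from LinearMap.ext fun x => (hw x).symm,
    hν] at h
  ext x
  rw [hw x, ← h]
  simp

/-- The modular element of `H^*`. -/
def modular (k : Type*) {H : Type*} [Field k] [Ring H] [HopfAlgebra k H] (Λ : H) : H :=
  lhit (traceIntegral k H) Λ

theorem traceIntegral_conv {Λ : H} (hΛ : IsNormalizedIntegral k Λ) (f : H →ₗ[k] k) :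
    (toConv (traceIntegral k H) * toConv f) = f (modular k Λ) • toConv (traceIntegral k H) := by
  have := eq_traceIntegral_of_rhit hΛ (ν := (toConv (traceIntegral k H) * toConv f).ofConv) ?_
  · rw [← apply_lhit] at this
    exact congr(toConv $this)
  · intro x
    rw [rhit_conv, LinearMap.comp_apply, ofConv_toConv, ofConv_toConv, rhit_traceIntegral,
      apply_rhit]

theorem lhit_traceIntegral {Λ : H} (hΛ : IsNormalizedIntegral k Λ) (x : H) :
    lhit (traceIntegral k H) x = traceIntegral k H x • modular k Λ := by
  refine ext_functional (k := k) fun u => ?_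
  rw [apply_lhit, traceIntegral_conv hΛ]
  simp [mul_comm]

theorem isGroupLikeElem_modular {Λ : H} (hΛ : IsNormalizedIntegral k Λ) :
    IsGroupLikeElem k (modular k Λ) where
  counit_eq_one := by
    rw [modular, apply_lhit]
    refine Eq.trans ?_ (traceIntegral_integral hΛ)
    exact congr(($(mul_one (toConv (traceIntegral k H)))).ofConv Λ)
  comul_eq_tmul_self := by
    refine tensor_ext fun f g => ?_
    rw [mul'_map_comul]
    have h1 := traceIntegral_conv hΛ (toConv f * toConv g).ofConv
    rw [toConv_ofConv, ← mul_assoc, traceIntegral_conv hΛ f, smul_mul_assoc,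
      traceIntegral_conv hΛ g] at h1
    have h2 := congr(($h1).ofConv Λ)
    simpa [traceIntegral_integral hΛ] using h2.symm

theorem exists_pow_modular {Λ : H} (hΛ : IsNormalizedIntegral k Λ) :
    ∃ m, 0 < m ∧ modular k Λ ^ m = 1 := by
  have : Finite (GroupLike k H) := (linearIndep_groupLikeVal (R := k) (A := H)).finite
  refine ⟨Nat.card (GroupLike k H), Nat.card_pos, ?_⟩
  have := pow_card_eq_one' (x := (⟨modular k Λ, isGroupLikeElem_modular hΛ⟩ : GroupLike k H))
  exact congr(GroupLike.val $this)

/-- The functional `x ↦ λ(xγ)` composed with the antipode is proportional to `λ`. -/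
theorem exists_traceIntegral_antipode {Λ : H} (hΛ : IsNormalizedIntegral k Λ) :
    ∃ c : k, c ≠ 0 ∧
      ∀ x, traceIntegral k H (antipode k x * modular k Λ) = c * traceIntegral k H x := by
  set γ := modular k Λ
  have hγ : IsGroupLikeElem k γ := isGroupLikeElem_modular hΛ
  let κ : H →ₗ[k] k := traceIntegral k H ∘ₗ LinearMap.mulRight k γ
  have hκ : ∀ x, lhit κ x = κ x • (1 : H) := by
    intro x
    have h1 : lhit (traceIntegral k H) (x * γ) = lhit κ x * γ := by
      rw [lhit_apply κ (ℛ k x)]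
      simp only [lhit, LinearMap.comp_apply, Bialgebra.comul_mul, hγ.comul_eq_tmul_self]
      rw [← (ℛ k x).eq]
      simp [κ, Finset.sum_mul]
    rw [lhit_traceIntegral hΛ] at h1
    have h2 := congr($h1 * antipode k γ)
    rw [mul_assoc, hγ.mul_antipode_cancel, mul_one, smul_mul_assoc,
      hγ.mul_antipode_cancel] at h2
    exact h2.symm
  have hκS := eq_traceIntegral_of_rhit hΛ (ν := κ ∘ₗ antipode k) fun x => by
    apply (antipode_bijective hΛ).1
    rw [← lhit_antipode, hκ]
    simp
  refine ⟨_, fun h0 => ?_, fun x => congr($hκS x)⟩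
  rw [h0, zero_smul] at hκS
  have hz : γ = 0 := traceIntegral_eq_zero hΛ fun x => by
    obtain ⟨y, rfl⟩ := (antipode_bijective hΛ).2 x
    exact congr($hκS y)
  exact hγ.ne_zero hz

theorem mul_modular {Λ : H} (hΛ : IsNormalizedIntegral k Λ) (y : H) :
    y * modular k Λ = modular k Λ * sqAntipode k H (sqAntipode k H y) := by
  obtain ⟨c, hc, h⟩ := exists_traceIntegral_antipode hΛ
  have hγ : IsGroupLikeElem k (modular k Λ) := isGroupLikeElem_modular hΛ
  set γ := modular k Λ
  set γ' := antipode k γ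
  have h1 : γ * γ' = 1 := hγ.mul_antipode_cancel
  have h2 : γ' * γ = 1 := hγ.antipode_mul_cancel
  have hS : antipode k γ' = γ := hγ.antipode_antipode
  have key : ∀ x, traceIntegral k H (x * y) =
      traceIntegral k H (x * (γ * sqAntipode k H (sqAntipode k H y) * γ')) := by
    intro x
    have hσ : γ * sqAntipode k H (sqAntipode k H y) * γ' =
        sqAntipode k H (γ * sqAntipode k H y * γ') := by
      simp only [sqAntipode_mul]
      rw [show sqAntipode k H γ = γ from hS, sqAntipode_apply γ', hS]
    rw [hσ, ← traceIntegral_mul]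
    apply mul_left_cancel₀ hc
    rw [← h, ← h, antipode_mul_antidistrib, mul_assoc, traceIntegral_mul,
      antipode_mul_antidistrib]
    congr 1
    simp only [antipode_mul_antidistrib, hS]
    simp only [mul_assoc]
    rw [h2]
    simp [sqAntipode_apply]
  have := traceIntegral_cancel hΛ key
  conv_lhs => rw [this, mul_assoc, h2, mul_one]

end Integral

section RootsOfUnity

theorem exists_trace_eq_natCast {k V : Type*} [Field k] [AddCommGroup V] [Module k V]
    [FiniteDimensional k V] {f : Module.End k V} (hf : IsIdempotentElem f) :
    ∃ n : ℕ, n ≤ Module.finrank k V ∧ LinearMap.trace k V f = n :=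
  ⟨_, Submodule.finrank_le _, (LinearMap.IsIdempotentElem.isProj_range f hf).trace⟩

theorem exists_matrix_trace_eq_natCast {k m : Type*} [Field k] [Fintype m] [DecidableEq m]
    {M : Matrix m m k} (hM : IsIdempotentElem M) : ∃ n : ℕ, M.trace = n := by
  obtain ⟨n, -, h⟩ := exists_trace_eq_natCast (f := Matrix.toLinAlgEquiv' M) (hM.map _)
  exact ⟨n, by
    rw [← h, LinearMap.trace_eq_matrix_trace k (Pi.basisFun k m)]
    exact congrArg Matrix.trace (LinearMap.toMatrix'_toLin' M).symm⟩

variable {k : Type*} [Field k] [CharZero k]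

theorem exists_trace_eq_sum_roots {N : ℕ} (hN : 0 < N) {ζ : k} (hζ : IsPrimitiveRoot ζ N)
    {m : Type*} [Fintype m] [DecidableEq m] {u u' : Matrix m m k} (hu : u ^ N = 1)
    (huu' : u' * u = 1) :
    ∃ n : ℕ → ℕ, u.trace = ∑ j ∈ Finset.range N, n j * ζ ^ j ∧
      u'.trace = ∑ j ∈ Finset.range N, n j * ζ⁻¹ ^ j := by
  have hN' : (N : k) ≠ 0 := by exact_mod_cast hN.ne'
  have hζ0 : ζ ≠ 0 := hζ.ne_zero hN.ne'
  let P : ℕ → Matrix m m k := fun j => (N : k)⁻¹ • ∑ t ∈ Finset.range N, (ζ⁻¹ ^ j • u) ^ t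
  have hmul : ∀ j, u * P j = ζ ^ j • P j := by
    intro j
    have h1 : (ζ⁻¹ ^ j • u) ^ N = 1 := by
      rw [smul_pow, hu, ← pow_mul, mul_comm j N, pow_mul, inv_pow, hζ.pow_eq_one]
      simp
    have h2 : (ζ⁻¹ ^ j • u) * ∑ t ∈ Finset.range N, (ζ⁻¹ ^ j • u) ^ t =
        ∑ t ∈ Finset.range N, (ζ⁻¹ ^ j • u) ^ t := by
      have h3 := mul_geom_sum (ζ⁻¹ ^ j • u) N
      rw [h1, sub_self, sub_mul, one_mul] at h3
      exact sub_eq_zero.1 h3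
    have h3 : u = ζ ^ j • (ζ⁻¹ ^ j • u) := by
      rw [smul_smul, ← mul_pow, mul_inv_cancel₀ hζ0, one_pow, one_smul]
    simp only [P]
    rw [mul_smul_comm, smul_comm]
    congr 1
    nth_rw 1 [h3]
    rw [smul_mul_assoc, h2]
  have hpow : ∀ j t, u ^ t * P j = (ζ ^ j) ^ t • P j := by
    intro j t
    induction t with
    | zero => simp
    | succ t ih => rw [pow_succ, mul_assoc, hmul, mul_smul_comm, ih, smul_smul, pow_succ, mul_comm]
  have hidem : ∀ j, IsIdempotentElem (P j) := by
    intro j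
    have : ∀ t, (ζ⁻¹ ^ j • u) ^ t * P j = P j := by
      intro t
      rw [smul_pow, smul_mul_assoc, hpow, smul_smul, ← mul_pow, ← mul_pow, inv_mul_cancel₀ hζ0]
      simp
    rw [IsIdempotentElem]
    nth_rw 1 [show P j = (N : k)⁻¹ • ∑ t ∈ Finset.range N, (ζ⁻¹ ^ j • u) ^ t from rfl]
    rw [smul_mul_assoc, Finset.sum_mul]
    simp only [this]
    rw [Finset.sum_const, Finset.card_range, ← Nat.cast_smul_eq_nsmul k, smul_smul,
      inv_mul_cancel₀ hN', one_smul]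
  have hsum : ∑ j ∈ Finset.range N, P j = 1 := by
    simp only [P, ← Finset.smul_sum]
    rw [Finset.sum_comm]
    simp only [smul_pow, ← Finset.sum_smul]
    rw [Finset.sum_eq_single_of_mem 0 (Finset.mem_range.2 hN)]
    · simp [← Nat.cast_smul_eq_nsmul k, smul_smul, hN']
    · intro t ht ht0
      have hne : ζ⁻¹ ^ t ≠ 1 := fun h => by
        rw [inv_pow, inv_eq_one] at h
        exact hζ.pow_ne_one_of_pos_of_lt ht0 (Finset.mem_range.1 ht) h
      have h1 : ∑ j ∈ Finset.range N, (ζ⁻¹ ^ j) ^ t = 0 := by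
        have h2 := mul_geom_sum (ζ⁻¹ ^ t) N
        rw [← pow_mul, mul_comm t N, pow_mul, inv_pow ζ N, hζ.pow_eq_one, inv_one, one_pow,
          sub_self, mul_eq_zero] at h2
        simp only [← pow_mul, mul_comm t] at h2 ⊢
        exact h2.resolve_left (sub_ne_zero.2 hne)
      rw [h1, zero_smul]
  have hmul' : ∀ j, u' * P j = ζ⁻¹ ^ j • P j := by
    intro j
    have := congr(u' * $(hmul j))
    rw [← mul_assoc, huu', one_mul, mul_smul_comm] at this
    conv_rhs => rw [this]
    rw [smul_smul, ← mul_pow, inv_mul_cancel₀ hζ0, one_pow, one_smul]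
  choose n hn using fun j => exists_matrix_trace_eq_natCast (hidem j)
  refine ⟨n, ?_, ?_⟩
  · conv_lhs => rw [← mul_one u, ← hsum, Finset.mul_sum, Matrix.trace_sum]
    simp [hmul, hn, mul_comm]
  · conv_lhs => rw [← mul_one u', ← hsum, Finset.mul_sum, Matrix.trace_sum]
    simp [hmul', hn, mul_comm]

theorem sum_roots_eq_zero {N : ℕ} (hN : 0 < N) {ζ : k} (hζ : ζ ^ N = 1)
    {ι : Type*} [Fintype ι] (n : ι → ℕ → ℕ)
    (h : ∑ i, (∑ j ∈ Finset.range N, (n i j : k) * ζ ^ j) *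
      (∑ j ∈ Finset.range N, (n i j : k) * ζ⁻¹ ^ j) = 0) (i : ι) :
    ∑ j ∈ Finset.range N, (n i j : k) * ζ ^ j = 0 := by
  have hint : IsIntegral ℚ ζ := ⟨Polynomial.X ^ N - 1, Polynomial.monic_X_pow_sub_C 1 hN.ne', by
    simp [hζ]⟩
  let K := IntermediateField.adjoin ℚ {ζ}
  have : Algebra.IsAlgebraic ℚ K := IntermediateField.isAlgebraic_adjoin_simple hint
  let F : K →ₐ[ℚ] ℂ := IsAlgClosed.lift
  let z : K := IntermediateField.AdjoinSimple.gen ℚ ζ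
  have hz : (z : k) = ζ := IntermediateField.AdjoinSimple.coe_gen ℚ ζ
  have hzN : z ^ N = 1 := by
    apply Subtype.ext
    push_cast
    rw [hz, hζ]
  let a : ι → K := fun i => ∑ j ∈ Finset.range N, (n i j : K) * z ^ j
  let b : ι → K := fun i => ∑ j ∈ Finset.range N, (n i j : K) * z⁻¹ ^ j
  have ha : ∀ i, (a i : k) = ∑ j ∈ Finset.range N, (n i j : k) * ζ ^ j := by
    intro i
    simp [a, hz]
  have hb : ∀ i, (b i : k) = ∑ j ∈ Finset.range N, (n i j : k) * ζ⁻¹ ^ j := by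
    intro i
    simp [b, hz]
  have hab : ∑ i, a i * b i = 0 := by
    apply Subtype.ext
    push_cast
    simpa [ha, hb] using h
  have hconj : ∀ i, F (b i) = (starRingEnd ℂ) (F (a i)) := by
    intro i
    have hn : ‖F z‖ = 1 := Complex.norm_eq_one_of_pow_eq_one
      (by rw [← map_pow, hzN, map_one]) hN.ne'
    simp [a, b, ← Complex.inv_eq_conj hn]
  have h0 := congr(F $hab)
  simp only [map_sum, map_mul, hconj, Complex.mul_conj, map_zero] at h0
  have h1 : ∑ i, Complex.normSq (F (a i)) = 0 := by exact_mod_cast h0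
  have h2 := (Finset.sum_eq_zero_iff_of_nonneg fun i _ => Complex.normSq_nonneg _).1 h1 i
    (Finset.mem_univ i)
  have h3 : a i = 0 := by
    rw [Complex.normSq_eq_zero] at h2
    exact (map_eq_zero F).1 h2
  rw [← ha, h3]
  rfl

theorem sum_trace_mul_trace_ne_zero [IsAlgClosed k] {N : ℕ} (hN : 0 < N) {ι : Type*} [Fintype ι]
    [Nonempty ι] {d : ι → ℕ} (w v : ∀ i, Matrix (Fin (d i)) (Fin (d i)) k)
    (hvw : ∀ i, v i * w i = 1) (hv : ∀ i, (v i).trace = 1)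
    (hw : ∀ i, ∃ c : k, w i ^ N = c • 1) : ∑ i, (w i).trace ≠ 0 := by
  intro h
  have : NeZero (N : k) := ⟨by exact_mod_cast hN.ne'⟩
  obtain ⟨ζ, hζ⟩ := HasEnoughRootsOfUnity.exists_primitiveRoot k N
  have key : ∀ i, ∃ c : k, c ≠ 0 ∧ (c⁻¹ • w i) ^ N = 1 := by
    intro i
    obtain ⟨a, ha⟩ := hw i
    have ha0 : a ≠ 0 := by
      rintro rfl
      have h1 : v i ^ N * w i ^ N = 1 := by
        rw [← Commute.mul_pow (show v i * w i = w i * v i by rw [hvw, mul_eq_one_comm.1 (hvw i)]),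
          hvw, one_pow]
      rw [ha, zero_smul, mul_zero] at h1
      have h2 := hv i
      rw [← one_mul (v i), ← h1] at h2
      simp at h2
    obtain ⟨c, hc⟩ := IsAlgClosed.exists_pow_nat_eq a hN
    have hc0 : c ≠ 0 := by
      rintro rfl
      exact ha0 (by rw [← hc, zero_pow hN.ne'])
    refine ⟨c, hc0, ?_⟩
    rw [smul_pow, ha, smul_smul, inv_pow, hc, inv_mul_cancel₀ ha0, one_smul]
  choose c hc hcw using key
  have key2 : ∀ i, ∃ n : ℕ → ℕ, (c i)⁻¹ * (w i).trace = ∑ j ∈ Finset.range N, n j * ζ ^ j ∧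
      c i = ∑ j ∈ Finset.range N, n j * ζ⁻¹ ^ j := by
    intro i
    obtain ⟨n, h1, h2⟩ := exists_trace_eq_sum_roots hN hζ (hcw i) (u' := c i • v i) (by
      rw [smul_mul_smul_comm, hvw, mul_inv_cancel₀ (hc i), one_smul])
    exact ⟨n, by simpa using h1, by simpa [hv] using h2⟩
  choose n hn1 hn2 using key2
  obtain ⟨i⟩ := ‹Nonempty ι›
  have h0 := sum_roots_eq_zero hN (ζ := ζ⁻¹) (by rw [inv_pow, hζ.pow_eq_one, inv_one]) n (by
    simp only [← hn1, ← hn2, inv_inv]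
    rw [← h]
    refine Finset.sum_congr rfl fun i _ => ?_
    rw [← mul_assoc, mul_inv_cancel₀ (hc i), one_mul]) i
  exact hc i (by rw [hn2, h0])

end RootsOfUnity

section PiMatrix

variable {k : Type*} [Field k] {ι : Type*} {d : ι → ℕ}

/-- The matrix unit `E_ab` of the `i`-th block. -/
abbrev blockUnit (k : Type*) [Field k] {ι : Type*} [DecidableEq ι] {d : ι → ℕ} (i : ι)
    (a b : Fin (d i)) : ∀ i, Matrix (Fin (d i)) (Fin (d i)) k :=
  Pi.single i (Matrix.single a b 1)

theorem exists_eq_smul_one_of_central [DecidableEq ι] {M : ∀ i, Matrix (Fin (d i)) (Fin (d i)) k}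
    (h : ∀ X, X * M = M * X) (i : ι) : ∃ c : k, M i = c • 1 := by
  have : M i ∈ Set.range (Matrix.scalar (Fin (d i)) (α := k)) := by
    rw [Matrix.mem_range_scalar_iff_commute_single']
    intro a b
    have := congr($(h (blockUnit k i a b)) i)
    simpa [Commute, SemiconjBy] using this
  obtain ⟨c, hc⟩ := this
  exact ⟨c, by rw [← hc, Matrix.smul_one_eq_diagonal]; rfl⟩

variable [Fintype ι]

/-- The sum of the block traces. -/
def blockTrace (k : Type*) [Field k] {ι : Type*} [Fintype ι] (d : ι → ℕ) :
    (∀ i, Matrix (Fin (d i)) (Fin (d i)) k) →ₗ[k] k :=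
  ∑ i, Matrix.traceLinearMap (Fin (d i)) k k ∘ₗ LinearMap.proj i

theorem blockTrace_apply (M : ∀ i, Matrix (Fin (d i)) (Fin (d i)) k) :
    blockTrace k d M = ∑ i, (M i).trace := by
  simp [blockTrace]

theorem blockTrace_mul_comm (M N : ∀ i, Matrix (Fin (d i)) (Fin (d i)) k) :
    blockTrace k d (M * N) = blockTrace k d (N * M) := by
  simp only [blockTrace_apply, Pi.mul_apply]
  exact Finset.sum_congr rfl fun i _ => Matrix.trace_mul_comm _ _

variable [DecidableEq ι]

theorem piMatrix_eq_sum (M : ∀ i, Matrix (Fin (d i)) (Fin (d i)) k) :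
    M = ∑ i, ∑ a, ∑ b, M i a b • blockUnit k i a b := by
  funext i
  conv_lhs => rw [Matrix.matrix_eq_sum_single (M i)]
  rw [Finset.sum_apply, Finset.sum_eq_single i]
  · simp [Finset.sum_apply]
  · intro j _ hj
    simp [Finset.sum_apply, Pi.single_eq_of_ne' hj]
  · simp

theorem blockTrace_mul_single (M : ∀ i, Matrix (Fin (d i)) (Fin (d i)) k) (i : ι)
    (a b : Fin (d i)) :
    blockTrace k d (M * blockUnit k i a b) = M i b a := by
  rw [blockTrace_apply, Finset.sum_eq_single i]
  · rw [Pi.mul_apply, Matrix.trace_mul_comm]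
    simp [Matrix.trace_single_mul]
  · intro j _ hj
    simp [hj]
  · simp

theorem exists_eq_blockTrace_mul (f : (∀ i, Matrix (Fin (d i)) (Fin (d i)) k) →ₗ[k] k) :
    ∃ w, ∀ M, f M = blockTrace k d (M * w) := by
  refine ⟨∑ i, ∑ a, ∑ b, f (blockUnit k i a b) •
    blockUnit k i b a, fun M => ?_⟩
  conv_lhs => rw [piMatrix_eq_sum M]
  simp only [map_sum, Finset.mul_sum, map_smul, mul_smul_comm, blockTrace_mul_single, smul_eq_mul,
    mul_comm]

theorem blockTrace_cancel {M N : ∀ i, Matrix (Fin (d i)) (Fin (d i)) k}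
    (h : ∀ X, blockTrace k d (X * M) = blockTrace k d (X * N)) : M = N := by
  funext i
  ext a b
  rw [← blockTrace_mul_single M, ← blockTrace_mul_single N, blockTrace_mul_comm, h,
    blockTrace_mul_comm]

end PiMatrix

section Semisimple

variable {k : Type*} [Field k] [CharZero k] [IsAlgClosed k] {H : Type*} [Ring H]
  [HopfAlgebra k H] [FiniteDimensional k H] [IsSemisimpleRing H]

theorem traceIntegral_one_ne_zero : traceIntegral k H 1 ≠ 0 := by
  obtain ⟨Λ, hΛ⟩ := exists_isNormalizedIntegral k H
  obtain ⟨n, d, hd, ⟨φ⟩⟩ := IsSemisimpleRing.exists_algEquiv_pi_matrix_of_isAlgClosed k H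
  have : Nontrivial H := ⟨0, 1, fun h => by simpa using congr(counit (R := k) $h)⟩
  have : Nonempty (Fin n) := by
    by_contra hn
    rw [not_nonempty_iff] at hn
    exact zero_ne_one (φ.injective (Subsingleton.elim (φ 0) (φ 1)))
  set lam := traceIntegral k H with hlam
  obtain ⟨w, hw⟩ := exists_eq_blockTrace_mul (lam ∘ₗ φ.symm.toLinearMap)
  replace hw : ∀ x, lam x = blockTrace k d (φ x * w) := fun x => by
    rw [← hw]; simp
  obtain ⟨v, hv⟩ := exists_eq_traceIntegral_mul hΛ (blockTrace k d ∘ₗ φ.toLinearMap)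
  replace hv : ∀ x, blockTrace k d (φ x) = lam (x * v) := fun x => hv x
  have hvw : φ v * w = 1 := by
    refine blockTrace_cancel fun X => ?_
    obtain ⟨x, rfl⟩ := φ.surjective X
    rw [← mul_assoc, ← map_mul, ← hw, ← hv, mul_one]
  -- `w a = σ(a) w`
  have hconj : ∀ a, w * φ a = φ (sqAntipode k H a) * w := by
    intro a
    refine blockTrace_cancel fun X => ?_
    obtain ⟨x, rfl⟩ := φ.surjective X
    rw [ ← mul_assoc (φ x) (φ _), ← map_mul φ x, ← hw, hlam, ← traceIntegral_mul, ← hlam, hw,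
      map_mul φ a, mul_assoc (φ a),
      blockTrace_mul_comm (φ a), mul_assoc]
  have hcas : ∑ i, ∑ a, ∑ b, blockUnit k i a b * φ v * blockUnit k i b a = 1 := by
    let E : ∀ i, Fin (d i) → Fin (d i) → H := fun i a b =>
      φ.symm (blockUnit k i a b)
    have hE : ∀ i a b, φ (E i a b) = blockUnit k i a b := fun i a b => by
      simp [E]
    have hx : ∀ x, x = ∑ i, ∑ a, ∑ b, lam (x * (E i a b * v)) • E i b a := by
      intro x
      apply φ.injective
      simp only [← mul_assoc, ← hv, map_sum, map_smul, map_mul, hE, blockTrace_mul_single]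
      conv_lhs => rw [piMatrix_eq_sum (φ x)]
      exact Finset.sum_congr rfl fun i _ => Finset.sum_comm
    have h1 : ∑ t ∈ (ℛ k Λ).index, antipode k ((ℛ k Λ).left t) * (ℛ k Λ).right t = 1 := by
      rw [sum_antipode_mul_eq_algebraMap_counit, hΛ.counit_eq_one, map_one]
    have h2 : ∑ i, ∑ a, ∑ b, E i a b * v * E i b a = 1 := by
      rw [← h1]
      have h3 : ∀ i a b, E i a b * v * E i b a = ∑ t ∈ (ℛ k Λ).index,
          antipode k ((ℛ k Λ).left t) *
            (lam ((ℛ k Λ).right t * (E i a b * v)) • E i b a) := by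
        intro i a b
        conv_lhs => rw [← antipode_rhit_traceIntegral hΛ (E i a b * v), rhit_apply _ (ℛ k Λ)]
        simp [Finset.sum_mul, hlam, mul_assoc]
      simp only [h3]
      simp only [Finset.sum_comm (t := (ℛ k Λ).index), ← Finset.mul_sum]
      exact Finset.sum_congr rfl fun t _ => by rw [← hx]
    have h3 := congr(φ $h2)
    simpa only [map_sum, map_mul, hE, map_one] using h3
  have htr : ∀ i, (φ v i).trace = 1 := by
    intro i
    have := hd i
    have h1 := congr($hcas i 0 0)
    rw [Finset.sum_apply, Finset.sum_eq_single i] at h1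
    · simp only [Finset.sum_apply, Pi.mul_apply, Pi.single_eq_same] at h1
      simp only [Matrix.sum_apply, Matrix.single_mul_mul_single, one_mul, mul_one,
        Matrix.single_apply] at h1
      simpa [Matrix.trace, Finset.sum_ite_eq] using h1
    · intro j _ hj
      simp [Finset.sum_apply, Pi.single_eq_of_ne' hj]
    · simp
  obtain ⟨m, hm, hγm⟩ := exists_pow_modular hΛ
  set γ := modular k Λ with hγ
  have hσγ : sqAntipode k H γ = γ := (isGroupLikeElem_modular hΛ).antipode_antipode
  have hcomm : Commute (φ γ) w := by
    have := hconj γ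
    rw [hσγ] at this
    exact this.symm
  have hcentral : ∀ X, X * (φ γ * w ^ 2) = (φ γ * w ^ 2) * X := by
    intro X
    obtain ⟨x, rfl⟩ := φ.surjective X
    rw [← mul_assoc, ← map_mul, hγ, mul_modular hΛ, ← hγ, map_mul, mul_assoc, mul_assoc, pow_two,
      ← mul_assoc _ w w, ← hconj, mul_assoc w, ← hconj, mul_assoc]
  have hscalar : ∀ i, ∃ c : k, (w i) ^ (2 * m) = c • 1 := by
    intro i
    obtain ⟨c, hc⟩ := exists_eq_smul_one_of_central hcentral i
    have h1 : w ^ (2 * m) = (φ γ * w ^ 2) ^ m := by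
      rw [(hcomm.pow_right 2).mul_pow, ← map_pow, hγm, map_one, one_mul, pow_mul]
    refine ⟨c ^ m, ?_⟩
    rw [← Pi.pow_apply, h1, Pi.pow_apply, hc, smul_pow, one_pow]
  rw [hw, map_one, one_mul, blockTrace_apply]
  exact sum_trace_mul_trace_ne_zero (N := 2 * m) (by omega) w (φ v)
    (fun i => congr($hvw i)) htr hscalar

theorem sqAntipode_sqAntipode (x : H) : sqAntipode k H (sqAntipode k H x) = x := by
  obtain ⟨Λ, hΛ⟩ := exists_isNormalizedIntegral k H
  have h1 : modular k Λ = 1 := by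
    have h2 := lhit_traceIntegral hΛ (1 : H)
    have h3 : lhit (traceIntegral k H) (1 : H) = traceIntegral k H 1 • (1 : H) := by
      simp [lhit, Algebra.TensorProduct.one_def]
    rw [h3] at h2
    exact (smul_right_injective H traceIntegral_one_ne_zero h2).symm
  have h4 := mul_modular hΛ x
  rw [h1, mul_one, one_mul] at h4
  exact h4.symm

end Semisimple

section Regular

variable {k : Type} [Field k] {H : Type} [Ring H] [HopfAlgebra k H]

theorem exists_repr_mem {C : Submodule k H} (hC : IsSubcoalgebra k H C) {x : H} (hx : x ∈ C) :
    ∃ r : Repr k x (C × C), ∀ i, r.left i ∈ C ∧ r.right i ∈ C := by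
  obtain ⟨t, ht⟩ := hC x hx
  obtain ⟨s, hs⟩ := TensorProduct.exists_finset t
  exact ⟨⟨s, fun i => i.1, fun i => i.2, by rw [← ht, hs]; simp⟩, fun i => ⟨i.1.2, i.2.2⟩⟩

theorem rhit_mem {C : Submodule k H} (hC : IsSubcoalgebra k H C) (f : H →ₗ[k] k) {x : H}
    (hx : x ∈ C) : rhit f x ∈ C := by
  obtain ⟨r, hr⟩ := exists_repr_mem hC hx
  rw [rhit_apply f r]
  exact C.sum_mem fun i _ => C.smul_mem _ (hr i).1

theorem lhit_mem {C : Submodule k H} (hC : IsSubcoalgebra k H C) (f : H →ₗ[k] k) {x : H}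
    (hx : x ∈ C) : lhit f x ∈ C := by
  obtain ⟨r, hr⟩ := exists_repr_mem hC hx
  rw [lhit_apply f r]
  exact C.sum_mem fun i _ => C.smul_mem _ (hr i).2

theorem isCocomm_iff {x : H} : IsCocomm k H x ↔
    ∀ f g : ConvDual k H, (f * g).ofConv x = (g * f).ofConv x := by
  have key : ∀ f g : H →ₗ[k] k, LinearMap.mul' k k (TensorProduct.map f g
      (TensorProduct.comm k H H (comul x))) = (toConv g * toConv f).ofConv x := by
    intro f g
    rw [← mul'_map_comul, ← (ℛ k x).eq]
    simp [mul_comm]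
  constructor
  · intro h f g
    have := key g.ofConv f.ofConv
    rw [show TensorProduct.comm k H H (comul (R := k) x) = comul (R := k) x from h,
      mul'_map_comul] at this
    exact this.symm
  · intro h
    refine tensor_ext fun f g => ?_
    rw [key, mul'_map_comul, h]

theorem mem_charRing_iff {x : H} : x ∈ charRing k H ↔ IsCocomm k H x := by
  simp [charRing, MackeyPaper.IsCocomm, sub_eq_zero]

theorem IsCocomm.sum_right_mul_antipode {a : H} (ha : IsCocomm k H a) {ι : Type*}
    (r : Repr k a ι) :
    ∑ i ∈ r.index, r.right i * antipode k (r.left i) = counit (R := k) a • (1 : H) := by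
  have h1 : LinearMap.mul' k H ((antipode k).lTensor H (TensorProduct.comm k H H (comul a))) =
      ∑ i ∈ r.index, r.right i * antipode k (r.left i) := by
    simp [← r.eq]
  rw [← h1, show TensorProduct.comm k H H (comul (R := k) a) = comul (R := k) a from ha]
  simp [Algebra.algebraMap_eq_smul_one]

theorem sum_right_mul_antipode_of_sqAntipode (hS : ∀ x : H, sqAntipode k H x = x) {a : H}
    {ι : Type*} (r : Repr k a ι) :
    ∑ i ∈ r.index, r.right i * antipode k (r.left i) = counit (R := k) a • (1 : H) := by
  have h := congr(antipode k $(sum_mul_antipode_eq_algebraMap_counit r))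
  simp only [map_sum, antipode_mul_antidistrib] at h
  simp only [← sqAntipode_apply, hS] at h
  rw [h]
  simp [Algebra.algebraMap_eq_smul_one]

/-- The map `a ↦ y₁ f(a y₂)`. -/
def rhitMul (f : H →ₗ[k] k) (y : H) : H →ₗ[k] H :=
  (TensorProduct.rid k H).toLinearMap ∘ₗ f.lTensor H ∘ₗ
    LinearMap.mulRight k (comul (R := k) y) ∘ₗ
      (Algebra.TensorProduct.includeRight : H →ₐ[k] H ⊗[k] H).toLinearMap

theorem rhitMul_apply (f : H →ₗ[k] k) (y a : H) :
    rhitMul f y a = rhit (f ∘ₗ lmul k H a) y := by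
  simp [rhitMul, rhit, ← (ℛ k y).eq, Finset.mul_sum]

theorem rhit_comp_lmul {ι : Type*} (f : H →ₗ[k] k) {a : H} (r : Repr k a ι) :
    rhit (f ∘ₗ lmul k H a) =
      ∑ i ∈ r.index, lmul k H (antipode k (r.left i)) ∘ₗ rhit f ∘ₗ lmul k H (r.right i) := by
  ext y
  have h : toConv (rhit f ∘ₗ LinearMap.mulRight k y) =
      toConv LinearMap.id * toConv (rhitMul f y) := by
    ext c
    rw [(ℛ k c).convMul_apply]
    simp only [rhitMul_apply, rhit_apply _ (ℛ k y)]
    simp only [LinearMap.comp_apply, rhit, LinearMap.mulRight_apply, Bialgebra.comul_mul,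
      ← (ℛ k c).eq, ← (ℛ k y).eq]
    simp only [Finset.sum_mul, Finset.mul_sum]
    simp only [Algebra.TensorProduct.tmul_mul_tmul, map_sum, LinearMap.lTensor_tmul,
      LinearEquiv.coe_coe, TensorProduct.rid_tmul, LinearMap.id_apply,
      LinearMap.mul_apply', mul_smul_comm]
    exact Finset.sum_comm
  have h2 := congrArg (toConv (antipode k (A := H)) * ·) h
  rw [← mul_assoc, LinearMap.antipode_mul_id, one_mul] at h2
  have h3 := congr(($h2).ofConv a)
  rw [r.convMul_apply] at h3
  rw [← rhitMul_apply]
  refine h3.symm.trans ?_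
  simp

theorem isHopfSubalgebra_top : IsHopfSubalgebra k H ⊤ := by
  refine ⟨fun c _ => ?_, fun _ _ => trivial⟩
  rw [← (ℛ k c).eq]
  exact Submodule.sum_mem _ fun i _ =>
    ⟨⟨(ℛ k c).left i, trivial⟩ ⊗ₜ ⟨(ℛ k c).right i, trivial⟩, TensorProduct.map_tmul ..⟩

variable [FiniteDimensional k H]

/-- The element `r` with `f(r) = Tr(y ↦ (P y)₁ f((P y)₂))`. -/
def regularElement (P : Module.End k H) : H :=
  ∑ j, lhit ((Module.finBasis k H).coord j) (P (Module.finBasis k H j))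

theorem apply_regularElement (P : Module.End k H) (f : H →ₗ[k] k) :
    f (regularElement P) = LinearMap.trace k H (rhit f ∘ₗ P) := by
  rw [LinearMap.trace_eq_matrix_trace k (Module.finBasis k H)]
  simp only [regularElement, map_sum, apply_lhit, Matrix.trace, Matrix.diag_apply,
    LinearMap.toMatrix_apply, LinearMap.comp_apply]
  refine Finset.sum_congr rfl fun j _ => ?_
  rw [← apply_rhit]
  rfl

theorem trace_mul_comm_of_isProj {V : Type*} [AddCommGroup V] [Module k V]
    {A : Submodule k V} {P : Module.End k V} (hP : LinearMap.IsProj A P) {X Y : Module.End k V}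
    (hX : ∀ v ∈ A, X v ∈ A) (hY : ∀ v ∈ A, Y v ∈ A) :
    LinearMap.trace k V (X ∘ₗ Y ∘ₗ P) = LinearMap.trace k V (Y ∘ₗ X ∘ₗ P) := by
  have h1 : X ∘ₗ Y ∘ₗ P = (X ∘ₗ P) ∘ₗ (Y ∘ₗ P) := by
    ext v
    simp [hP.map_id _ (hY _ (hP.map_mem v))]
  have h2 : Y ∘ₗ X ∘ₗ P = (Y ∘ₗ P) ∘ₗ (X ∘ₗ P) := by
    ext v
    simp [hP.map_id _ (hX _ (hP.map_mem v))]
  rw [h1, h2]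
  exact LinearMap.trace_mul_comm k (X ∘ₗ P) (Y ∘ₗ P)

theorem mul_regularElement {A : Subalgebra k H} (hA : IsHopfSubalgebra k H A)
    {P : Module.End k H} (hP : LinearMap.IsProj A.toSubmodule P) {a : H} (ha : a ∈ A)
    (ha' : ∀ r : Repr k a (A.toSubmodule × A.toSubmodule),
      ∑ i ∈ r.index, r.right i * antipode k (r.left i) = counit (R := k) a • (1 : H)) :
    a * regularElement P = counit (R := k) a • regularElement P := by
  refine ext_functional (k := k) fun f => ?_
  obtain ⟨r, hr⟩ := exists_repr_mem hA.1 ha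
  rw [show f (a * regularElement P) = (f ∘ₗ lmul k H a) (regularElement P) from rfl,
    apply_regularElement, rhit_comp_lmul f r, map_smul, apply_regularElement]
  have h1 : ∀ i, LinearMap.trace k H
      ((lmul k H (antipode k (r.left i)) ∘ₗ rhit f ∘ₗ lmul k H (r.right i)) ∘ₗ P) =
      LinearMap.trace k H
        (rhit f ∘ₗ lmul k H (r.right i * antipode k (r.left i)) ∘ₗ P) := by
    intro i
    rw [LinearMap.comp_assoc, trace_mul_comm_of_isProj hP
      (X := lmul k H (antipode k (r.left i))) (Y := rhit f ∘ₗ lmul k H (r.right i))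
      (fun v hv => A.mul_mem (hA.2 _ (hr i).1) hv)
      (fun v hv => rhit_mem hA.1 f (A.mul_mem (hr i).2 hv))]
    congr 1
    ext v
    simp [mul_assoc]
  have h3 : (∑ i ∈ r.index, lmul k H (antipode k (r.left i)) ∘ₗ rhit f ∘ₗ
      lmul k H (r.right i)) ∘ₗ P = ∑ i ∈ r.index, (lmul k H (antipode k (r.left i)) ∘ₗ rhit f ∘ₗ
      lmul k H (r.right i)) ∘ₗ P := by
    ext; simp
  rw [h3, map_sum]
  simp only [h1]
  rw [← map_sum]
  have h4 : ∑ i ∈ r.index, rhit f ∘ₗ lmul k H (r.right i * antipode k (r.left i)) ∘ₗ P =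
      counit (R := k) a • (rhit f ∘ₗ P) := by
    ext v
    simp only [LinearMap.sum_apply, LinearMap.comp_apply, LinearMap.mul_apply', ← map_sum,
      ← Finset.sum_mul, ha' r]
    simp
  rw [h4, map_smul]

theorem isCocomm_regularElement {A : Submodule k H} (hA : IsSubcoalgebra k H A)
    {P : Module.End k H} (hP : LinearMap.IsProj A P) : IsCocomm k H (regularElement P) := by
  rw [isCocomm_iff]
  intro f g
  rw [apply_regularElement, apply_regularElement, rhit_conv, rhit_conv, LinearMap.comp_assoc,
    LinearMap.comp_assoc]
  exact trace_mul_comm_of_isProj hP (fun v hv => rhit_mem hA _ hv) (fun v hv => rhit_mem hA _ hv)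

theorem regularElement_mem {A : Submodule k H} (hA : IsSubcoalgebra k H A)
    {P : Module.End k H} (hP : LinearMap.IsProj A P) : regularElement P ∈ A :=
  A.sum_mem fun _ _ => lhit_mem hA _ (hP.map_mem _)

theorem counit_regularElement {A : Submodule k H}
    {P : Module.End k H} (hP : LinearMap.IsProj A P) :
    counit (R := k) (regularElement P) = Module.finrank k A := by
  rw [apply_regularElement, rhit_counit, LinearMap.id_comp, hP.trace]

end Regular

section AntipodeSquared

section

variable {k : Type} [Field k] [CharZero k]

theorem isIdempotentElem_half_add {R : Type*} [Ring R] [Algebra k R] {T : R}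
    (hT : T * T * T = T) : IsIdempotentElem ((2 : k)⁻¹ • (T * T + T)) := by
  have h : (T * T + T) * (T * T + T) = (2 : k) • (T * T + T) := by
    rw [show (T * T + T) * (T * T + T) = (T * T * T) * T + (T * T * T) + T * T * T + T * T by
      noncomm_ring, hT, two_smul]
    abel
  rw [IsIdempotentElem, smul_mul_smul_comm, h, smul_smul]
  congr 1
  field_simp

theorem isIdempotentElem_half_sub {R : Type*} [Ring R] [Algebra k R] {T : R}
    (hT : T * T * T = T) : IsIdempotentElem ((2 : k)⁻¹ • (T * T - T)) := by
  have h := isIdempotentElem_half_add (k := k) (T := -T) (by simp [hT])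
  rwa [neg_mul_neg, ← sub_eq_add_neg] at h

end

variable {k : Type} [Field k] [CharZero k] [IsAlgClosed k] {H : Type} [Ring H]
  [HopfAlgebra k H] [FiniteDimensional k H] [IsSemisimpleRing H]

theorem sqAntipode_eq (x : H) : sqAntipode k H x = x := by
  set σ := sqAntipode k H with hσ
  set n := Module.finrank k H with hn
  have hnt : Nontrivial H := ⟨0, 1, fun h => by simpa using congr(counit (R := k) $h)⟩
  have hn0 : (n : k) ≠ 0 := by exact_mod_cast (Module.finrank_pos (R := k) (M := H)).ne'
  have hσσ : ∀ x, σ (σ x) = x := sqAntipode_sqAntipode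
  have hproj : LinearMap.IsProj (⊤ : Subalgebra k H).toSubmodule (LinearMap.id : Module.End k H) :=
    ⟨fun _ => trivial, fun _ _ => rfl⟩
  set r : H := regularElement (k := k) LinearMap.id with hr
  have hrc : IsCocomm k H r := isCocomm_regularElement isHopfSubalgebra_top.1 hproj
  have hεr : counit (R := k) r = n := by
    rw [hr, counit_regularElement hproj]
    rw [Algebra.top_toSubmodule, finrank_top]
  have hrr : r * r = (n : k) • r := by
    rw [← hεr]
    exact mul_regularElement isHopfSubalgebra_top hproj trivial
      fun R => IsCocomm.sum_right_mul_antipode hrc R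
  have hσr : σ r = r := by
    refine ext_functional (k := k) fun f => ?_
    rw [show f (σ r) = (f ∘ₗ σ) r from rfl, hr, apply_regularElement, apply_regularElement,
      LinearMap.comp_id, LinearMap.comp_id]
    have h1 : rhit (f ∘ₗ σ) = σ ∘ₗ (rhit f ∘ₗ σ) := by
      ext y
      rw [LinearMap.comp_apply, LinearMap.comp_apply, hσ, rhit_sqAntipode, ← hσ, hσσ]
    rw [h1, LinearMap.trace_comp_comm', LinearMap.comp_assoc,
      show σ ∘ₗ σ = LinearMap.id from LinearMap.ext hσσ, LinearMap.comp_id]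
  have hlam : traceIntegral k H r = LinearMap.trace k H σ := by
    rw [hr, apply_regularElement, LinearMap.comp_id]
    have h1 : rhit (traceIntegral k H) =
        LinearMap.toSpanSingleton k H 1 ∘ₗ traceIntegral k H := by
      ext y
      simp [rhit_traceIntegral]
    have h2 : traceIntegral k H ∘ₗ LinearMap.toSpanSingleton k H 1 =
        traceIntegral k H 1 • LinearMap.id := by
      ext
      simp
    rw [h1, LinearMap.trace_comp_comm', h2, map_smul, LinearMap.trace_id, Module.finrank_self,
      traceIntegral_apply, Nat.cast_one, smul_eq_mul, mul_one]
    congr 1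
    ext y
    simp [hσ]
  have htr0 : LinearMap.trace k H σ ≠ 0 := by
    have : traceIntegral k H 1 = LinearMap.trace k H σ := by
      rw [traceIntegral_apply]
      congr 1
      ext y
      simp [hσ]
    rw [← this]
    exact traceIntegral_one_ne_zero
  let Q : Module.End k H := (n : k)⁻¹ • (lmul k H r * σ)
  have hσmul : ∀ a b, σ (a * b) = σ a * σ b := sqAntipode_mul
  have hQ2 : Q * Q = (n : k)⁻¹ • lmul k H r := by
    ext y
    simp only [Q, LinearMap.smul_apply, Module.End.mul_apply, LinearMap.mul_apply',
      hσmul, hσr, hσσ, mul_smul_comm]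
    rw [← mul_assoc, hrr, smul_mul_assoc, smul_smul, smul_smul]
    congr 1
    field_simp
  have hQ3 : Q * Q * Q = Q := by
    rw [hQ2]
    ext y
    simp only [Q, LinearMap.smul_apply, Module.End.mul_apply, LinearMap.mul_apply',
      mul_smul_comm]
    rw [← mul_assoc, hrr, smul_mul_assoc, smul_smul, smul_smul]
    congr 1
    field_simp
  have hQtr : (n : k) * LinearMap.trace k H Q = LinearMap.trace k H σ := by
    rw [map_smul, smul_eq_mul, ← mul_assoc, mul_inv_cancel₀ hn0, one_mul, ← hlam]
    rfl
  have h20 : (2 : k) ≠ 0 := two_ne_zero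
  obtain ⟨p, -, hp⟩ := exists_trace_eq_natCast (isIdempotentElem_half_add (k := k) (T := Q) hQ3)
  obtain ⟨q, -, hq⟩ := exists_trace_eq_natCast (isIdempotentElem_half_sub (k := k) (T := Q) hQ3)
  obtain ⟨t, htn, ht⟩ := exists_trace_eq_natCast (isIdempotentElem_half_add (k := k) (T := (σ : Module.End k H)) (by ext y; simp [hσσ]))
  have hσ2 : σ * σ = 1 := by ext y; simp [hσσ]
  have hpq : LinearMap.trace k H Q = p - q := by
    rw [← hp, ← hq]
    simp only [map_smul, map_add, map_sub, smul_eq_mul]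
    field_simp
    ring
  have htt : LinearMap.trace k H σ = 2 * t - n := by
    rw [← ht, hσ2, map_smul, map_add, LinearMap.trace_one]
    rw [smul_eq_mul, ← mul_assoc, mul_inv_cancel₀ h20]
    ring
  have hint : (n : ℤ) * (p - q) = 2 * t - n := by
    have : (n : k) * (p - q) = 2 * t - n := by rw [← hpq, hQtr, htt]
    exact_mod_cast this
  have hint0 : (2 * t - n : ℤ) ≠ 0 := by
    intro h
    apply htr0
    rw [htt]
    exact_mod_cast congr(((($h : ℤ) : k)))
  have hnpos : 0 < n := Module.finrank_pos
  have hcases : t = 0 ∨ t = n := by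
    have hdvd : (n : ℤ) ∣ 2 * t - n := ⟨_, hint.symm⟩
    have := Int.le_of_dvd (b := |(2 * t - n : ℤ)|) (abs_pos.2 hint0) ((dvd_abs _ _).2 hdvd)
    rcases le_abs.1 this with h | h <;> omega
  rcases hcases with rfl | rfl
  · have h0 := (LinearMap.IsIdempotentElem.trace_eq_zero_iff (isIdempotentElem_half_add (k := k) (T := (σ : Module.End k H)) (by ext y; simp [hσσ]))).1
      (by rw [ht]; simp)
    have h1 := congr($h0 1)
    rw [hσ2] at h1
    simp only [LinearMap.smul_apply, LinearMap.add_apply, Module.End.one_apply,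
      show σ 1 = 1 from sqAntipode_one, LinearMap.zero_apply, ← two_smul k (1 : H), smul_smul,
      inv_mul_cancel₀ h20, one_smul] at h1
    exact absurd h1 one_ne_zero
  · have h0 := (LinearMap.IsIdempotentElem.trace_eq_zero_iff
      (isIdempotentElem_half_sub (k := k) (T := (σ : Module.End k H)) (by ext y; simp [hσσ]))).1 (by
        rw [hσ2, map_smul, map_sub, LinearMap.trace_one, htt]
        simp only [smul_eq_mul, ← hn]
        ring)
    have h1 := congr($h0 x)
    rw [hσ2] at h1
    have h2 : x - σ x = 0 := by simpa using h1
    exact (eq_of_sub_eq_zero h2).symm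

theorem integral_eq_regularElement {A : Subalgebra k H} (hA : IsHopfSubalgebra k H A) {Λ : H}
    (hΛ : IsIdempotentIntegral k H A Λ) {P : Module.End k H}
    (hP : LinearMap.IsProj A.toSubmodule P) :
    regularElement P = (Module.finrank k A.toSubmodule : k) • Λ := by
  have h1 := mul_regularElement hA hP hΛ.1
    fun r => sum_right_mul_antipode_of_sqAntipode sqAntipode_eq r
  rw [hΛ.2.1, one_smul, (hΛ.2.2 _ (regularElement_mem hA.1 hP)).2, counit_regularElement hP] at h1
  exact h1.symm

end AntipodeSquared

section Dual

variable {k : Type} [Field k] {H : Type} [Ring H] [HopfAlgebra k H]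

theorem mem_charRing_mul {x y : H} (hx : x ∈ charRing k H) (hy : y ∈ charRing k H) :
    x * y ∈ charRing k H := by
  rw [mem_charRing_iff] at *
  have h : ∀ s t : H ⊗[k] H, TensorProduct.comm k H H (s * t) =
      TensorProduct.comm k H H s * TensorProduct.comm k H H t :=
    map_mul (Algebra.TensorProduct.comm k H H)
  unfold MackeyPaper.IsCocomm at *
  rw [Bialgebra.comul_mul, h, hx, hy]

theorem rhit_pow (f : ConvDual k H) (m : ℕ) :
    rhit (f ^ m).ofConv = (rhit f.ofConv : Module.End k H) ^ m := by
  induction m with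
  | zero =>
    rw [pow_zero, pow_zero]
    exact rhit_counit
  | succ m ih => rw [pow_succ, rhit_conv, ih, pow_succ]; rfl

instance finiteDimensional_convDual [FiniteDimensional k H] : FiniteDimensional k (ConvDual k H) :=
  Module.Finite.equiv (WithConv.linearEquiv k (H →ₗ[k] k)).symm

theorem exists_isProj (A : Submodule k H) : ∃ P : Module.End k H, LinearMap.IsProj A P := by
  obtain ⟨g, hg⟩ := A.subtype.exists_leftInverse_of_injective A.ker_subtype
  exact ⟨A.subtype ∘ₗ g, fun x => (g x).2, fun x hx => congr(($hg ⟨x, hx⟩ : H))⟩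

theorem finrank_ne_zero_of_subalgebra [FiniteDimensional k H] (A : Subalgebra k H) :
    Module.finrank k A.toSubmodule ≠ 0 := by
  have hnt : Nontrivial H := ⟨0, 1, fun h => by simpa using congr(counit (R := k) $h)⟩
  have : Nontrivial A.toSubmodule := ⟨⟨0, A.zero_mem⟩, ⟨1, A.one_mem⟩, by simp⟩
  exact Module.finrank_pos.ne'

end Dual

section Semisimple

variable {k : Type} [Field k] [CharZero k] [IsAlgClosed k] {H : Type} [Ring H]
  [HopfAlgebra k H] [FiniteDimensional k H] [IsSemisimpleRing H]

theorem isSemisimpleRing_convDual : IsSemisimpleRing (ConvDual k H) := by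
  have : IsArtinianRing (ConvDual k H) := IsArtinianRing.of_finite k _
  rw [IsArtinianRing.isSemisimpleRing_iff_jacobson, eq_bot_iff]
  intro g hg
  obtain ⟨Λ, hΛ⟩ := exists_isNormalizedIntegral k H
  have hproj : LinearMap.IsProj (⊤ : Subalgebra k H).toSubmodule (LinearMap.id : Module.End k H) :=
    ⟨fun _ => trivial, fun _ _ => rfl⟩
  have hr := integral_eq_regularElement (k := k) (H := H) isHopfSubalgebra_top (Λ := Λ)
    ⟨trivial, hΛ.counit_eq_one, fun x _ => ⟨hΛ.eq_mul x, hΛ.mul_eq x⟩⟩ hproj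
  have hn0 : (Module.finrank k (⊤ : Subalgebra k H).toSubmodule : k) ≠ 0 :=
    Nat.cast_ne_zero.2 (finrank_ne_zero_of_subalgebra ⊤)
  have hnil : ∀ h ∈ Ring.jacobson (ConvDual k H), h.ofConv Λ = 0 := by
    intro h hh
    obtain ⟨m, hm⟩ := IsSemiprimaryRing.isNilpotent (R := ConvDual k H)
    have h0 : h ^ m = 0 := by
      have := Ideal.pow_mem_pow hh m
      rw [hm] at this
      simpa using this
    have h1 : IsNilpotent (rhit h.ofConv : Module.End k H) := by
      refine ⟨m, ?_⟩
      rw [← rhit_pow, h0]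
      ext y
      simp [rhit]
    have h2 := LinearMap.isNilpotent_trace_of_isNilpotent h1
    have h3 := apply_regularElement (LinearMap.id : Module.End k H) h.ofConv
    rw [LinearMap.comp_id, h2.eq_zero, hr, map_smul, smul_eq_mul] at h3
    exact (mul_eq_zero.1 h3).resolve_left hn0
  have hg0 : ∀ y, g.ofConv y = 0 := by
    intro y
    have h1 := antipode_rhit_traceIntegral hΛ (antipode k y)
    rw [← (antipode_bijective hΛ).1 h1, apply_rhit]
    exact hnil _ (Ideal.mul_mem_right _ _ hg)
  rw [Submodule.mem_bot]
  ext y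
  exact hg0 y

theorem isCocomm_integral {A : Subalgebra k H} (hA : IsHopfSubalgebra k H A) {Λ : H}
    (hΛ : IsIdempotentIntegral k H A Λ) : IsCocomm k H Λ := by
  obtain ⟨P, hP⟩ := exists_isProj A.toSubmodule
  have h := isCocomm_regularElement hA.1 hP
  rw [integral_eq_regularElement hA hΛ hP, ← mem_charRing_iff] at h
  rw [← mem_charRing_iff]
  exact ((charRing k H).smul_mem_iff
    (Nat.cast_ne_zero.2 (finrank_ne_zero_of_subalgebra A))).1 h

theorem exists_apply_integral_eq_natCast {A : Subalgebra k H} (hA : IsHopfSubalgebra k H A) {Λ : H}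
    (hΛ : IsIdempotentIntegral k H A Λ) {e : ConvDual k H} (he : IsIdempotentElem e) :
    ∃ m : ℕ, (Module.finrank k A.toSubmodule : k) * e.ofConv Λ = m := by
  obtain ⟨P, hP⟩ := exists_isProj A.toSubmodule
  have hidem : IsIdempotentElem (rhit e.ofConv * P : Module.End k H) := by
    ext y
    have h1 : rhit e.ofConv (rhit e.ofConv (P y)) = rhit e.ofConv (P y) := by
      rw [← LinearMap.comp_apply, ← rhit_conv, he.eq]
    simp only [Module.End.mul_apply]
    rw [hP.map_id _ (rhit_mem hA.1 _ (hP.map_mem y)), h1]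
  obtain ⟨m, -, hm⟩ := exists_trace_eq_natCast hidem
  refine ⟨m, ?_⟩
  rw [← hm, ← smul_eq_mul, ← map_smul, ← integral_eq_regularElement hA hΛ hP, apply_regularElement]
  rfl

end Semisimple

section Corep

variable {k : Type} [Field k] {H : Type} [Ring H] [HopfAlgebra k H]

/-- A comatrix: a square matrix over `H` with `Δ(M_ab) = ∑ M_ac ⊗ M_cb`. -/
def IsComatrix (k : Type) [Field k] {H : Type} [Ring H] [HopfAlgebra k H] {m : Type} [Fintype m]
    (M : Matrix m m H) : Prop :=
  ∀ a b, comul (R := k) (M a b) = ∑ c, M a c ⊗ₜ[k] M c b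

variable {m n : Type} [Fintype m] [Fintype n]

theorem IsComatrix.conv_apply {M : Matrix m m H} (hM : IsComatrix k M) (f g : ConvDual k H)
    (a b : m) : (f * g).ofConv (M a b) = ∑ c, f.ofConv (M a c) * g.ofConv (M c b) := by
  rw [LinearMap.convMul_apply, hM]
  simp

theorem isComatrix_iff_conv {M : Matrix m m H} : IsComatrix k M ↔ ∀ (f g : ConvDual k H) (a b : m),
    (f * g).ofConv (M a b) = ∑ c, f.ofConv (M a c) * g.ofConv (M c b) := by
  refine ⟨fun h => h.conv_apply, fun h a b => tensor_ext fun f g => ?_⟩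
  rw [mul'_map_comul, h]
  simp

theorem IsComatrix.kronecker {M : Matrix m m H} {N : Matrix n n H} (hM : IsComatrix k M)
    (hN : IsComatrix k N) :
    IsComatrix k (Matrix.kroneckerMap (· * ·) M N) := by
  rintro ⟨a, b⟩ ⟨a', b'⟩
  simp only [Matrix.kroneckerMap_apply, Bialgebra.comul_mul, hM a a', hN b b', Finset.sum_mul_sum,
    Algebra.TensorProduct.tmul_mul_tmul, Fintype.sum_prod_type]

theorem trace_kronecker_mul (M : Matrix m m H) (N : Matrix n n H) :
    (Matrix.kroneckerMap (· * ·) M N).trace = M.trace * N.trace := by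
  simp [Matrix.trace, Finset.sum_mul_sum, Fintype.sum_prod_type]

theorem isComatrix_one : IsComatrix k (Matrix.of fun _ _ : Unit => (1 : H)) := by
  intro a b
  simp [Algebra.TensorProduct.one_def]

theorem IsComatrix.isIdempotentElem [DecidableEq m] {M : Matrix m m H} (hM : IsComatrix k M)
    {e : ConvDual k H} (he : IsIdempotentElem e) : IsIdempotentElem (M.map e.ofConv) := by
  ext a b
  rw [Matrix.mul_apply]
  simp only [Matrix.map_apply]
  rw [← hM.conv_apply, he.eq]

theorem IsComatrix.exists_apply_trace_eq {M : Matrix m m H} (hM : IsComatrix k M)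
    {e : ConvDual k H} (he : IsIdempotentElem e) : ∃ t : ℕ, e.ofConv M.trace = t := by
  classical
  obtain ⟨t, ht⟩ := exists_matrix_trace_eq_natCast (hM.isIdempotentElem he)
  exact ⟨t, by rw [← ht, Matrix.trace, map_sum]; rfl⟩

theorem IsComatrix.apply_eq_zero [CharZero k] {M : Matrix m m H} (hM : IsComatrix k M)
    {e : ConvDual k H} (he : IsIdempotentElem e) (h0 : e.ofConv M.trace = 0) (a b : m) :
    e.ofConv (M a b) = 0 := by
  classical
  have h1 := hM.isIdempotentElem he
  have h2 : IsIdempotentElem (Matrix.toLin' (M.map e.ofConv)) := by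
    rw [IsIdempotentElem, Module.End.mul_eq_comp, ← Matrix.toLin'_mul, h1.eq]
  have h3 : LinearMap.trace k (m → k) (Matrix.toLin' (M.map e.ofConv)) = 0 := by
    rw [Matrix.trace_toLin'_eq, ← h0, Matrix.trace, Matrix.trace, map_sum]
    rfl
  have h4 := (LinearMap.IsIdempotentElem.trace_eq_zero_iff h2).1 h3
  have h5 : M.map e.ofConv = 0 := by simpa using h4
  exact congr($h5 a b)

/-- `x` is the character of a comatrix whose entries span a space containing `W`. -/
def IsComatrixTrace (k : Type) [Field k] {H : Type} [Ring H] [HopfAlgebra k H]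
    (W : Submodule k H) (x : H) : Prop :=
  ∃ (m : Type) (_ : Fintype m) (M : Matrix m m H), IsComatrix k M ∧ M.trace = x ∧
    W ≤ Submodule.span k (Set.range fun i : m × m => M i.1 i.2)

theorem IsComatrixTrace.mul {W W' : Submodule k H} {x x' : H} (h : IsComatrixTrace k W x)
    (h' : IsComatrixTrace k W' x') : IsComatrixTrace k (W * W') (x * x') := by
  obtain ⟨m, _, M, hM, rfl, hW⟩ := h
  obtain ⟨n, _, N, hN, rfl, hW'⟩ := h'
  refine ⟨m × n, inferInstance, _, hM.kronecker hN, trace_kronecker_mul M N, ?_⟩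
  refine (mul_le_mul' hW hW').trans ?_
  rw [Submodule.span_mul_span]
  refine Submodule.span_mono ?_
  rintro _ ⟨_, ⟨⟨a, b⟩, rfl⟩, _, ⟨⟨c, d⟩, rfl⟩, rfl⟩
  exact ⟨((a, c), (b, d)), rfl⟩

theorem IsComatrixTrace.pow {W : Submodule k H} {x : H} (h : IsComatrixTrace k W x) (j : ℕ) :
    IsComatrixTrace k (W ^ j) (x ^ j) := by
  induction j with
  | zero =>
    refine ⟨Unit, inferInstance, _, isComatrix_one, by simp [Matrix.trace], ?_⟩
    rw [pow_zero, Submodule.one_eq_span]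
    exact Submodule.span_mono fun y hy => ⟨((), ()), hy.symm⟩
  | succ j ih =>
    rw [pow_succ, pow_succ]
    exact ih.mul h

theorem IsComatrixTrace.add {W W' : Submodule k H} {x x' : H} (h : IsComatrixTrace k W x)
    (h' : IsComatrixTrace k W' x') : IsComatrixTrace k (W ⊔ W') (x + x') := by
  obtain ⟨m, _, M, hM, rfl, hW⟩ := h
  obtain ⟨n, _, N, hN, rfl, hW'⟩ := h'
  refine ⟨m ⊕ n, inferInstance, Matrix.fromBlocks M 0 0 N, ?_, by simp [Matrix.trace], ?_⟩
  · unfold IsComatrix at hM hN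
    rintro (a | a) (b | b) <;> simp [hM, hN]
  · refine sup_le (hW.trans (Submodule.span_mono ?_)) (hW'.trans (Submodule.span_mono ?_))
    · rintro _ ⟨⟨a, b⟩, rfl⟩
      exact ⟨(.inl a, .inl b), rfl⟩
    · rintro _ ⟨⟨a, b⟩, rfl⟩
      exact ⟨(.inr a, .inr b), rfl⟩

theorem isComatrixTrace_zero : IsComatrixTrace k (⊥ : Submodule k H) 0 :=
  ⟨Empty, inferInstance, 0, fun a => a.elim, by simp, bot_le⟩

theorem IsComatrixTrace.sum {ι : Type*} (s : Finset ι) {W : ι → Submodule k H} {x : ι → H}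
    (h : ∀ i ∈ s, IsComatrixTrace k (W i) (x i)) :
    IsComatrixTrace k (s.sup W) (∑ i ∈ s, x i) := by
  classical
  induction s using Finset.induction_on with
  | empty => simpa using isComatrixTrace_zero
  | insert i s hi ih =>
    rw [Finset.sup_insert, Finset.sum_insert hi]
    exact (h i (Finset.mem_insert_self ..)).add (ih fun j hj => h j (Finset.mem_insert_of_mem hj))

theorem IsComatrixTrace.exists_apply_eq {W : Submodule k H} {x : H} (h : IsComatrixTrace k W x)
    {e : ConvDual k H} (he : IsIdempotentElem e) : ∃ t : ℕ, e.ofConv x = t := by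
  obtain ⟨m, _, M, hM, rfl, hW⟩ := h
  exact hM.exists_apply_trace_eq he

theorem IsComatrixTrace.apply_eq_zero [CharZero k] {W : Submodule k H} {x : H}
    (h : IsComatrixTrace k W x) {e : ConvDual k H} (he : IsIdempotentElem e) (h0 : e.ofConv x = 0)
    {w : H} (hw : w ∈ W) : e.ofConv w = 0 := by
  obtain ⟨m, _, M, hM, rfl, hW⟩ := h
  have : Submodule.span k (Set.range fun i : m × m => M i.1 i.2) ≤ LinearMap.ker e.ofConv := by
    rw [Submodule.span_le]
    rintro _ ⟨i, rfl⟩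
    exact hM.apply_eq_zero he h0 _ _
  exact this (hW hw)

end Corep

section Generated

variable {k : Type} [Field k] {H : Type} [Ring H] [HopfAlgebra k H]

theorem exists_mem_pow_of_mem_closure {C : Submodule k H} {x : H}
    (hx : x ∈ Submonoid.closure (C : Set H)) : ∃ j : ℕ, x ∈ C ^ j := by
  induction hx using Submonoid.closure_induction with
  | mem x hx => exact ⟨1, by simpa using hx⟩
  | one => exact ⟨0, by rw [pow_zero]; exact Submodule.one_le.1 le_rfl⟩
  | mul x y _ _ hx hy =>
    obtain ⟨i, hi⟩ := hx
    obtain ⟨j, hj⟩ := hy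
    exact ⟨i + j, by rw [pow_add]; exact Submodule.mul_mem_mul hi hj⟩

theorem apply_eq_zero_of_mem_adjoin {C : Submodule k H} {e : H →ₗ[k] k}
    (he : ∀ j : ℕ, ∀ x ∈ C ^ j, e x = 0) {x : H} (hx : x ∈ Algebra.adjoin k (C : Set H)) :
    e x = 0 := by
  rw [← Subalgebra.mem_toSubmodule, Algebra.adjoin_eq_span] at hx
  have : Submodule.span k (Submonoid.closure (C : Set H) : Set H) ≤ LinearMap.ker e := by
    rw [Submodule.span_le]
    intro y hy
    obtain ⟨j, hj⟩ := exists_mem_pow_of_mem_closure hy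
    exact he j y hj
  exact this hx

theorem isSubcoalgebra_adjoin {C : Submodule k H} (hC : IsSubcoalgebra k H C) :
    IsSubcoalgebra k H (Algebra.adjoin k (C : Set H)).toSubmodule := by
  set A := Algebra.adjoin k (C : Set H) with hA
  have hCA : C ≤ A.toSubmodule := Algebra.subset_adjoin
  let φ := Algebra.TensorProduct.map A.val A.val
  have h1 : A ≤ φ.range.comap (Bialgebra.comulAlgHom k H) := by
    refine Algebra.adjoin_le fun c hc => ?_
    obtain ⟨r, hr⟩ := exists_repr_mem hC hc
    show comul (R := k) c ∈ φ.range
    rw [← r.eq]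
    exact Subalgebra.sum_mem _ fun i _ =>
      ⟨(⟨_, hCA (hr i).1⟩ : A) ⊗ₜ (⟨_, hCA (hr i).2⟩ : A), Algebra.TensorProduct.map_tmul ..⟩
  intro c hc
  obtain ⟨t, ht⟩ := h1 hc
  exact ⟨t, ht⟩

/-- The linear endomorphisms of `H` which preserve a given subalgebra and subcoalgebra form
a subalgebra of the convolution algebra. -/
def convStabilizer {A : Subalgebra k H} (hA : IsSubcoalgebra k H A.toSubmodule) :
    Subalgebra k (WithConv (H →ₗ[k] H)) where
  carrier := {f | ∀ x ∈ A, f.ofConv x ∈ A}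
  mul_mem' := by
    intro f g hf hg x hx
    obtain ⟨r, hr⟩ := exists_repr_mem hA hx
    rw [r.convMul_apply]
    exact A.sum_mem fun i _ => A.mul_mem (hf _ (hr i).1) (hg _ (hr i).2)
  add_mem' := fun hf hg x hx => A.add_mem (hf x hx) (hg x hx)
  algebraMap_mem' := by
    intro c x _
    rw [Algebra.algebraMap_eq_smul_one, ofConv_smul, LinearMap.smul_apply, LinearMap.convOne_apply]
    exact A.smul_mem (A.algebraMap_mem _) _

theorem _root_.Subalgebra.mem_of_mul_eq_one {R : Type*} [Ring R] [Algebra k R]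
    [FiniteDimensional k R] (T : Subalgebra k R) {a b : R} (ha : a ∈ T) (hba : b * a = 1) :
    b ∈ T := by
  let L : T →ₗ[k] T := LinearMap.mulLeft k (⟨a, ha⟩ : T)
  have hinj : Function.Injective L := by
    intro s t hst
    have h1 : a * (s : R) = a * t := congr(($hst : R))
    have h2 := congr(b * $h1)
    rw [← mul_assoc, ← mul_assoc, hba, one_mul, one_mul] at h2
    exact Subtype.ext h2
  obtain ⟨t, ht⟩ := LinearMap.surjective_of_injective hinj 1
  have h1 : a * (t : R) = 1 := congr(($ht : R))
  have h2 : b = t := by rw [← mul_one b, ← h1, ← mul_assoc, hba, one_mul]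
  exact h2 ▸ t.2

theorem isHopfSubalgebra_of_isSubcoalgebra [FiniteDimensional k H] {A : Subalgebra k H}
    (hA : IsSubcoalgebra k H A.toSubmodule) : IsHopfSubalgebra k H A := by
  refine ⟨hA, ?_⟩
  have : FiniteDimensional k (WithConv (H →ₗ[k] H)) :=
    Module.Finite.equiv (WithConv.linearEquiv k (H →ₗ[k] H)).symm
  exact (convStabilizer hA).mem_of_mul_eq_one (a := toConv LinearMap.id) (fun x hx => hx)
    LinearMap.antipode_mul_id

end Generated

section Coefficients

variable {k : Type} [Field k] {H : Type} [Ring H] [HopfAlgebra k H]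
  {n : ℕ} {d : Fin n → ℕ} (φ : ConvDual k H ≃ₐ[k] ∀ l, Matrix (Fin (d l)) (Fin (d l)) k)

/-- The functionals dual to the matrix coefficients. -/
def coeffDual (l : Fin n) (a b : Fin (d l)) : ConvDual k H := φ.symm (blockUnit k l a b)

theorem coeffDual_mul_mul (l : Fin n) (a a' b b' : Fin (d l)) (f : ConvDual k H) :
    coeffDual φ l a a' * f * coeffDual φ l b' b = φ f l a' b' • coeffDual φ l a b := by
  apply φ.injective
  simp only [coeffDual, map_mul, map_smul, AlgEquiv.apply_symm_apply]
  funext l'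
  by_cases h : l' = l
  · subst h
    simp [Matrix.single_mul_mul_single]
  · simp [h]

theorem coeffDual_mul (l : Fin n) (a b b' c : Fin (d l)) :
    coeffDual φ l a b * coeffDual φ l b' c = if b = b' then coeffDual φ l a c else 0 := by
  have h := coeffDual_mul_mul φ l a b c b' 1
  rw [mul_one, map_one, Pi.one_apply, Matrix.one_apply] at h
  simpa using h

/-- A primitive idempotent of `H^*` dual to an irreducible character. -/
def irrIdem [∀ l, NeZero (d l)] (l : Fin n) : ConvDual k H := coeffDual φ l 0 0

theorem isIdempotentElem_irrIdem [∀ l, NeZero (d l)] (l : Fin n) : IsIdempotentElem (irrIdem φ l) := by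
  rw [IsIdempotentElem, irrIdem, coeffDual_mul, if_pos rfl]

theorem coeffDual_of_isCocomm [∀ l, NeZero (d l)] {x : H} (hx : IsCocomm k H x)
    (l : Fin n) (a b : Fin (d l)) :
    (coeffDual φ l a b).ofConv x = if a = b then (irrIdem φ l).ofConv x else 0 := by
  have h1 := isCocomm_iff.1 hx (coeffDual φ l a 0) (coeffDual φ l 0 b)
  rw [coeffDual_mul, coeffDual_mul, if_pos rfl] at h1
  rw [h1]
  by_cases h : a = b
  · rw [if_pos h, if_pos h.symm]
    rfl
  · rw [if_neg h, if_neg (Ne.symm h)]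
    rfl

variable [FiniteDimensional k H]

/-- The matrix coefficients of the irreducible representations of `H^*`, as elements of `H`. -/
def coeff (l : Fin n) : Matrix (Fin (d l)) (Fin (d l)) H := fun a b =>
  (Module.evalEquiv k H).symm
    (LinearMap.proj b ∘ₗ LinearMap.proj a ∘ₗ LinearMap.proj l ∘ₗ φ.toLinearMap ∘ₗ
      (WithConv.linearEquiv k (H →ₗ[k] k)).symm.toLinearMap)

/-- The span of the matrix coefficients of an irreducible representation. -/
def coeffSpan (l : Fin n) : Submodule k H :=
  Submodule.span k (Set.range fun i : Fin (d l) × Fin (d l) => coeff φ l i.1 i.2)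

/-- The irreducible characters. -/
def irrChar (l : Fin n) : H := (coeff φ l).trace

theorem apply_coeff (f : ConvDual k H) (l : Fin n) (a b : Fin (d l)) :
    f.ofConv (coeff φ l a b) = φ f l a b := by
  have h := Module.apply_evalEquiv_symm_apply (R := k) (M := H) f.ofConv
    (LinearMap.proj b ∘ₗ LinearMap.proj a ∘ₗ LinearMap.proj l ∘ₗ φ.toLinearMap ∘ₗ
      (WithConv.linearEquiv k (H →ₗ[k] k)).symm.toLinearMap)
  exact h

theorem isComatrix_coeff (l : Fin n) : IsComatrix k (coeff φ l) := by
  rw [isComatrix_iff_conv]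
  intro f g a b
  simp only [apply_coeff, map_mul, Pi.mul_apply, Matrix.mul_apply]

theorem coeff_mem (l : Fin n) (a b : Fin (d l)) : coeff φ l a b ∈ coeffSpan φ l :=
  Submodule.subset_span ⟨(a, b), rfl⟩

theorem counit_coeff (l : Fin n) (a b : Fin (d l)) :
    counit (R := k) (coeff φ l a b) = if a = b then 1 else 0 := by
  have h := apply_coeff φ 1 l a b
  rw [map_one] at h
  exact h

theorem counit_irrChar (l : Fin n) : counit (R := k) (irrChar φ l) = d l := by
  simp [irrChar, Matrix.trace, counit_coeff]

theorem coeffDual_coeff (l l' : Fin n) (a b : Fin (d l)) (a' b' : Fin (d l')) :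
    (coeffDual φ l a b).ofConv (coeff φ l' a' b') = blockUnit k l a b l' a' b' := by
  rw [apply_coeff, coeffDual, AlgEquiv.apply_symm_apply]

theorem eq_sum_coeff (x : H) :
    x = ∑ l, ∑ a, ∑ b, (coeffDual φ l a b).ofConv x • coeff φ l a b := by
  refine ext_functional (k := k) fun f => ?_
  have h1 : toConv f = ∑ l, ∑ a, ∑ b, φ (toConv f) l a b • coeffDual φ l a b := by
    apply φ.injective
    simp only [map_sum, map_smul, coeffDual, AlgEquiv.apply_symm_apply]
    exact piMatrix_eq_sum _
  have h2 := congr(($h1).ofConv x)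
  simp only [ofConv_sum, ofConv_smul, LinearMap.sum_apply, LinearMap.smul_apply] at h2
  rw [h2]
  simp only [map_sum, map_smul]
  refine Finset.sum_congr rfl fun l _ => Finset.sum_congr rfl fun a _ =>
    Finset.sum_congr rfl fun b _ => ?_
  rw [← apply_coeff, smul_eq_mul, smul_eq_mul, mul_comm, ofConv_toConv]

theorem coeffDual_lhit_rhit (l : Fin n) (a a' b b' : Fin (d l)) (x : H) :
    lhit (coeffDual φ l a a').ofConv (rhit (coeffDual φ l b' b).ofConv x) =
      (coeffDual φ l a b).ofConv x • coeff φ l a' b' := by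
  refine ext_functional (k := k) fun f => ?_
  rw [apply_lhit, toConv_ofConv, apply_rhit, toConv_ofConv, toConv_ofConv, coeffDual_mul_mul,
    ofConv_smul, LinearMap.smul_apply, map_smul, smul_eq_mul, smul_eq_mul, mul_comm,
    ← apply_coeff, ofConv_toConv]

theorem coeffSpan_le {C : Submodule k H} (hC : IsSubcoalgebra k H C) {x : H} (hx : x ∈ C)
    {l : Fin n} {a b : Fin (d l)} (h : (coeffDual φ l a b).ofConv x ≠ 0) : coeffSpan φ l ≤ C := by
  rw [coeffSpan, Submodule.span_le]
  rintro _ ⟨⟨a', b'⟩, rfl⟩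
  have h1 := lhit_mem hC (coeffDual φ l a a').ofConv
    (rhit_mem hC (coeffDual φ l b' b).ofConv hx)
  rw [coeffDual_lhit_rhit] at h1
  exact (C.smul_mem_iff h).1 h1

theorem coeffDual_eq_zero_of_mem {l l' : Fin n} (hl : l ≠ l') {x : H} (hx : x ∈ coeffSpan φ l')
    (a b : Fin (d l)) : (coeffDual φ l a b).ofConv x = 0 := by
  have : coeffSpan φ l' ≤ LinearMap.ker (coeffDual φ l a b).ofConv := by
    rw [coeffSpan, Submodule.span_le]
    rintro _ ⟨⟨a', b'⟩, rfl⟩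
    show (coeffDual φ l a b).ofConv (coeff φ l' a' b') = 0
    rw [coeffDual_coeff, blockUnit, Pi.single_eq_of_ne hl.symm]
    rfl
  exact this hx

theorem isSubcoalgebra_coeffSpan (l : Fin n) : IsSubcoalgebra k H (coeffSpan φ l) := by
  intro c hc
  have : coeffSpan φ l ≤ (LinearMap.range (TensorProduct.map (coeffSpan φ l).subtype
      (coeffSpan φ l).subtype)).comap (comul (R := k)) := by
    conv_lhs => rw [coeffSpan]
    rw [Submodule.span_le]
    rintro _ ⟨⟨a, b⟩, rfl⟩
    rw [SetLike.mem_coe, Submodule.mem_comap, isComatrix_coeff φ l a b]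
    exact Submodule.sum_mem _ fun c _ =>
      ⟨(⟨_, coeff_mem φ l a c⟩ : coeffSpan φ l) ⊗ₜ (⟨_, coeff_mem φ l c b⟩ : coeffSpan φ l),
        TensorProduct.map_tmul ..⟩
  exact this hc

theorem exists_coeffDual_ne_zero {x : H} (hx : x ≠ 0) :
    ∃ l a b, (coeffDual φ l a b).ofConv x ≠ 0 := by
  by_contra! h
  apply hx
  rw [eq_sum_coeff φ x]
  simp [h]

theorem exists_coeffSpan_le {C : Submodule k H} (hC : IsSubcoalgebra k H C) (h0 : C ≠ ⊥) :
    ∃ l, coeffSpan φ l ≤ C := by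
  obtain ⟨x, hx, hx0⟩ := C.ne_bot_iff.1 h0
  obtain ⟨l, a, b, h⟩ := exists_coeffDual_ne_zero φ hx0
  exact ⟨l, coeffSpan_le φ hC hx h⟩

theorem linearIndependent_coeff (l : Fin n) :
    LinearIndependent k fun i : Fin (d l) × Fin (d l) => coeff φ l i.1 i.2 := by
  rw [Fintype.linearIndependent_iff]
  rintro g hg ⟨a, b⟩
  have h := congr((coeffDual φ l a b).ofConv $hg)
  simpa [coeffDual_coeff, Matrix.single_apply, Fintype.sum_prod_type, ite_and] using h

theorem finrank_coeffSpan (l : Fin n) : Module.finrank k (coeffSpan φ l) = d l * d l := by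
  rw [coeffSpan, finrank_span_eq_card (linearIndependent_coeff φ l)]
  simp

theorem isComatrixTrace_irrChar (l : Fin n) : IsComatrixTrace k (coeffSpan φ l) (irrChar φ l) :=
  ⟨_, inferInstance, _, isComatrix_coeff φ l, rfl, le_rfl⟩

theorem isCocomm_irrChar (l : Fin n) : IsCocomm k H (irrChar φ l) := by
  rw [isCocomm_iff]
  intro f g
  rw [irrChar, Matrix.trace, map_sum, map_sum]
  simp only [Matrix.diag_apply, (isComatrix_coeff φ l).conv_apply]
  rw [Finset.sum_comm]
  simp only [mul_comm]

variable [∀ l, NeZero (d l)]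

theorem coeffSpan_ne_bot (l : Fin n) : coeffSpan φ l ≠ ⊥ := by
  intro h
  have h1 := coeff_mem φ l 0 0
  rw [h, Submodule.mem_bot] at h1
  have h2 := coeffDual_coeff φ l l 0 0 0 0
  simp [h1] at h2

theorem eq_of_coeffSpan_le {l l' : Fin n} (h : coeffSpan φ l ≤ coeffSpan φ l') : l = l' := by
  by_contra hl
  have h2 := coeffDual_coeff φ l l 0 0 0 0
  rw [coeffDual_eq_zero_of_mem φ hl (h (coeff_mem φ l 0 0))] at h2
  simp at h2

theorem isSimpleSubcoalgebra_coeffSpan (l : Fin n) :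
    IsSimpleSubcoalgebra k H (coeffSpan φ l) := by
  refine ⟨isSubcoalgebra_coeffSpan φ l, coeffSpan_ne_bot φ l, fun D hD hDs hD0 => ?_⟩
  obtain ⟨l', h⟩ := exists_coeffSpan_le φ hDs hD0
  obtain rfl := eq_of_coeffSpan_le φ (h.trans hD)
  exact le_antisymm hD h

theorem exists_eq_coeffSpan {D : Submodule k H} (hD : IsSimpleSubcoalgebra k H D) :
    ∃ l, D = coeffSpan φ l := by
  obtain ⟨l, h⟩ := exists_coeffSpan_le φ hD.1 hD.2.1
  exact ⟨l, (hD.2.2 _ h (isSubcoalgebra_coeffSpan φ l) (coeffSpan_ne_bot φ l)).symm⟩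

theorem eq_sum_irrChar {x : H} (hx : IsCocomm k H x) :
    x = ∑ l, (irrIdem φ l).ofConv x • irrChar φ l := by
  conv_lhs => rw [eq_sum_coeff φ x]
  refine Finset.sum_congr rfl fun l _ => ?_
  simp only [coeffDual_of_isCocomm φ hx, irrChar, Matrix.trace, Finset.smul_sum]
  refine Finset.sum_congr rfl fun a _ => ?_
  rw [Finset.sum_eq_single a]
  · simp
  · intro b _ hb
    simp [hb.symm]
  · simp

theorem counit_eq_sum {x : H} (hx : IsCocomm k H x) :
    counit (R := k) x = ∑ l, (irrIdem φ l).ofConv x * d l := by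
  conv_lhs => rw [eq_sum_irrChar φ hx]
  simp [counit_irrChar]

theorem IsCharacterOf.eq_irrChar [CharZero k] {x : H} {l : Fin n}
    (hx : IsCharacterOf k H x (coeffSpan φ l)) : x = irrChar φ l := by
  obtain ⟨hmem, hco, hε⟩ := hx
  have h1 : x = (irrIdem φ l).ofConv x • irrChar φ l := by
    conv_lhs => rw [eq_sum_irrChar φ hco]
    refine Finset.sum_eq_single l (fun l' _ hl' => ?_) (by simp)
    rw [irrIdem, coeffDual_eq_zero_of_mem φ hl' hmem, zero_smul]
  rw [finrank_coeffSpan, Nat.sqrt_eq] at hε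
  have h2 := congr(counit (R := k) $h1)
  rw [hε, map_smul, counit_irrChar, smul_eq_mul] at h2
  have hd : (d l : k) ≠ 0 := Nat.cast_ne_zero.2 (NeZero.ne _)
  rw [h1, (mul_eq_right₀ hd).1 h2.symm, one_smul]

theorem exists_irrIdem_mul_eq (l i j : Fin n) :
    ∃ t : ℕ, (irrIdem φ l).ofConv (irrChar φ i * irrChar φ j) = t :=
  ((isComatrixTrace_irrChar φ i).mul (isComatrixTrace_irrChar φ j)).exists_apply_eq
    (isIdempotentElem_irrIdem φ l)

end Coefficients

section Principal

variable {k : Type} [Field k] [CharZero k] {H : Type} [Ring H] [HopfAlgebra k H]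
  [FiniteDimensional k H]
  {n : ℕ} {d : Fin n → ℕ} [∀ l, NeZero (d l)]

theorem IsAssocCharacter.isComatrixTrace
    (φ : ConvDual k H ≃ₐ[k] ∀ l, Matrix (Fin (d l)) (Fin (d l)) k) {C : Submodule k H}
    (hC : IsSubcoalgebra k H C) {x : H}
    (hx : IsAssocCharacter k H x C) : IsComatrixTrace k C x := by
  classical
  obtain ⟨s, f, hs, hs', rfl⟩ := hx
  have h1 : ∀ D ∈ s, IsComatrixTrace k D (f D) := by
    intro D hD
    obtain ⟨hsimp, -, hf⟩ := hs D hD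
    obtain ⟨l, rfl⟩ := exists_eq_coeffSpan φ hsimp
    rw [IsCharacterOf.eq_irrChar φ hf]
    exact isComatrixTrace_irrChar φ l
  have h2 := IsComatrixTrace.sum s h1
  convert h2
  refine le_antisymm (fun x hx => ?_) (Finset.sup_le fun D hD => (hs D hD).2.1)
  rw [eq_sum_coeff φ x]
  refine Submodule.sum_mem _ fun l _ => Submodule.sum_mem _ fun a _ =>
    Submodule.sum_mem _ fun b _ => ?_
  by_cases h : (coeffDual φ l a b).ofConv x = 0
  · rw [h, zero_smul]
    exact Submodule.zero_mem _
  · refine Submodule.smul_mem _ _ (Finset.le_sup (f := fun D => D)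
      (hs' _ (isSimpleSubcoalgebra_coeffSpan φ l) (coeffSpan_le φ hC hx h)) (coeff_mem φ l a b))

/-- A cocommutative element with natural coefficients has no eigenvalue exceeding its counit. -/
theorem eq_zero_of_mul_eq_natCast_smul
    (φ : ConvDual k H ≃ₐ[k] ∀ l, Matrix (Fin (d l)) (Fin (d l)) k) {q y : H}
    (hq : IsCocomm k H q) (hy : IsCocomm k H y)
    (hnat : ∀ l, ∃ t : ℕ, (irrIdem φ l).ofConv q = t) {N ν : ℕ} (hN : counit (R := k) q = ν)
    (hlt : ν < N) (hqy : q * y = (N : k) • y) : y = 0 := by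
  choose Q hQ using hnat
  choose T hT using exists_irrIdem_mul_eq φ
  set z : Fin n → k := fun l => (irrIdem φ l).ofConv y with hz
  have hmul : ∀ l, (N : k) * z l = ∑ i, ∑ j, (Q i * T l i j : ℕ) * z j := by
    intro l
    have h1 := congr((irrIdem φ l).ofConv $hqy)
    rw [map_smul, smul_eq_mul] at h1
    rw [← h1]
    conv_lhs => rw [eq_sum_irrChar φ hq, eq_sum_irrChar φ hy]
    simp only [Finset.sum_mul_sum, map_sum, smul_mul_smul_comm, map_smul, smul_eq_mul, hT, hQ]
    refine Finset.sum_congr rfl fun i _ => Finset.sum_congr rfl fun j _ => ?_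
    push_cast
    ring
  have hdim : ∀ i j, ∑ l, T l i j * d l = d i * d j := by
    intro i j
    have h1 : IsCocomm k H (irrChar φ i * irrChar φ j) := mem_charRing_iff.1
      (mem_charRing_mul (mem_charRing_iff.2 (isCocomm_irrChar φ i))
        (mem_charRing_iff.2 (isCocomm_irrChar φ j)))
    have h2 := counit_eq_sum φ h1
    simp only [Bialgebra.counit_mul, counit_irrChar, hT] at h2
    exact_mod_cast h2.symm
  have hν : ∑ i, Q i * d i = ν := by
    have h1 := counit_eq_sum φ hq
    simp only [hN, hQ] at h1
    exact_mod_cast h1.symm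
  have hz0 : ∀ l, z l = 0 := by
    suffices h : ∀ (ψ : k →ₗ[ℚ] ℚ) (l), ψ (z l) = 0 from
      fun l => (Module.forall_dual_apply_eq_zero_iff ℚ (z l)).1 fun ψ => h ψ l
    intro ψ
    set w : Fin n → ℚ := fun l => |ψ (z l)| with hw
    have hψ : ∀ l, (N : ℚ) * w l ≤ ∑ i, ∑ j, ((Q i * T l i j : ℕ) : ℚ) * w j := by
      intro l
      have hcast : ∀ (a : ℕ) (b : k), ψ ((a : k) * b) = (a : ℚ) * ψ b := by
        intro a b
        rw [← nsmul_eq_mul, map_nsmul, nsmul_eq_mul]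
      have h1 := congr(|ψ $(hmul l)|)
      rw [hcast, abs_mul, Nat.abs_cast] at h1
      rw [hw]
      simp only [h1, map_sum, hcast]
      refine (Finset.abs_sum_le_sum_abs _ _).trans (Finset.sum_le_sum fun i _ => ?_)
      refine (Finset.abs_sum_le_sum_abs _ _).trans (Finset.sum_le_sum fun j _ => ?_)
      rw [abs_mul, Nat.abs_cast]
    have hsum : (N : ℚ) * ∑ l, d l * w l ≤ ν * ∑ l, d l * w l := by
      calc (N : ℚ) * ∑ l, d l * w l = ∑ l, d l * (N * w l) := by
            rw [Finset.mul_sum]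
            exact Finset.sum_congr rfl fun l _ => by ring
        _ ≤ ∑ l, d l * ∑ i, ∑ j, ((Q i * T l i j : ℕ) : ℚ) * w j :=
            Finset.sum_le_sum fun l _ => mul_le_mul_of_nonneg_left (hψ l) (Nat.cast_nonneg _)
        _ = ∑ i, ∑ j, ((Q i * ∑ l, T l i j * d l : ℕ) : ℚ) * w j := by
            simp only [Finset.mul_sum]
            rw [Finset.sum_comm]
            refine Finset.sum_congr rfl fun i _ => ?_
            rw [Finset.sum_comm]
            refine Finset.sum_congr rfl fun j _ => ?_
            push_cast
            rw [Finset.sum_mul]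
            exact Finset.sum_congr rfl fun l _ => by ring
        _ = ν * ∑ l, d l * w l := by
            simp only [hdim, ← hν]
            push_cast
            rw [Finset.sum_mul_sum]
            exact Finset.sum_congr rfl fun i _ => Finset.sum_congr rfl fun j _ => by ring
    have hnn : ∀ l ∈ Finset.univ, (0 : ℚ) ≤ d l * w l := fun l _ =>
      mul_nonneg (Nat.cast_nonneg _) (abs_nonneg _)
    have h0 : ∑ l, d l * w l = 0 := by
      have h1 : (ν : ℚ) < N := by exact_mod_cast hlt
      nlinarith [Finset.sum_nonneg hnn]
    intro l
    have h2 := (Finset.sum_eq_zero_iff_of_nonneg hnn).1 h0 l (Finset.mem_univ l)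
    have hd : (d l : ℚ) ≠ 0 := Nat.cast_ne_zero.2 (NeZero.ne _)
    exact abs_eq_zero.1 ((mul_eq_zero.1 h2).resolve_left hd)
  rw [eq_sum_irrChar φ hy]
  exact Finset.sum_eq_zero fun l _ => by rw [show (irrIdem φ l).ofConv y = 0 from hz0 l, zero_smul]

end Principal

section Main

variable {k : Type} [Field k] [CharZero k] [IsAlgClosed k] {H : Type} [Ring H]
  [HopfAlgebra k H] [FiniteDimensional k H] [IsSemisimpleRing H]

theorem eq_zero_of_mul_eq_counit_smul {C : Submodule k H} (hC : IsSubcoalgebra k H C) {x : H}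
    (hx : IsAssocCharacter k H x C) {A : Subalgebra k H} (hA : IsHopfSubalgebra k H A)
    (hAmin : ∀ B : Subalgebra k H, IsHopfSubalgebra k H B → C ≤ B.toSubmodule → A ≤ B)
    {Λ : H} (hΛ : IsIdempotentIntegral k H A Λ) {y : H} (hy : IsCocomm k H y)
    (hxy : x * y = counit (R := k) x • y) (hΛy : Λ * y = 0) : y = 0 := by
  have := isSemisimpleRing_convDual (k := k) (H := H)
  obtain ⟨n, d, hd, ⟨φ⟩⟩ :=
    IsSemisimpleRing.exists_algEquiv_pi_matrix_of_isAlgClosed k (ConvDual k H)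
  have hxt := IsAssocCharacter.isComatrixTrace φ hC hx
  have hAadj : A ≤ Algebra.adjoin k (C : Set H) :=
    hAmin _ (isHopfSubalgebra_of_isSubcoalgebra (isSubcoalgebra_adjoin hC)) Algebra.subset_adjoin
  have hxc : x ∈ charRing k H := by
    obtain ⟨s, f, hs, -, rfl⟩ := hx
    exact Submodule.sum_mem _ fun D hD => mem_charRing_iff.2 (hs D hD).2.2.2.1
  have hpow : ∀ j : ℕ, x ^ j ∈ charRing k H := by
    intro j
    induction j with
    | zero =>
      rw [pow_zero, mem_charRing_iff, MackeyPaper.IsCocomm, Bialgebra.comul_one,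
        Algebra.TensorProduct.one_def, TensorProduct.comm_tmul]
    | succ j ih => rw [pow_succ]; exact mem_charRing_mul ih hxc
  have hpowy : ∀ j : ℕ, x ^ j * y = counit (R := k) (x ^ j) • y := by
    intro j
    induction j with
    | zero => simp
    | succ j ih =>
      rw [pow_succ, mul_assoc, hxy, mul_smul_comm, ih, smul_smul, Bialgebra.counit_mul, mul_comm]
  have hidem := fun l => isIdempotentElem_irrIdem φ l
  choose a ha using fun l => exists_apply_integral_eq_natCast hA hΛ (hidem l)
  choose b hb using fun (j : ℕ) l => (hxt.pow j).exists_apply_eq (hidem l)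
  have hpos : ∀ l, ∃ j, a l ≠ 0 → b j l ≠ 0 := by
    intro l
    by_contra! h
    have hal := (h 0).1
    have hb0 : ∀ j, b j l = 0 := fun j => (h j).2
    have h0 : (irrIdem φ l).ofConv Λ = 0 := by
      refine apply_eq_zero_of_mem_adjoin (C := C) (fun j w hw => ?_) (hAadj hΛ.1)
      exact (hxt.pow j).apply_eq_zero (hidem l) (by rw [hb, hb0, Nat.cast_zero]) hw
    have h1 := ha l
    rw [h0, mul_zero] at h1
    exact hal (by exact_mod_cast h1.symm)
  choose J hJ using hpos
  obtain ⟨N, hN⟩ : ∃ N, ∀ l, J l < N :=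
    ⟨Finset.univ.sup J + 1, fun l => Nat.lt_succ_of_le (Finset.le_sup (Finset.mem_univ l))⟩
  set p : H := ∑ j ∈ Finset.range (N + 1), x ^ j with hp
  set B : Fin n → ℕ := fun l => ∑ j ∈ Finset.range (N + 1), b j l with hB
  set K : ℕ := ∑ l, a l with hK
  set r : ℕ := Module.finrank k A.toSubmodule with hr
  have hpB : ∀ l, (irrIdem φ l).ofConv p = B l := by
    intro l
    rw [hp, map_sum]
    simp [hb, hB]
  have haB : ∀ l, a l ≤ K * B l := by
    intro l
    by_cases h : a l = 0
    · simp [h]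
    · have h1 : b (J l) l ≤ B l := Finset.single_le_sum (f := fun j => b j l)
        (fun _ _ => Nat.zero_le _) (Finset.mem_range.2 ((hN l).trans (Nat.lt_succ_self N)))
      have h2 : a l ≤ K := Finset.single_le_sum (fun _ _ => Nat.zero_le _) (Finset.mem_univ l)
      exact h2.trans (Nat.le_mul_of_pos_right K (lt_of_lt_of_le (Nat.pos_of_ne_zero (hJ l h)) h1))
  have hpc : p ∈ charRing k H := Submodule.sum_mem _ fun j _ => hpow j
  have hΛc : Λ ∈ charRing k H := mem_charRing_iff.2 (isCocomm_integral hA hΛ)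
  set q : H := (K : k) • p - (r : k) • Λ with hq
  have hqc : IsCocomm k H q := mem_charRing_iff.1
    (Submodule.sub_mem _ (Submodule.smul_mem _ _ hpc) (Submodule.smul_mem _ _ hΛc))
  set t : ℕ := ∑ l, B l * d l with ht
  have hpt : counit (R := k) p = t := by
    rw [counit_eq_sum φ (mem_charRing_iff.1 hpc)]
    simp [hpB, ht]
  have hra : r = ∑ l, a l * d l := by
    have h1 := counit_eq_sum φ (mem_charRing_iff.1 hΛc)
    rw [hΛ.2.1] at h1
    have h2 := congr((r : k) * $h1)
    rw [mul_one, Finset.mul_sum] at h2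
    simp only [← mul_assoc, ha] at h2
    exact_mod_cast h2
  have hrt : r ≤ K * t := by
    rw [hra, ht, Finset.mul_sum]
    exact Finset.sum_le_sum fun l _ => by
      rw [← mul_assoc]
      exact Nat.mul_le_mul_right _ (haB l)
  have hr0 : r ≠ 0 := finrank_ne_zero_of_subalgebra A
  have hpy : p * y = (t : k) • y := by
    rw [← hpt, hp, Finset.sum_mul, map_sum, Finset.sum_smul]
    exact Finset.sum_congr rfl fun j _ => hpowy j
  refine eq_zero_of_mul_eq_natCast_smul φ hqc hy (fun l => ⟨K * B l - a l, ?_⟩)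
    (N := K * t) (ν := K * t - r) ?_ (by omega) ?_
  · rw [hq, map_sub, map_smul, map_smul, smul_eq_mul, smul_eq_mul, ha, hpB, Nat.cast_sub (haB l)]
    push_cast
    rfl
  · rw [hq, map_sub, map_smul, map_smul, smul_eq_mul, smul_eq_mul, hΛ.2.1, hpt, Nat.cast_sub hrt]
    push_cast
    ring
  · rw [hq, sub_mul, smul_mul_assoc, smul_mul_assoc, hpy, hΛy, smul_zero, sub_zero, smul_smul]
    push_cast
    rfl

theorem mul_eq_self_of_mul_eq_counit_smul {C : Submodule k H} (hC : IsSubcoalgebra k H C) {x : H}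
    (hx : IsAssocCharacter k H x C) {A : Subalgebra k H} (hA : IsHopfSubalgebra k H A)
    (hxA : x ∈ A)
    (hAmin : ∀ B : Subalgebra k H, IsHopfSubalgebra k H B → C ≤ B.toSubmodule → A ≤ B)
    {Λ : H} (hΛ : IsIdempotentIntegral k H A Λ) {y : H} (hy : y ∈ charRing k H)
    (hxy : x * y = counit (R := k) x • y) : Λ * y = y := by
  have hΛc : Λ ∈ charRing k H := mem_charRing_iff.2 (isCocomm_integral hA hΛ)
  refine (sub_eq_zero.1 (eq_zero_of_mul_eq_counit_smul hC hx hA hAmin hΛ (y := y - Λ * y)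
    (mem_charRing_iff.1 (Submodule.sub_mem _ hy (mem_charRing_mul hΛc hy))) ?_ ?_)).symm
  · rw [mul_sub, hxy, ← mul_assoc, (hΛ.2.2 x hxA).1, smul_mul_assoc, smul_sub]
  · rw [mul_sub, ← mul_assoc, (hΛ.2.2 Λ hΛ.1).1, hΛ.2.1, one_smul, sub_self]

end Main

end

end LarsonRadford

namespace MackeyPaper

noncomputable section

variable (k : Type) [Field k] [CharZero k] [IsAlgClosed k]
variable (H : Type) [Ring H] [HopfAlgebra k H]

section Statements

variable [FiniteDimensional k H] [IsSemisimpleRing H]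

/-- Theorem 16: let `C` be a subcoalgebra of `H` with associated
character `d ∈ C(H^*)` and let `⟨d⟩` be the Hopf subalgebra of `H` generated
by `C`, with idempotent integral `Λ`.  Then the principal eigenspace of the
left-multiplication operator `L_d` on `C(H^*)` (the eigenspace for the
Frobenius–Perron eigenvalue `ε(d)`) coincides with the principal eigenspace
of `L_Λ` (its Frobenius–Perron eigenvalue being `ε(Λ) = 1`), and the latter
equals `Λ·C(H^*)`. -/
theorem statement_4 (C : Submodule k H) (hC : IsSubcoalgebra k H C)
    (d : H) (hd : IsAssocCharacter k H d C)
    (A : Subalgebra k H) (hA : IsHopfSubalgebra k H A) (hCA : C ≤ A.toSubmodule)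
    (hAmin : ∀ B : Subalgebra k H, IsHopfSubalgebra k H B → C ≤ B.toSubmodule → A ≤ B)
    (Λ : H) (hΛ : IsIdempotentIntegral k H A Λ) :
    (∀ x ∈ charRing k H,
      (d * x = Coalgebra.counit (R := k) d • x ↔ Λ * x = x)) ∧
    (∀ x ∈ charRing k H,
      (Λ * x = x ↔ ∃ y ∈ charRing k H, x = Λ * y)) := by
  have hdA : d ∈ A := by
    obtain ⟨s, f, hs, -, rfl⟩ := hd
    exact A.sum_mem fun D hD => hCA ((hs D hD).2.1 (hs D hD).2.2.1)
  have hΛΛ : Λ * Λ = Λ := by rw [(hΛ.2.2 Λ hΛ.1).1, hΛ.2.1, one_smul]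
  refine ⟨fun x hx => ⟨fun h => ?_, fun h => ?_⟩, fun x hx => ⟨fun h => ⟨x, hx, h.symm⟩, ?_⟩⟩
  · exact LarsonRadford.mul_eq_self_of_mul_eq_counit_smul hC hd hA hdA hAmin hΛ hx h
  · rw [← h, ← mul_assoc, (hΛ.2.2 d hdA).1, smul_mul_assoc]
  · rintro ⟨y, -, rfl⟩
    rw [← mul_assoc, hΛΛ]

end Statements

end

end MackeyPaper
end
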